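/- arXiv:1003.2338 — 7 statements merged into one kernel-verified Lean document; each statement's English description precedes it below -/
import Mathlib

section
/- If Φ : Mₙ(ℂ) → M_d(ℂ) is a unital positive linear map and A is a positive semidefinite matrix, then for exponents 0 ≤ p ≤ q one has |Φ(A^p)Φ(A^q)| ≤ Φ(A^{p+q}), where |X| = (X*X)^{1/2} denotes the matrix absolute value. -/
open scoped Matrix ComplexOrder

/-- `A^p` for a matrix, via continuous functional calculus with the real power function. -/
noncomputable def mpow {n : ℕ} (A : Matrix (Fin n) (Fin n) ℂ) (p : ℝ) : Matrix (Fin n) (Fin n) ℂ :=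
  cfc (fun x : ℝ => x ^ p) A

/-- Matrix absolute value `|X| = (XᴴX)^{1/2}`. -/
noncomputable def matAbs {n : ℕ} (X : Matrix (Fin n) (Fin n) ℂ) : Matrix (Fin n) (Fin n) ℂ :=
  cfc Real.sqrt (Xᴴ * X)

/-- Loewner order: `X ≤ Y` iff `Y - X` is positive semidefinite. -/
def loewnerLE {n : ℕ} (X Y : Matrix (Fin n) (Fin n) ℂ) : Prop := (Y - X).PosSemidef

section FurutaGeneric
variable {𝒜 : Type*} [CStarAlgebra 𝒜] [PartialOrder 𝒜] [StarOrderedRing 𝒜]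

lemma ak_rpow_rpow (a : 𝒜) (x y : ℝ) (ha : IsStrictlyPositive a) :
    (a ^ x) ^ y = a ^ (x * y) := by
  by_cases hx : x = 0
  · subst hx
    rw [CFC.rpow_zero a ha.nonneg, CFC.one_rpow, zero_mul, CFC.rpow_zero a ha.nonneg]
  · exact CFC.rpow_rpow a x y hx ha

lemma ak_sa (a : 𝒜) (x : ℝ) : star (a ^ x) = a ^ x :=
  (IsSelfAdjoint.of_nonneg CFC.rpow_nonneg).star_eq

lemma ak_antitone {a b : 𝒜} (ha : IsStrictlyPositive a) (hab : a ≤ b) {u : ℝ}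
    (hu : 0 ≤ u) (hu1 : u ≤ 1) : b ^ (-u) ≤ a ^ (-u) := by
  have hb : IsStrictlyPositive b := ha.of_le hab
  have h := CFC.rpow_le_rpow (p := u) ⟨hu, hu1⟩ hab
  have h2 := CStarAlgebra.rpow_neg_one_le_rpow_neg_one h (IsStrictlyPositive.rpow a u ha)
  rw [ak_rpow_rpow _ _ _ ha, ak_rpow_rpow _ _ _ hb] at h2
  simpa using h2

/-- polar identity -/
lemma ak_polar (X : 𝒜) (hX : IsUnit X) (t : ℝ) :
    (X * star X) ^ t = X * (star X * X) ^ (t - 1) * star X := by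
  have hT : IsStrictlyPositive (star X * X) :=
    (hX.star.mul hX).isStrictlyPositive (star_mul_self_nonneg X)
  set T := star X * X with hTdef
  have hU1 : star (X * T ^ (-(1/2) : ℝ)) * (X * T ^ (-(1/2) : ℝ)) = 1 := by
    rw [star_mul, ak_sa]
    calc T ^ (-(1/2) : ℝ) * star X * (X * T ^ (-(1/2) : ℝ))
        = T ^ (-(1/2) : ℝ) * T ^ (1:ℝ) * T ^ (-(1/2) : ℝ) := by
          rw [CFC.rpow_one T hT.nonneg, hTdef]; simp only [mul_assoc]
      _ = 1 := by
          rw [← CFC.rpow_add hT.isUnit, ← CFC.rpow_add hT.isUnit]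
          norm_num
          exact CFC.rpow_zero T hT.nonneg
  have hUu : IsUnit (X * T ^ (-(1/2) : ℝ)) := hX.mul (IsStrictlyPositive.rpow T _ hT).isUnit
  have hU2 : (X * T ^ (-(1/2) : ℝ)) * star (X * T ^ (-(1/2) : ℝ)) = 1 := by
    obtain ⟨u, hu⟩ := hUu
    rw [← hu] at hU1 ⊢
    exact (Units.mul_eq_one_iff_eq_inv.mp hU1) ▸ u.mul_inv
  let U : unitary 𝒜 := ⟨X * T ^ (-(1/2) : ℝ), Unitary.mem_iff.mpr ⟨hU1, hU2⟩⟩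
  have hconj : ∀ Z : 𝒜, Unitary.conjStarAlgAut ℂ 𝒜 U Z
      = X * (T ^ (-(1/2) : ℝ) * Z * T ^ (-(1/2) : ℝ)) * star X := by
    intro Z
    rw [Unitary.conjStarAlgAut_apply]
    simp only [U, star_mul, ak_sa, mul_assoc]
  have h1 : Unitary.conjStarAlgAut ℂ 𝒜 U T = X * star X := by
    rw [hconj]
    nth_rw 2 [← CFC.rpow_one T hT.nonneg]
    rw [← CFC.rpow_add hT.isUnit, ← CFC.rpow_add hT.isUnit]
    norm_num
    rw [CFC.rpow_zero T hT.nonneg, mul_one]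
  have h2 : Unitary.conjStarAlgAut ℂ 𝒜 U (T ^ t) = X * T ^ (t - 1) * star X := by
    rw [hconj, ← CFC.rpow_add hT.isUnit, ← CFC.rpow_add hT.isUnit]
    congr 3
    ring
  rw [← h2, ← h1]
  have hcont : Continuous (Unitary.conjStarAlgAut ℂ 𝒜 U) := by
    have : (Unitary.conjStarAlgAut ℂ 𝒜 U : 𝒜 → 𝒜) = fun Z => (U : 𝒜) * Z * star (U : 𝒜) := by
      ext Z; rw [Unitary.conjStarAlgAut_apply]
    rw [this]; fun_prop
  have h0 : 0 ≤ Unitary.conjStarAlgAut ℂ 𝒜 U T := by rw [h1]; exact mul_star_self_nonneg X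
  rw [CFC.rpow_eq_cfc_real h0, CFC.rpow_eq_cfc_real hT.nonneg]
  have hc : ContinuousOn (fun x : ℝ => x ^ t) (spectrum ℝ T) := by
    intro x hx
    exact (Real.continuousAt_rpow_const x t (Or.inl (hT.spectrum_pos hx).ne')).continuousWithinAt
  exact (StarAlgHomClass.map_cfc (S := ℂ) (Unitary.conjStarAlgAut ℂ 𝒜 U) (fun x : ℝ => x ^ t) T hc
    hcont hT.isSelfAdjoint (IsSelfAdjoint.of_nonneg h0)).symm

lemma ak_conj_pos {Y Z : 𝒜} (hY : IsStrictlyPositive Y) (hZ : IsStrictlyPositive Z) (r : ℝ) :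
    IsStrictlyPositive (Y ^ r * Z * Y ^ r) :=
  IsStrictlyPositive.conjugate_of_isUnit_of_isSelfAdjoint _ _ (IsStrictlyPositive.rpow Y r hY).isUnit
    (ak_sa Y r) hZ

lemma ak_conj_mono {a b : 𝒜} (h : a ≤ b) (Y : 𝒜) (r : ℝ) :
    Y ^ r * a * Y ^ r ≤ Y ^ r * b * Y ^ r :=
  conjugate_le_conjugate_of_nonneg h CFC.rpow_nonneg

lemma ak_add3 {Y : 𝒜} (hY : IsStrictlyPositive Y) (a b c : ℝ) :
    Y ^ a * Y ^ b * Y ^ c = Y ^ (a + b + c) := by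
  rw [CFC.rpow_add hY.isUnit, CFC.rpow_add hY.isUnit]

lemma ak_furuta_base {S Y : 𝒜} (hS : IsStrictlyPositive S) (hSY : S ≤ Y) {s r : ℝ}
    (hs : 1 ≤ s) (hr : 0 ≤ r) (hr1 : r ≤ 1/2) :
    (Y ^ r * S ^ s * Y ^ r) ^ ((1 + 2 * r) / (s + 2 * r)) ≤ Y ^ (1 + 2 * r) := by
  have hY : IsStrictlyPositive Y := hS.of_le hSY
  set t := (1 + 2 * r) / (s + 2 * r) with ht
  have hpos : 0 < s + 2 * r := by linarith
  have ht0 : 0 ≤ t := by positivity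
  have ht1 : t ≤ 1 := by rw [ht, div_le_one hpos]; linarith
  have hts : (s + 2 * r) * t = 1 + 2 * r := by rw [ht]; field_simp
  have hX : IsUnit (Y ^ r * S ^ (s/2)) :=
    (IsStrictlyPositive.rpow Y _ hY).isUnit.mul (IsStrictlyPositive.rpow S _ hS).isUnit
  have hXX : Y ^ r * S ^ s * Y ^ r = (Y ^ r * S ^ (s/2)) * star (Y ^ r * S ^ (s/2)) := by
    rw [star_mul, ak_sa, ak_sa]
    have : S ^ s = S ^ (s/2) * S ^ (s/2) := by rw [← CFC.rpow_add hS.isUnit]; congr 1; ring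
    rw [this]; simp only [mul_assoc]
  rw [hXX, ak_polar _ hX]
  have hT : star (Y ^ r * S ^ (s/2)) * (Y ^ r * S ^ (s/2)) = S ^ (s/2) * Y ^ (2*r) * S ^ (s/2) := by
    rw [star_mul, ak_sa, ak_sa]
    have : Y ^ (2*r) = Y ^ r * Y ^ r := by rw [← CFC.rpow_add hY.isUnit]; congr 1; ring
    rw [this]; simp only [mul_assoc]
  have h1 : S ^ (s + 2*r) ≤ S ^ (s/2) * Y ^ (2*r) * S ^ (s/2) := by
    have := ak_conj_mono (CFC.rpow_le_rpow (p := 2*r) ⟨by linarith, by linarith⟩ hSY) S (s/2)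
    rw [ak_add3 hS] at this
    convert this using 2
    ring
  have h2 : (S ^ (s/2) * Y ^ (2*r) * S ^ (s/2)) ^ (t - 1) ≤ S ^ (1 - s) := by
    have := ak_antitone (IsStrictlyPositive.rpow S _ hS) h1 (u := 1 - t) (by linarith) (by linarith)
    rw [ak_rpow_rpow _ _ _ hS] at this
    convert this using 2
    · ring
    · linarith
  rw [hT, star_mul, ak_sa, ak_sa]
  calc Y ^ r * S ^ (s / 2) * (S ^ (s / 2) * Y ^ (2 * r) * S ^ (s / 2)) ^ (t - 1)
        * (S ^ (s / 2) * Y ^ r)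
      = Y ^ r * (S ^ (s / 2) * (S ^ (s / 2) * Y ^ (2 * r) * S ^ (s / 2)) ^ (t - 1)
        * S ^ (s / 2)) * Y ^ r := by simp only [mul_assoc]
    _ ≤ Y ^ r * (S ^ (s / 2) * S ^ (1 - s) * S ^ (s / 2)) * Y ^ r :=
        ak_conj_mono (ak_conj_mono h2 S _) Y r
    _ = Y ^ r * S * Y ^ r := by
        rw [ak_add3 hS]
        have : s / 2 + (1 - s) + s / 2 = 1 := by ring
        rw [this, CFC.rpow_one S hS.nonneg]
    _ ≤ Y ^ r * Y * Y ^ r := ak_conj_mono hSY Y r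
    _ = Y ^ (1 + 2 * r) := by
        nth_rw 2 [← CFC.rpow_one Y hY.nonneg]
        rw [ak_add3 hY]; congr 1; ring

lemma ak_furuta (k : ℕ) : ∀ {S Y : 𝒜} (_ : IsStrictlyPositive S) (_ : S ≤ Y) {s r : ℝ}
    (_ : 1 ≤ s) (_ : 0 ≤ r) (_ : r ≤ (k + 1) / 2),
    (Y ^ r * S ^ s * Y ^ r) ^ ((1 + 2 * r) / (s + 2 * r)) ≤ Y ^ (1 + 2 * r) := by
  induction k with
  | zero =>
    intro S Y hS hSY s r hs hr hr1
    exact ak_furuta_base hS hSY hs hr (by simpa using hr1)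
  | succ k ih =>
    intro S Y hS hSY s r hs hr hr1
    by_cases hr2 : r ≤ 1/2
    · exact ak_furuta_base hS hSY hs hr hr2
    push Not at hr2
    have hY : IsStrictlyPositive Y := hS.of_le hSY
    have hSs : IsStrictlyPositive (S ^ s) := IsStrictlyPositive.rpow S _ hS
    have h1 := ak_furuta_base hS hSY hs (r := 1/2) (by norm_num) le_rfl
    have hpos := ak_conj_pos hY hSs (1/2)
    push_cast at hr1
    have h2 := ih (IsStrictlyPositive.rpow _ _ hpos) h1 (s := (s+1)/2) (r := (r - 1/2)/2)
      (by linarith) (by linarith) (by linarith)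
    rw [ak_rpow_rpow _ _ _ hpos, ak_rpow_rpow _ _ _ hY, ak_rpow_rpow _ _ _ hY] at h2
    have e1 : (1 + 2 * (1/2 : ℝ)) / (s + 2 * (1/2)) * ((s+1)/2) = 1 := by
      have : s + 1 ≠ 0 := by linarith
      field_simp
      norm_num
    have e2 : (1 + 2 * (1/2 : ℝ)) * ((r - 1/2)/2) = r - 1/2 := by ring
    have e3 : (1 + 2 * (1/2 : ℝ)) * (1 + 2 * ((r - 1/2)/2)) = 1 + 2 * r := by ring
    have e4 : (1 + 2 * ((r - 1/2)/2)) / ((s+1)/2 + 2 * ((r - 1/2)/2)) =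
        (1 + 2 * r) / (s + 2 * r) := by
      rw [div_eq_div_iff (by linarith) (by linarith)]; ring
    rw [e1, e2, e3, e4, CFC.rpow_one _ hpos.nonneg] at h2
    have e5 : Y ^ (r - 1/2) * (Y ^ (1/2 : ℝ) * S ^ s * Y ^ (1/2 : ℝ)) * Y ^ (r - 1/2)
        = Y ^ r * S ^ s * Y ^ r := by
      have a1 : Y ^ r = Y ^ (r - 1/2) * Y ^ (1/2 : ℝ) := by
        rw [← CFC.rpow_add hY.isUnit]; congr 1; ring
      have a2 : Y ^ r = Y ^ (1/2 : ℝ) * Y ^ (r - 1/2) := by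
        rw [← CFC.rpow_add hY.isUnit]; congr 1; ring
      calc _ = (Y ^ (r - 1/2) * Y ^ (1/2 : ℝ)) * S ^ s * (Y ^ (1/2 : ℝ) * Y ^ (r - 1/2)) := by
            simp only [mul_assoc]
        _ = _ := by rw [← a1, ← a2]
    rwa [e5] at h2

/-- the consequence we need -/
lemma ak_main {B P : 𝒜} (hB : IsStrictlyPositive B) (hP : IsStrictlyPositive P) {α : ℝ}
    (hα : 0 < α) (hPB : P ≤ B ^ α) : (B * (P * P) * B) ^ (1/2 : ℝ) ≤ B ^ (1 + α) := by
  obtain ⟨k, hk⟩ := exists_nat_gt (2 * (1/α))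
  have hαi : 0 < 1 / α := by positivity
  have h := ak_furuta k hP hPB (s := 2) (r := 1/α) (by norm_num) hαi.le (by linarith)
  have e1 : α * (1/α) = 1 := by field_simp
  rw [ak_rpow_rpow _ _ _ hB, ak_rpow_rpow _ _ _ hB, e1, CFC.rpow_one B hB.nonneg] at h
  have e2 : P ^ (2:ℝ) = P * P := by
    rw [show (2:ℝ) = 1 + 1 by norm_num, CFC.rpow_add hP.isUnit, CFC.rpow_one P hP.nonneg]
  rw [e2] at h
  have hpos : IsStrictlyPositive (B * (P * P) * B) := by
    have := ak_conj_pos hB (e2 ▸ IsStrictlyPositive.rpow P 2 hP) 1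
    rwa [CFC.rpow_one B hB.nonneg] at this
  set r := 1 / α
  have h3 := CFC.rpow_le_rpow (p := (2 + 2 * r) / (2 * (1 + 2 * r)))
    ⟨by positivity, by rw [div_le_one (by positivity)]; linarith⟩ h
  rw [ak_rpow_rpow _ _ _ hpos, ak_rpow_rpow _ _ _ hB] at h3
  convert h3 using 2
  · field_simp
  · have : α * (1 + 2 * r) * ((2 + 2 * r) / (2 * (1 + 2 * r))) = α + α * r := by field_simp; 
    rw [this, e1]; ring

end FurutaGeneric

section POVMGeneric
variable {𝒜 : Type*} [CStarAlgebra 𝒜] [PartialOrder 𝒜] [StarOrderedRing 𝒜]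
variable {ι : Type*} [Fintype ι]

lemma ak_sum_mono {G : ι → 𝒜} (hG : ∀ i, 0 ≤ G i) {f g : ι → ℝ} (h : ∀ i, f i ≤ g i) :
    ∑ i, f i • G i ≤ ∑ i, g i • G i :=
  Finset.sum_le_sum fun i _ => smul_le_smul_of_nonneg_right (h i) (hG i)

lemma ak_sum_pos {G : ι → 𝒜} (hG : ∀ i, 0 ≤ G i) (hG1 : ∑ i, G i = 1) {h : ι → ℝ}
    (hh : ∀ i, 0 < h i) : IsStrictlyPositive (∑ i, h i • G i) := by
  obtain ⟨c, hc, hci⟩ : ∃ c : ℝ, 0 < c ∧ ∀ i, c ≤ h i := by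
    rcases isEmpty_or_nonempty ι with he | he
    · exact ⟨1, one_pos, fun i => he.elim i⟩
    · obtain ⟨i, hi⟩ := Finite.exists_min h
      exact ⟨h i, hh i, hi⟩
  have h1 : (c • (1 : 𝒜)) ≤ ∑ i, h i • G i := by
    rw [← hG1, Finset.smul_sum]
    exact ak_sum_mono hG hci
  exact (IsStrictlyPositive.smul hc isStrictlyPositive_one).of_le h1

lemma ak_block {G : ι → 𝒜} (hG : ∀ i, 0 ≤ G i) (hG1 : ∑ i, G i = 1) {g h : ι → ℝ}
    (hh : ∀ i, 0 < h i) :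
    (∑ i, g i • G i) * (∑ i, h i • G i) ^ (-1 : ℝ) * (∑ i, g i • G i)
      ≤ ∑ i, (g i ^ 2 / h i) • G i := by
  have hH := ak_sum_pos hG hG1 hh
  set H := ∑ i, h i • G i with hHd
  set g' := ∑ i, g i • G i with hgd
  have hg' : star g' = g' := by
    rw [hgd, star_sum]
    refine Finset.sum_congr rfl fun i _ => ?_
    rw [star_smul, (IsSelfAdjoint.of_nonneg (hG i)).star_eq]; simp
  set K := H ^ (-1 : ℝ) * g' with hK
  have hKs : star K = g' * H ^ (-1 : ℝ) := by rw [hK, star_mul, hg', ak_sa]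
  have hnn : 0 ≤ ∑ i, h i • (star ((g i / h i) • (1 : 𝒜) - K) * G i * ((g i / h i) • (1 : 𝒜) - K)) :=
    Finset.sum_nonneg fun i _ => smul_nonneg (hh i).le (star_left_conjugate_nonneg (hG i) _)
  have hexp : ∀ i, h i • (star ((g i / h i) • (1 : 𝒜) - K) * G i * ((g i / h i) • (1 : 𝒜) - K))
      = (g i ^ 2 / h i) • G i - star K * (g i • G i) - (g i • G i) * K + star K * (h i • G i) * K := by
    intro i
    have hne := (hh i).ne'
    rw [star_sub, star_smul, star_one, star_trivial]
    simp only [sub_mul, mul_sub, smul_mul_assoc, mul_smul_comm, one_mul, mul_one, smul_sub, smul_smul]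
    have e1 : h i * (g i / h i * (g i / h i)) = g i ^ 2 / h i := by field_simp
    have e2 : h i * (g i / h i) = g i := by field_simp
    rw [e1, e2]
    abel
  have hH1 : H * H ^ (-1 : ℝ) = 1 := by
    have := CFC.rpow_mul_rpow_neg 1 hH
    rwa [CFC.rpow_one H hH.nonneg] at this
  have hHK : H * K = g' := by rw [hK, ← mul_assoc, hH1, one_mul]
  simp only [hexp] at hnn
  rw [Finset.sum_add_distrib, Finset.sum_sub_distrib, Finset.sum_sub_distrib, ← Finset.sum_mul,
    ← Finset.sum_mul, ← Finset.mul_sum, ← Finset.mul_sum, ← hHd, ← hgd, mul_assoc (star K), hHK,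
    sub_add_eq_add_sub, sub_add_cancel, hK, ← mul_assoc] at hnn
  exact sub_nonneg.mp hnn

open MeasureTheory Set in
lemma ak_sum_integral (G : ι → 𝒜) {x : ι → ℝ} (hx : ∀ i, 0 ≤ x i) {p : ℝ} (hp : p ∈ Ioo (0:ℝ) 1) :
    IntegrableOn (fun t => ∑ i, Real.rpowIntegrand₀₁ p t (x i) • G i) (Ioi 0) ∧
    ∑ i, (x i ^ p) • G i = (∫ t in Ioi 0, Real.rpowIntegrand₀₁ p t 1)⁻¹ •
      ∫ t in Ioi 0, ∑ i, Real.rpowIntegrand₀₁ p t (x i) • G i := by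
  have hi : ∀ i, IntegrableOn (fun t => Real.rpowIntegrand₀₁ p t (x i) • G i) (Ioi 0) :=
    fun i => (Real.integrableOn_rpowIntegrand₀₁_Ioi hp (hx i)).smul_const _
  refine ⟨integrable_finsetSum _ fun i _ => hi i, ?_⟩
  rw [integral_finsetSum _ fun i _ => hi i, Finset.smul_sum]
  refine Finset.sum_congr rfl fun i _ => ?_
  rw [integral_smul_const, smul_smul, ← Real.rpow_eq_const_mul_integral hp (hx i)]

end POVMGeneric

section AKMatrix
open scoped MatrixOrder Matrix.Norms.L2Operator

lemma ak_spec {n : ℕ} (A : Matrix (Fin n) (Fin n) ℂ) (hA : A.IsHermitian) :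
    ∃ E : Fin n → Matrix (Fin n) (Fin n) ℂ, (∀ i, 0 ≤ E i) ∧
      ∀ f : ℝ → ℝ, cfc f A = ∑ i, f (hA.eigenvalues i) • E i := by
  refine ⟨fun i => (hA.eigenvectorUnitary : Matrix (Fin n) (Fin n) ℂ) *
    Matrix.diagonal (Pi.single i 1) * star (hA.eigenvectorUnitary : Matrix (Fin n) (Fin n) ℂ), ?_, ?_⟩
  · intro i
    refine star_right_conjugate_nonneg ?_ _
    rw [Matrix.nonneg_iff_posSemidef, Matrix.posSemidef_diagonal_iff]
    intro j
    by_cases h : j = i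
    · subst h; simp
    · simp [h]
  · intro f
    rw [hA.cfc_eq, Matrix.IsHermitian.cfc, Unitary.conjStarAlgAut_apply]
    have hs : ∀ (c : ℝ) (U D V : Matrix (Fin n) (Fin n) ℂ), c • (U * D * V) = U * (c • D) * V := by
      intro c U D V
      rw [mul_smul_comm, smul_mul_assoc]
    simp only [hs]
    rw [← Finset.sum_mul, ← Finset.mul_sum]
    congr 2
    ext j k
    rw [Matrix.sum_apply]
    by_cases h : j = k
    · subst h
      simp [Matrix.diagonal_apply, Pi.single_apply]
    · simp [Matrix.diagonal_apply, h]

variable {d : ℕ} {ι : Type*} [Fintype ι]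

open MeasureTheory Set in
lemma ak_jensen {G : ι → Matrix (Fin d) (Fin d) ℂ} (hG : ∀ i, 0 ≤ G i) (hG1 : ∑ i, G i = 1)
    {x : ι → ℝ} (hx : ∀ i, 0 < x i) {p : ℝ} (hp0 : 0 ≤ p) (hp1 : p ≤ 1) :
    ∑ i, (x i ^ p) • G i ≤ (∑ i, x i • G i) ^ p := by
  have hB := ak_sum_pos hG hG1 hx
  rcases hp0.eq_or_lt with rfl | hp0
  · simp [hG1, CFC.rpow_zero _ hB.nonneg]
  rcases hp1.eq_or_lt with rfl | hp1
  · simp [CFC.rpow_one _ hB.nonneg]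
  have hp : p ∈ Ioo (0:ℝ) 1 := ⟨hp0, hp1⟩
  set B := ∑ i, x i • G i with hBd
  have hBh : B.IsHermitian := hB.isSelfAdjoint
  obtain ⟨F, hF, hFf⟩ := ak_spec B hBh
  have hmu : ∀ j, 0 < hBh.eigenvalues j := (Matrix.IsStrictlyPositive.posDef hB).eigenvalues_pos
  have hF1 : ∑ j, F j = 1 := by
    have := hFf (fun _ => 1)
    rw [cfc_const_one ℝ B hB.isSelfAdjoint] at this
    simpa using this.symm
  rw [CFC.rpow_eq_cfc_real hB.nonneg, hFf]
  obtain ⟨hi1, he1⟩ := ak_sum_integral G (fun i => (hx i).le) hp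
  obtain ⟨hi2, he2⟩ := ak_sum_integral F (fun j => (hmu j).le) hp
  rw [he1, he2]
  refine smul_le_smul_of_nonneg_left ?_ (inv_nonneg.mpr (Real.integral_rpowIntegrand₀₁_one_pos hp).le)
  refine setIntegral_mono_on hi1 hi2 measurableSet_Ioi fun t ht => ?_
  have ht : 0 < t := ht
  simp only [Real.rpowIntegrand₀₁, ← smul_smul, ← Finset.smul_sum]
  refine smul_le_smul_of_nonneg_left ?_ (Real.rpow_nonneg ht.le _)
  simp only [sub_smul, Finset.sum_sub_distrib, ← Finset.smul_sum, hG1, hF1]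
  refine sub_le_sub_left ?_ _
  have hb := ak_block hG hG1 (g := fun _ => 1) (h := fun i => t + x i) (fun i => by linarith [hx i])
  have e : ∑ i, (t + x i) • G i = cfc (fun y : ℝ => t + y) B := by
    rw [cfc_const_add t (fun y => y) B (by fun_prop) hB.isSelfAdjoint, cfc_id' ℝ B hB.isSelfAdjoint]
    simp only [add_smul, Finset.sum_add_distrib, ← Finset.smul_sum, hG1, ← hBd,
      Algebra.algebraMap_eq_smul_one]
  rw [e, CFC.cfc_rpow (fun y hy => by linarith [hB.spectrum_pos hy]) (by fun_prop) hB.isSelfAdjoint, hFf] at hb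
  simpa [hG1, Real.rpow_neg_one] using hb

lemma ak_convex {G : ι → Matrix (Fin d) (Fin d) ℂ} (hG : ∀ i, 0 ≤ G i) (hG1 : ∑ i, G i = 1)
    {x : ι → ℝ} (hx : ∀ i, 0 < x i) {α : ℝ} (h0 : 0 ≤ α) (h1 : α ≤ 1) :
    (∑ i, x i • G i) ^ (1 + α) ≤ ∑ i, (x i ^ (1 + α)) • G i := by
  have hB := ak_sum_pos hG hG1 hx
  have hh : ∀ i, 0 < x i ^ (1 - α) := fun i => Real.rpow_pos_of_pos (hx i) _
  have hb := ak_block hG hG1 (g := x) hh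
  have hH := ak_sum_pos hG hG1 hh
  have hj := ak_jensen hG hG1 hx (p := 1 - α) (by linarith) (by linarith)
  have hn := CStarAlgebra.rpow_neg_one_le_rpow_neg_one hj hH
  set B := ∑ i, x i • G i with hBd
  rw [ak_rpow_rpow _ _ _ hB] at hn
  have hc := conjugate_le_conjugate_of_nonneg hn hB.nonneg
  have e1 : B ^ (1 + α) = B * B ^ ((1 - α) * -1) * B := by
    have := ak_add3 hB 1 ((1 - α) * -1) 1
    rw [CFC.rpow_one B hB.nonneg] at this
    rw [this]; congr 1; ring
  have e2 : ∀ i, x i ^ (1 + α) = x i ^ 2 / x i ^ (1 - α) := by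
    intro i
    rw [← Real.rpow_natCast, ← Real.rpow_sub (hx i)]; congr 1; push_cast; ring
  simp only [e1, e2]
  exact hc.trans hb

lemma ak_pos {G : ι → Matrix (Fin d) (Fin d) ℂ} (hG : ∀ i, 0 ≤ G i) (hG1 : ∑ i, G i = 1)
    {x : ι → ℝ} (hx : ∀ i, 0 < x i) {p q : ℝ} (hp : 0 < p) (hpq : p ≤ q) :
    matAbs ((∑ i, (x i ^ p) • G i) * (∑ i, (x i ^ q) • G i)) ≤ ∑ i, (x i ^ (p + q)) • G i := by
  have hq : 0 < q := by linarith
  have hy : ∀ i, 0 < x i ^ q := fun i => Real.rpow_pos_of_pos (hx i) _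
  have hB := ak_sum_pos hG hG1 hy
  have hP := ak_sum_pos hG hG1 (h := fun i => x i ^ p) fun i => Real.rpow_pos_of_pos (hx i) _
  have hα0 : 0 < p / q := by positivity
  have hα1 : p / q ≤ 1 := by rwa [div_le_one hq]
  have hj := ak_jensen hG hG1 hy hα0.le hα1
  have hc := ak_convex hG hG1 hy hα0.le hα1
  have e1 : ∀ i, (x i ^ q) ^ (p / q) = x i ^ p := by
    intro i; rw [← Real.rpow_mul (hx i).le]; congr 1; field_simp
  have e2 : ∀ i, (x i ^ q) ^ (1 + p / q) = x i ^ (p + q) := by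
    intro i; rw [← Real.rpow_mul (hx i).le]; congr 1; field_simp; ring
  simp only [e1] at hj
  simp only [e2] at hc
  have hm := (ak_main hB hP hα0 hj).trans hc
  set B := ∑ i, (x i ^ q) • G i
  set P := ∑ i, (x i ^ p) • G i
  have e3 : (P * B)ᴴ * (P * B) = B * (P * P) * B := by
    rw [← Matrix.star_eq_conjTranspose, star_mul, hB.isSelfAdjoint.star_eq,
      hP.isSelfAdjoint.star_eq]
    simp only [mul_assoc]
  have h0 : 0 ≤ B * (P * P) * B := by
    rw [← e3, ← Matrix.star_eq_conjTranspose]; exact star_mul_self_nonneg _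
  rw [matAbs, e3]
  rw [CFC.rpow_eq_cfc_real h0] at hm
  simpa only [← Real.sqrt_eq_rpow] using hm

lemma ak_nonneg {G : ι → Matrix (Fin d) (Fin d) ℂ} (hG : ∀ i, 0 ≤ G i) (hG1 : ∑ i, G i = 1)
    {x : ι → ℝ} (hx : ∀ i, 0 ≤ x i) {p q : ℝ} (hp : 0 < p) (hpq : p ≤ q) :
    matAbs ((∑ i, (x i ^ p) • G i) * (∑ i, (x i ^ q) • G i)) ≤ ∑ i, (x i ^ (p + q)) • G i := by
  have hcont : ∀ s : ℝ, 0 ≤ s → Continuous fun ε : ℝ => ∑ i, ((x i + ε) ^ s) • G i := by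
    intro s hs
    refine continuous_finsetSum _ fun i _ => ?_
    have h : Continuous fun ε : ℝ => (x i + ε) ^ s :=
      (continuous_const.add continuous_id).rpow_const fun _ => Or.inr hs
    exact h.smul continuous_const
  have hq : 0 < q := by linarith
  have hL : Continuous fun ε : ℝ =>
      matAbs ((∑ i, ((x i + ε) ^ p) • G i) * (∑ i, ((x i + ε) ^ q) • G i)) := by
    unfold matAbs
    have hc := (hcont p hp.le).mul (hcont q hq.le)
    refine Continuous.cfc_of_mem_nhdsSet (s := Set.univ) Real.sqrt Filter.univ_mem ?_ ?_ ?_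
    · exact hc.star.mul hc
    · intro ε
      exact IsSelfAdjoint.star_mul_self _
    · exact Real.continuous_sqrt.continuousOn
  have hR := hcont (p + q) (by linarith)
  have h1 := (hL.tendsto 0).mono_left (nhdsWithin_le_nhds (s := Set.Ioi 0))
  have h2 := (hR.tendsto 0).mono_left (nhdsWithin_le_nhds (s := Set.Ioi 0))
  have := le_of_tendsto_of_tendsto h1 h2 (by
    filter_upwards [self_mem_nhdsWithin] with ε hε
    have hε : 0 < ε := hε
    exact ak_pos hG hG1 (fun i => by linarith [hx i]) hp hpq)
  simpa using this

end AKMatrix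

open scoped MatrixOrder Matrix.Norms.L2Operator in
lemma ak_final {n d : ℕ}
    (Φ : Matrix (Fin n) (Fin n) ℂ →ₗ[ℂ] Matrix (Fin d) (Fin d) ℂ)
    (hΦ1 : Φ 1 = 1) (hΦpos : ∀ X : Matrix (Fin n) (Fin n) ℂ, X.PosSemidef → (Φ X).PosSemidef)
    (A : Matrix (Fin n) (Fin n) ℂ) (hA : A.PosSemidef)
    (p q : ℝ) (hp : 0 ≤ p) (hpq : p ≤ q) :
    matAbs (Φ (mpow A p) * Φ (mpow A q)) ≤ Φ (mpow A (p + q)) := by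
  obtain ⟨E, hE, hEf⟩ := ak_spec A hA.1
  have hG : ∀ i, 0 ≤ Φ (E i) := fun i => Matrix.nonneg_iff_posSemidef.mpr (hΦpos _ (Matrix.nonneg_iff_posSemidef.mp (hE i)))
  have hm : ∀ s : ℝ, Φ (mpow A s) = ∑ i, ((hA.1.eigenvalues i) ^ s) • Φ (E i) := by
    intro s
    rw [mpow, hEf, map_sum]
    refine Finset.sum_congr rfl fun i _ => ?_
    exact LinearMap.map_smul_of_tower Φ _ _
  have hm0 : mpow A 0 = 1 := by
    rw [mpow]
    simp only [Real.rpow_zero]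
    exact cfc_const_one ℝ A (show IsSelfAdjoint A from hA.1)
  have hG1 : ∑ i, Φ (E i) = 1 := by
    have := hm 0
    rw [hm0, hΦ1] at this
    simpa using this.symm
  rcases hp.eq_or_lt with rfl | hp
  · rw [hm0, hΦ1, one_mul, zero_add]
    have h0 : 0 ≤ Φ (mpow A q) := by
      rw [hm]
      exact Finset.sum_nonneg fun i _ =>
        smul_nonneg (Real.rpow_nonneg (hA.eigenvalues_nonneg i) _) (hG i)
    refine le_of_eq ?_
    rw [matAbs, ← Matrix.star_eq_conjTranspose, (IsSelfAdjoint.of_nonneg h0).star_eq]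
    have hk : 0 ≤ Φ (mpow A q) * Φ (mpow A q) := by
      have := star_mul_self_nonneg (Φ (mpow A q))
      rwa [(IsSelfAdjoint.of_nonneg h0).star_eq] at this
    have h2 := CFC.sqrt_mul_self (Φ (mpow A q)) h0
    rw [CFC.sqrt_eq_rpow, CFC.rpow_eq_cfc_real hk] at h2
    simpa only [← Real.sqrt_eq_rpow] using h2
  · rw [hm, hm, hm]
    exact ak_nonneg hG hG1 hA.eigenvalues_nonneg hp hpq


/-- Asymmetric Kadison inequality: if `Φ` is a unital positive linear map, `A ≥ 0` and
`0 ≤ p ≤ q`, then `|Φ(A^p) Φ(A^q)| ≤ Φ(A^{p+q})`. -/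
theorem asymmetric_kadison {n d : ℕ}
    (Φ : Matrix (Fin n) (Fin n) ℂ →ₗ[ℂ] Matrix (Fin d) (Fin d) ℂ)
    (hΦ1 : Φ 1 = 1) (hΦpos : ∀ X : Matrix (Fin n) (Fin n) ℂ, X.PosSemidef → (Φ X).PosSemidef)
    (A : Matrix (Fin n) (Fin n) ℂ) (hA : A.PosSemidef)
    (p q : ℝ) (hp : 0 ≤ p) (hpq : p ≤ q) :
    loewnerLE (matAbs (Φ (mpow A p) * Φ (mpow A q))) (Φ (mpow A (p + q))) :=
  Matrix.le_iff.mp (ak_final Φ hΦ1 hΦpos A hA p q hp hpq)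
end

section
/- If Φ : Mₙ(ℂ) → M_d(ℂ) is a unital positive linear map, A is positive semidefinite, and 0 ≤ α ≤ 1, then Φ(A)^{1+α} ≥ |Φ(A^α)Φ(A)|. -/
open scoped Matrix ComplexOrder

section gen
variable {𝒜 : Type*} [CStarAlgebra 𝒜] [PartialOrder 𝒜] [StarOrderedRing 𝒜]

theorem ks_rr {B : 𝒜} (hB : IsStrictlyPositive B) (x y : ℝ) : (B ^ x) ^ y = B ^ (x * y) := by
  rcases eq_or_ne x 0 with rfl | hx
  · rw [CFC.rpow_zero B hB.nonneg, CFC.one_rpow, zero_mul, CFC.rpow_zero B hB.nonneg]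
  · exact CFC.rpow_rpow B x y hx hB

theorem ks_ra {B : 𝒜} (hB : IsStrictlyPositive B) (x y : ℝ) : B ^ x * B ^ y = B ^ (x + y) :=
  (CFC.rpow_add hB.isUnit).symm

theorem ks_sa (B : 𝒜) (x : ℝ) : IsSelfAdjoint (B ^ x) := (CFC.rpow_nonneg).isSelfAdjoint

theorem ks_inv {X Y : 𝒜} (hX : IsStrictlyPositive X) (h : X ≤ Y) : Y ^ (-1 : ℝ) ≤ X ^ (-1 : ℝ) := by
  rw [← CFC.inverse_eq_rpow_neg_one hX, ← CFC.inverse_eq_rpow_neg_one (hX.of_le h)]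
  exact CStarAlgebra.ringInverse_le_ringInverse h hX

/-- Midpoint step. -/
theorem ks_mid {B X Y Q : 𝒜} (hB : IsStrictlyPositive B) (hX : IsStrictlyPositive X)
    (hQ : 0 ≤ Q) (a b : ℝ) (hXB : X ≤ B ^ a) (hYB : Y ≤ B ^ b)
    (h : Q * X ^ (-1 : ℝ) * Q ≤ Y) : Q ≤ B ^ ((a + b) / 2) := by
  have h1 : Q * B ^ (-a) * Q ≤ B ^ b := by
    have := IsSelfAdjoint.conjugate_le_conjugate (ks_inv hX hXB) hQ.isSelfAdjoint
    rw [ks_rr hB] at this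
    rw [show -a = a * -1 by ring]
    exact this.trans (h.trans hYB)
  have h2 := IsSelfAdjoint.conjugate_le_conjugate h1 (ks_sa B (-a/2))
  have e1 : B ^ (-a/2) * (Q * B ^ (-a) * Q) * B ^ (-a/2)
      = (B ^ (-a/2) * Q * B ^ (-a/2)) * (B ^ (-a/2) * Q * B ^ (-a/2)) := by
    rw [show -a = -a/2 + -a/2 by ring, ← ks_ra hB]
    simp only [mul_assoc]
    ring_nf
  have e2 : B ^ (-a/2) * B ^ b * B ^ (-a/2) = B ^ ((b-a)/2) * B ^ ((b-a)/2) := by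
    simp only [ks_ra hB]; congr 1; ring
  rw [e1, e2] at h2
  have h3 := CFC.sqrt_le_sqrt _ _ h2
  rw [CFC.sqrt_mul_self _ (IsSelfAdjoint.conjugate_nonneg hQ (ks_sa B (-a/2))), CFC.sqrt_mul_self _ CFC.rpow_nonneg] at h3
  have h4 := IsSelfAdjoint.conjugate_le_conjugate h3 (ks_sa B (a/2))
  have e3 : B ^ (a/2) * (B ^ (-a/2) * Q * B ^ (-a/2)) * B ^ (a/2) = (B ^ (a/2) * B ^ (-a/2)) * Q * (B ^ (-a/2) * B ^ (a/2)) := by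
    simp only [mul_assoc]
  rw [e3] at h4
  simp only [ks_ra hB] at h4
  rw [show a/2 + -a/2 = 0 by ring, show -a/2+a/2 = 0 by ring, CFC.rpow_zero B hB.nonneg, one_mul, mul_one] at h4
  convert h4 using 2; ring

/-- sqrt lemma -/
theorem ks_furuta {B K : 𝒜} (hB : IsStrictlyPositive B) (hK : IsStrictlyPositive K) (q m : ℝ)
    (h : K ^ q ≤ B) :
    CFC.sqrt (B ^ (1/2 : ℝ) * K ^ (2 * m) * B ^ (1/2 : ℝ)) ≤ B ^ (1/2 : ℝ) * K ^ (m - q/2) * B ^ (1/2 : ℝ) := by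
  set b := B ^ (1/2 : ℝ) with hb
  have hbb : b * b = B := by rw [hb, ks_ra hB]; norm_num; exact CFC.rpow_one B hB.nonneg
  have h1 := IsSelfAdjoint.conjugate_le_conjugate h (ks_sa K m)
  have e1 : K ^ m * K ^ q * K ^ m = K ^ (m + q / 2) * K ^ (m + q / 2) := by
    simp only [ks_ra hK]; congr 1; ring
  rw [e1] at h1
  set D := K ^ m * B * K ^ m with hD
  have hDp : IsStrictlyPositive D :=
    IsStrictlyPositive.of_le (by rw [ks_ra hK]; exact hK.rpow K _) h1
  have h2 := CFC.sqrt_le_sqrt _ _ h1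
  rw [CFC.sqrt_mul_self _ CFC.rpow_nonneg, CFC.sqrt_eq_rpow] at h2
  have h3 := ks_inv (hK.rpow K _) h2
  rw [ks_rr hK, ks_rr hDp] at h3
  have h4 := IsSelfAdjoint.conjugate_le_conjugate h3 (ks_sa K m)
  have h5 := IsSelfAdjoint.conjugate_le_conjugate h4 (ks_sa B (1/2))
  simp only [ks_ra hK] at h5
  rw [← hb, show m + (m + q / 2) * -1 + m = m - q/2 by ring] at h5
  convert h5 using 1
  apply CFC.sqrt_unique
  · have : b * (K ^ m * D ^ (1 / 2 * -1 : ℝ) * K ^ m) * b * (b * (K ^ m * D ^ (1 / 2 * -1 : ℝ) * K ^ m) * b)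
       = b * (K ^ m * (D ^ (1 / 2 * -1 : ℝ) * D * D ^ (1 / 2 * -1 : ℝ)) * K ^ m) * b := by
      rw [hD, ← hbb]; simp only [mul_assoc]
    rw [this]
    have : D ^ (1 / 2 * -1 : ℝ) * D * D ^ (1 / 2 * -1 : ℝ) = 1 := by
      nth_rewrite 2 [← CFC.rpow_one D hDp.nonneg]
      simp only [ks_ra hDp]
      norm_num
      exact CFC.rpow_zero D hDp.nonneg
    rw [this, mul_one, ks_ra hK, two_mul]
  · exact IsSelfAdjoint.conjugate_nonneg (IsSelfAdjoint.conjugate_nonneg CFC.rpow_nonneg (ks_sa _ _)) (ks_sa _ _)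

theorem ks_schur {ι : Type*} [Fintype ι] (P : ι → 𝒜) (hP : ∀ i, 0 ≤ P i) (u v : ι → ℝ)
    (hR : IsStrictlyPositive (∑ i, (v i * v i) • P i)) :
    (∑ i, (u i * v i) • P i) * (∑ i, (v i * v i) • P i) ^ (-1 : ℝ) * (∑ i, (u i * v i) • P i)
      ≤ ∑ i, (u i * u i) • P i := by
  set R := ∑ i, (v i * v i) • P i with hRd
  set Q := ∑ i, (u i * v i) • P i with hQd
  set W := R ^ (-1 : ℝ) with hW
  have hQs : star Q = Q := by
    rw [hQd, star_sum]; simp [(hP _).isSelfAdjoint.star_eq]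
  have hWs : star W = W := (ks_sa R _).star_eq
  have hRW : R * W = 1 := by
    nth_rewrite 1 [← CFC.rpow_one R hR.nonneg]
    rw [hW, ks_ra hR]; norm_num
    exact CFC.rpow_zero R hR.nonneg
  have h0 : 0 ≤ ∑ i, star (u i • (1 : 𝒜) - v i • (W * Q)) * P i * (u i • (1 : 𝒜) - v i • (W * Q)) :=
    Finset.sum_nonneg fun i _ => star_left_conjugate_nonneg (hP i) _
  have e : ∑ i, star (u i • (1 : 𝒜) - v i • (W * Q)) * P i * (u i • (1 : 𝒜) - v i • (W * Q))
      = (∑ i, (u i * u i) • P i) - (∑ i, (u i * v i) • P i) * (W * Q) - (Q * W) * (∑ i, (u i * v i) • P i)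
        + (Q * W) * (∑ i, (v i * v i) • P i) * (W * Q) := by
    simp only [Finset.sum_mul, Finset.mul_sum, ← Finset.sum_sub_distrib, ← Finset.sum_add_distrib]
    refine Finset.sum_congr rfl fun i _ => ?_
    simp only [star_sub, star_smul, star_one, star_mul, hQs, hWs, star_trivial, sub_mul, mul_sub, smul_mul_assoc, mul_smul_comm, one_mul, mul_one, smul_smul, smul_sub]
    rw [mul_comm (v i) (u i)]
    abel
  rw [e, ← hQd, ← hRd] at h0
  have : (Q * W) * R * (W * Q) = Q * W * Q := by
    calc _ = Q * W * (R * W) * Q := by simp only [mul_assoc]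
      _ = _ := by rw [hRW, mul_one]
  rw [this, ← mul_assoc] at h0
  rw [← sub_nonneg]
  convert h0 using 1
  abel

theorem ks_cont {B : 𝒜} (hB : IsStrictlyPositive B) : Continuous (fun p : ℝ => B ^ p) := by
  have e : (fun p : ℝ => B ^ p) = fun p : ℝ => cfc (fun x : ℝ => x ^ p) B := by
    ext p; exact CFC.rpow_eq_cfc_real hB.nonneg
  have hs : ∀ x ∈ spectrum ℝ B, 0 < x := fun x hx => hB.spectrum_pos hx
  rw [e, continuous_iff_continuousAt]
  intro p
  refine continuousAt_cfc_fun ?_ ?_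
  · intro u hu
    have hc : ContinuousOn (Function.uncurry fun (p : ℝ) (x : ℝ) => x ^ p)
        (Set.univ ×ˢ spectrum ℝ B) := by
      refine ContinuousOn.rpow continuousOn_snd continuousOn_fst ?_
      rintro ⟨a, b⟩ h
      exact Or.inl (hs b h.2).ne'
    obtain ⟨v, hv, h⟩ := IsCompact.mem_uniformity_of_prod
      (ContinuousFunctionalCalculus.isCompact_spectrum B) hc (Set.mem_univ p)
      (symm_le_uniformity hu)
    rw [nhdsWithin_univ] at hv
    filter_upwards [hv] with q hq x hx
    exact h q hq x hx
  · exact Filter.Eventually.of_forall fun q =>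
      ContinuousOn.rpow_const continuousOn_id fun x hx => Or.inl (hs x hx).ne'

theorem ks_midclosed (S : Set ℝ) (hS : IsClosed S) (h0 : (0 : ℝ) ∈ S) (h1 : (1 : ℝ) ∈ S)
    (hm : ∀ a ∈ S, ∀ b ∈ S, (a + b) / 2 ∈ S) {t : ℝ} (ht0 : 0 ≤ t) (ht1 : t ≤ 1) : t ∈ S := by
  by_contra ht
  have A1 : sSup (S ∩ Set.Icc 0 t) ∈ S ∩ Set.Icc 0 t :=
    (hS.inter isClosed_Icc).csSup_mem ⟨0, h0, le_refl _, ht0⟩ ⟨t, fun x hx => hx.2.2⟩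
  have A2 : sInf (S ∩ Set.Icc t 1) ∈ S ∩ Set.Icc t 1 :=
    (hS.inter isClosed_Icc).csInf_mem ⟨1, h1, ht1, le_refl _⟩ ⟨t, fun x hx => hx.2.1⟩
  have A3 : ∀ x ∈ S ∩ Set.Icc 0 t, x ≤ sSup (S ∩ Set.Icc 0 t) :=
    fun x hx => le_csSup ⟨t, fun x hx => hx.2.2⟩ hx
  have A4 : ∀ x ∈ S ∩ Set.Icc t 1, sInf (S ∩ Set.Icc t 1) ≤ x :=
    fun x hx => csInf_le ⟨t, fun x hx => hx.2.1⟩ hx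
  set a := sSup (S ∩ Set.Icc 0 t)
  set b := sInf (S ∩ Set.Icc t 1)
  have hat : a < t := lt_of_le_of_ne A1.2.2 fun h => ht (h ▸ A1.1)
  have hbt : t < b := lt_of_le_of_ne A2.2.1 fun h => ht (h ▸ A2.1)
  have hab := hm a A1.1 b A2.1
  have ha0 := A1.2.1
  have hb1 := A2.2.2
  rcases le_total ((a + b) / 2) t with h | h
  · have := A3 _ ⟨hab, by linarith, h⟩
    linarith
  · have := A4 _ ⟨hab, h, by linarith⟩
    linarith

section fam
variable {ι : Type*} [Fintype ι] (P : ι → 𝒜) (l : ι → ℝ)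

/-- `Φ(A^p)` in spectral form. -/
noncomputable def ksPsi (p : ℝ) : 𝒜 := ∑ i, (l i ^ p) • P i

variable {P l}

theorem ks_psi_pos (hP : ∀ i, 0 ≤ P i) (hP1 : ∑ i, P i = 1) (hl : ∀ i, 0 < l i) (p : ℝ) :
    IsStrictlyPositive (ksPsi P l p) := by
  obtain ⟨δ, hδ, h⟩ : ∃ δ : ℝ, 0 < δ ∧ ∀ i, δ ≤ l i ^ p := by
    rcases isEmpty_or_nonempty ι with he | he
    · exact ⟨1, one_pos, fun i => he.elim i⟩
    · obtain ⟨j, hj⟩ := Finite.exists_min (fun i => l i ^ p)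
      exact ⟨l j ^ p, Real.rpow_pos_of_pos (hl j) p, hj⟩
  have h1 : IsStrictlyPositive (δ • (1 : 𝒜)) := IsStrictlyPositive.smul hδ isStrictlyPositive_one
  refine h1.of_le ?_
  rw [← hP1, Finset.smul_sum]
  exact Finset.sum_le_sum fun i _ => smul_le_smul_of_nonneg_right (h i) (hP i)

theorem ks_psi_schur (hP : ∀ i, 0 ≤ P i) (hP1 : ∑ i, P i = 1) (hl : ∀ i, 0 < l i) (a b : ℝ) :
    ksPsi P l ((a + b) / 2) * ksPsi P l a ^ (-1 : ℝ) * ksPsi P l ((a + b) / 2) ≤ ksPsi P l b := by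
  have ea : ksPsi P l a = ∑ i, (l i ^ (a/2) * l i ^ (a/2)) • P i := by
    refine Finset.sum_congr rfl fun i _ => ?_
    rw [← Real.rpow_add (hl i), add_halves]
  have eb : ksPsi P l b = ∑ i, (l i ^ (b/2) * l i ^ (b/2)) • P i := by
    refine Finset.sum_congr rfl fun i _ => ?_
    rw [← Real.rpow_add (hl i), add_halves]
  have ec : ksPsi P l ((a + b) / 2) = ∑ i, (l i ^ (b/2) * l i ^ (a/2)) • P i := by
    refine Finset.sum_congr rfl fun i _ => ?_
    rw [← Real.rpow_add (hl i)]; congr 2; ring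
  have := ks_psi_pos hP hP1 hl a
  rw [ea] at this
  rw [ea, eb, ec]
  exact ks_schur P hP _ _ this

theorem ks_psi_jensen (hP : ∀ i, 0 ≤ P i) (hP1 : ∑ i, P i = 1) (hl : ∀ i, 0 < l i) {t : ℝ}
    (ht0 : 0 ≤ t) (ht1 : t ≤ 1) : ksPsi P l t ≤ ksPsi P l 1 ^ t := by
  have hB := ks_psi_pos hP hP1 hl 1
  refine ks_midclosed {t : ℝ | ksPsi P l t ≤ ksPsi P l 1 ^ t} ?_ ?_ ?_ ?_ ht0 ht1
  · refine isClosed_le ?_ (ks_cont hB)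
    refine continuous_finsetSum _ fun i _ => ?_
    exact (Real.continuous_const_rpow (hl i).ne').smul continuous_const
  · simp only [Set.mem_ofPred_eq]
    rw [CFC.rpow_zero _ hB.nonneg]
    simp [ksPsi, hP1]
  · simp only [Set.mem_ofPred_eq]
    rw [CFC.rpow_one _ hB.nonneg]
  · intro a ha b hb
    exact ks_mid hB (ks_psi_pos hP hP1 hl a) (ks_psi_pos hP hP1 hl _).nonneg a b ha hb
      (ks_psi_schur hP hP1 hl a b)

theorem ks_psi_psi (hl : ∀ i, 0 < l i) (s t : ℝ) :
    ksPsi P (fun i => l i ^ s) t = ksPsi P l (s * t) := by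
  refine Finset.sum_congr rfl fun i _ => ?_
  rw [Real.rpow_mul (hl i).le]

theorem ks_main_pos (hP : ∀ i, 0 ≤ P i) (hP1 : ∑ i, P i = 1) (hl : ∀ i, 0 < l i) {α : ℝ}
    (h0 : 0 ≤ α) (h1 : α ≤ 1) :
    CFC.sqrt (ksPsi P l 1 * (ksPsi P l α * ksPsi P l α) * ksPsi P l 1) ≤ ksPsi P l 1 ^ (1 + α) := by
  have hB := ks_psi_pos hP hP1 hl 1
  have hC := ks_psi_pos hP hP1 hl α
  have hCB := ks_psi_jensen hP hP1 hl h0 h1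
  set B := ksPsi P l 1 with hBd
  set C := ksPsi P l α with hCd
  have hB1 : B ^ (1 : ℝ) = B := CFC.rpow_one B hB.nonneg
  have hC1 : C ^ (1 : ℝ) = C := CFC.rpow_one C hC.nonneg
  rcases le_total α (1/2) with hα | hα
  · have k1 := ks_psi_schur hP hP1 hl 0 (2 * α)
    rw [show (0 + 2 * α) / 2 = α by ring, ← hCd] at k1
    have e0 : ksPsi P l 0 = 1 := by simp [ksPsi, hP1]
    rw [e0, CFC.one_rpow, mul_one] at k1
    have k2 := k1.trans (ks_psi_jensen hP hP1 hl (by linarith : 0 ≤ 2 * α) (by linarith))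
    have k3 := IsSelfAdjoint.conjugate_le_conjugate k2 hB.nonneg.isSelfAdjoint
    have k4 := CFC.sqrt_le_sqrt _ _ k3
    have e1 : B * B ^ (2 * α) * B = B ^ (1 + α) * B ^ (1 + α) := by
      nth_rewrite 1 [← hB1]
      nth_rewrite 3 [← hB1]
      simp only [ks_ra hB]; congr 1; ring
    rw [← hBd, e1, CFC.sqrt_mul_self _ CFC.rpow_nonneg] at k4
    exact k4
  · have hαp : 0 < α := by linarith
    have k1 := ks_psi_schur hP hP1 hl 1 (2 * α - 1)
    rw [show (1 + (2 * α - 1)) / 2 = α by ring, ← hCd, ← hBd] at k1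
    have k2 := ks_psi_jensen hP hP1 (fun i => Real.rpow_pos_of_pos (hl i) α) (t := (2 * α - 1) / α)
      (div_nonneg (by linarith) h0) (by rw [div_le_one hαp]; linarith)
    rw [ks_psi_psi hl, ks_psi_psi hl, mul_one, ← hCd,
      show α * ((2 * α - 1) / α) = 2 * α - 1 by field_simp] at k2
    have k3 := IsSelfAdjoint.conjugate_le_conjugate (k1.trans k2) (ks_sa C (-1))
    have e1 : C ^ (-1 : ℝ) * (C * B ^ (-1 : ℝ) * C) * C ^ (-1 : ℝ) = B ^ (-1 : ℝ) := by
      have c1 : C ^ (-1 : ℝ) * C = 1 := by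
        nth_rewrite 2 [← hC1]
        rw [ks_ra hC]; norm_num; exact CFC.rpow_zero C hC.nonneg
      have c2 : C * C ^ (-1 : ℝ) = 1 := by
        nth_rewrite 1 [← hC1]
        rw [ks_ra hC]; norm_num; exact CFC.rpow_zero C hC.nonneg
      calc _ = (C ^ (-1 : ℝ) * C) * B ^ (-1 : ℝ) * (C * C ^ (-1 : ℝ)) := by simp only [mul_assoc]
        _ = _ := by rw [c1, c2, one_mul, mul_one]
    rw [e1] at k3
    simp only [ks_ra hC] at k3
    have k4 := ks_inv (hB.rpow B _) k3
    rw [ks_rr hB, ks_rr hC, show (-1 : ℝ) * -1 = 1 by norm_num, hB1,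
      show (-1 + (2 * α - 1) / α + -1) * -1 = 1 / α by field_simp; ring] at k4
    have k5 := ks_furuta hB hC (1/α) 1 k4
    set b := B ^ (1/2 : ℝ) with hb
    have hbsp : IsStrictlyPositive b := hB.rpow B _
    have hbb : b * b = B := by rw [hb, ks_ra hB]; norm_num; exact hB1
    have hr1 : 0 ≤ 1 - 1 / α / 2 := by
      have : 1 / α ≤ 2 := by rw [div_le_iff₀ hαp]; linarith
      linarith
    have hr2 : 1 - 1 / α / 2 ≤ 1 := by
      have : 0 ≤ 1 / α := by positivity
      linarith
    have k6 := CFC.rpow_le_rpow (p := 1 - 1 / α / 2) ⟨hr1, hr2⟩ hCB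
    rw [ks_rr hB] at k6
    have k7 := k5.trans (IsSelfAdjoint.conjugate_le_conjugate k6 hbsp.nonneg.isSelfAdjoint)
    have e2 : b * B ^ (α * (1 - 1 / α / 2)) * b = B ^ (α + 1/2) := by
      rw [hb]; simp only [ks_ra hB]; congr 1; field_simp; ring
    rw [e2] at k7
    set F := b * C ^ (2 * 1 : ℝ) * b with hF
    have hFp : IsStrictlyPositive F := by
      have := (IsStrictlyPositive.iff_of_unital.mp (hC.rpow C (2 * 1)))
      refine IsStrictlyPositive.iff_of_unital.mpr
        ⟨IsSelfAdjoint.conjugate_nonneg CFC.rpow_nonneg hbsp.nonneg.isSelfAdjoint, ?_⟩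
      exact (hbsp.isUnit.mul this.2).mul hbsp.isUnit
    have hq : 0 < 2 * α + 1 := by linarith
    have pw : ∀ s : ℝ, 0 ≤ s → s ≤ 1 → F ^ (s / (2 * α + 1)) ≤ B ^ s := by
      intro s hs0 hs1
      have := CFC.rpow_le_rpow (p := 2 * s / (2 * α + 1))
        ⟨by positivity, by rw [div_le_one hq]; linarith⟩ k7
      rw [CFC.sqrt_eq_rpow, ks_rr hFp, ks_rr hB] at this
      convert this using 2
      · field_simp
      · field_simp
    have k8 := pw 1 zero_le_one le_rfl
    rw [hB1] at k8
    have k9 := ks_furuta hB hFp _ (1/2) k8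
    have k10 := pw α h0 h1
    rw [← hb, show (2 : ℝ) * (1/2) = 1 by norm_num, CFC.rpow_one F hFp.nonneg,
      show (1/2 : ℝ) - 1 / (2 * α + 1) / 2 = α / (2 * α + 1) by field_simp; ring] at k9
    have k11 := k9.trans (IsSelfAdjoint.conjugate_le_conjugate k10 hbsp.nonneg.isSelfAdjoint)
    have e3 : b * B ^ α * b = B ^ (1 + α) := by
      rw [hb]; simp only [ks_ra hB]; congr 1; ring
    have e4 : b * F * b = B * (C * C) * B := by
      have : C ^ (2 * 1 : ℝ) = C * C := by
        rw [two_mul, ← ks_ra hC, hC1]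
      rw [hF, this, ← hbb]; simp only [mul_assoc]
    rw [e3, e4] at k11
    exact k11

theorem ks_main_nonneg (hP : ∀ i, 0 ≤ P i) (hP1 : ∑ i, P i = 1) (hl : ∀ i, 0 ≤ l i) {α : ℝ}
    (h0 : 0 ≤ α) (h1 : α ≤ 1) :
    CFC.sqrt (ksPsi P l 1 * (ksPsi P l α * ksPsi P l α) * ksPsi P l 1) ≤ ksPsi P l 1 ^ (1 + α) := by
  have hc : ∀ p : ℝ, 0 ≤ p → ContinuousOn (fun ε : ℝ => ksPsi P (fun i => l i + ε) p) (Set.Ici 0) := by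
    intro p hp
    refine Continuous.continuousOn ?_
    refine continuous_finsetSum _ fun i _ => ?_
    exact ((Real.continuous_rpow_const hp).comp (by fun_prop)).smul continuous_const
  have hnn : ∀ p : ℝ, ∀ ε ∈ Set.Ici (0 : ℝ), 0 ≤ ksPsi P (fun i => l i + ε) p := by
    intro p ε hε
    exact Finset.sum_nonneg fun i _ =>
      smul_nonneg (Real.rpow_nonneg (add_nonneg (hl i) hε) _) (hP i)
  have hL : ContinuousOn (fun ε : ℝ => CFC.sqrt (ksPsi P (fun i => l i + ε) 1 *
      (ksPsi P (fun i => l i + ε) α * ksPsi P (fun i => l i + ε) α) *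
      ksPsi P (fun i => l i + ε) 1)) (Set.Ici 0) := by
    refine CFC.continuousOn_sqrt.comp (s := Set.Ici 0) (((hc 1 zero_le_one).mul ((hc α h0).mul (hc α h0))).mul (hc 1 zero_le_one)) ?_
    intro ε hε
    refine IsSelfAdjoint.conjugate_nonneg ?_ (hnn 1 ε hε).isSelfAdjoint
    have := IsSelfAdjoint.conjugate_nonneg (zero_le_one (α := 𝒜)) (hnn α ε hε).isSelfAdjoint
    simpa using this
  have hR : ContinuousOn (fun ε : ℝ => ksPsi P (fun i => l i + ε) 1 ^ (1 + α)) (Set.Ici 0) := by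
    obtain ⟨q, hq⟩ : ∃ q : NNReal, (q : ℝ) = 1 + α :=
      ⟨(1 + α).toNNReal, Real.coe_toNNReal _ (by linarith)⟩
    have hq0 : 0 < q := by
      rw [← NNReal.coe_pos, hq]; linarith
    have := (CFC.continuousOn_nnrpow (A := 𝒜) q).comp (hc 1 zero_le_one) (hnn 1)
    refine this.congr fun ε _ => ?_
    rw [← hq]
    exact (CFC.nnrpow_eq_rpow hq0).symm
  have t1 := (hL 0 (Set.mem_Ici.2 le_rfl)).mono (Set.Ioi_subset_Ici_self)
  have t2 := (hR 0 (Set.mem_Ici.2 le_rfl)).mono (Set.Ioi_subset_Ici_self)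
  have := le_of_tendsto_of_tendsto t1.tendsto t2.tendsto (by
    filter_upwards [self_mem_nhdsWithin] with ε hε
    exact ks_main_pos hP hP1 (fun i => add_pos_of_nonneg_of_pos (hl i) hε) h0 h1)
  simpa using this
end fam
end gen

open scoped MatrixOrder Matrix.Norms.L2Operator in
theorem ks_matrix {n d : ℕ}
    (Φ : Matrix (Fin n) (Fin n) ℂ →ₗ[ℂ] Matrix (Fin d) (Fin d) ℂ)
    (hΦ1 : Φ 1 = 1) (hΦpos : ∀ X : Matrix (Fin n) (Fin n) ℂ, X.PosSemidef → (Φ X).PosSemidef)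
    (A : Matrix (Fin n) (Fin n) ℂ) (hA : A.PosSemidef)
    (α : ℝ) (hα0 : 0 ≤ α) (hα1 : α ≤ 1) :
    matAbs (Φ (mpow A α) * Φ A) ≤ mpow (Φ A) (1 + α) := by
  have hH : A.IsHermitian := hA.1
  set U : Matrix (Fin n) (Fin n) ℂ := (hH.eigenvectorUnitary : Matrix (Fin n) (Fin n) ℂ) with hU
  let E : Fin n → Matrix (Fin n) (Fin n) ℂ := fun i => U * Matrix.diagonal (Pi.single i 1) * star U
  let l : Fin n → ℝ := hH.eigenvalues
  have hl : ∀ i, 0 ≤ l i := fun i => hA.eigenvalues_nonneg i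
  have hE : ∀ i, (E i).PosSemidef := by
    intro i
    refine Matrix.PosSemidef.mul_mul_conjTranspose_same ?_ U
    rw [Matrix.posSemidef_diagonal_iff]
    intro j
    by_cases h : j = i
    · subst h; simp
    · simp [h]
  have hdec : ∀ f : ℝ → ℝ, cfc f A = ∑ i, (f (l i)) • E i := by
    intro f
    rw [hH.cfc_eq, Matrix.IsHermitian.cfc, Unitary.conjStarAlgAut_apply]
    have : (Matrix.diagonal (RCLike.ofReal ∘ f ∘ hH.eigenvalues) : Matrix (Fin n) (Fin n) ℂ)
        = ∑ i, (f (l i)) • Matrix.diagonal (Pi.single i 1) := by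
      ext a b
      simp only [Matrix.sum_apply, Matrix.smul_apply, Matrix.diagonal_apply]
      by_cases h : a = b
      · subst h; simp [Pi.single_apply, l]
      · simp [h]
    rw [this, Finset.mul_sum, Finset.sum_mul]
    refine Finset.sum_congr rfl fun i _ => ?_
    simp only [E, mul_smul_comm, smul_mul_assoc]
    rfl
  have hsa : IsSelfAdjoint A := hH
  have hE1 : ∑ i, E i = 1 := by
    have := hdec (fun _ => 1)
    rw [cfc_const_one ℝ A hsa] at this
    simpa using this.symm
  have hEA : A = ∑ i, (l i) • E i := by
    have := hdec (fun x => x)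
    rwa [cfc_id' ℝ A hsa] at this
  have hsm : ∀ c : Fin n → ℝ, Φ (∑ i, c i • E i) = ∑ i, c i • Φ (E i) := by
    intro c
    rw [map_sum]
    refine Finset.sum_congr rfl fun i _ => ?_
    exact (Φ.restrictScalars ℝ).map_smul (c i) (E i)
  have hP : ∀ i, 0 ≤ Φ (E i) := fun i => Matrix.nonneg_iff_posSemidef.2 (hΦpos _ (hE i))
  have hP1 : ∑ i, Φ (E i) = 1 := by rw [← map_sum, hE1, hΦ1]
  have hB : Φ A = ksPsi (fun i => Φ (E i)) l 1 := by
    conv_lhs => rw [hEA]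
    rw [hsm]; simp [ksPsi]
  have hC : Φ (mpow A α) = ksPsi (fun i => Φ (E i)) l α := by
    rw [mpow, hdec, hsm]; rfl
  have key := ks_main_nonneg hP hP1 hl hα0 hα1
  rw [← hB, ← hC] at key
  have hB0 : 0 ≤ Φ A := Matrix.nonneg_iff_posSemidef.2 (hΦpos _ hA)
  have hC0 : 0 ≤ Φ (mpow A α) := by
    rw [hC]
    exact Finset.sum_nonneg fun i _ => smul_nonneg (Real.rpow_nonneg (hl i) _) (hP i)
  have hX : (Φ (mpow A α) * Φ A)ᴴ * (Φ (mpow A α) * Φ A)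
      = Φ A * (Φ (mpow A α) * Φ (mpow A α)) * Φ A := by
    rw [← Matrix.star_eq_conjTranspose, star_mul, hB0.isSelfAdjoint.star_eq,
      hC0.isSelfAdjoint.star_eq]
    simp only [mul_assoc]
  have hX0 : 0 ≤ (Φ (mpow A α) * Φ A)ᴴ * (Φ (mpow A α) * Φ A) :=
    Matrix.nonneg_iff_posSemidef.2 (Matrix.posSemidef_conjTranspose_mul_self _)
  rw [← hX, CFC.sqrt_eq_real_sqrt _ hX0, cfcₙ_eq_cfc (hf0 := Real.sqrt_zero), CFC.rpow_eq_cfc_real hB0] at key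
  exact key

/-- If `Φ` is a unital positive linear map, `A ≥ 0` and `0 ≤ α ≤ 1`, then
`Φ(A)^{1+α} ≥ |Φ(A^α) Φ(A)|`. -/
theorem kadison_strengthened {n d : ℕ}
    (Φ : Matrix (Fin n) (Fin n) ℂ →ₗ[ℂ] Matrix (Fin d) (Fin d) ℂ)
    (hΦ1 : Φ 1 = 1) (hΦpos : ∀ X : Matrix (Fin n) (Fin n) ℂ, X.PosSemidef → (Φ X).PosSemidef)
    (A : Matrix (Fin n) (Fin n) ℂ) (hA : A.PosSemidef)
    (α : ℝ) (hα0 : 0 ≤ α) (hα1 : α ≤ 1) :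
    loewnerLE (matAbs (Φ (mpow A α) * Φ A)) (mpow (Φ A) (1 + α)) := by
  exact ks_matrix Φ hΦ1 hΦpos A hA α hα0 hα1
end

section
/- If Φ : Mₙ(ℂ) → M_d(ℂ) is a unital positive linear map, A is positive semidefinite, and p, q ≥ 0, then there exists a unitary V ∈ M_d(ℂ) with |Φ(A^p)Φ(A^q)| ≤ V Φ(A^{p+q}) V*. -/
open scoped Matrix ComplexOrder

/-- Real part of the standard sesquilinear form. -/
noncomputable def rdot {d : ℕ} (x y : Fin d → ℂ) : ℝ := (star x ⬝ᵥ y).re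

lemma rdot_add_right {d : ℕ} (x y z : Fin d → ℂ) : rdot x (y + z) = rdot x y + rdot x z := by
  simp [rdot, dotProduct_add]

lemma rdot_sub_right {d : ℕ} (x y z : Fin d → ℂ) : rdot x (y - z) = rdot x y - rdot x z := by
  simp [rdot, dotProduct_sub]

lemma rdot_sub_left {d : ℕ} (x y z : Fin d → ℂ) : rdot (x - y) z = rdot x z - rdot y z := by
  simp [rdot, sub_dotProduct]

lemma rdot_smul_right {d : ℕ} (c : ℝ) (x y : Fin d → ℂ) :
    rdot x ((c : ℂ) • y) = c * rdot x y := by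
  simp [rdot, dotProduct_smul]

lemma rdot_smul_left {d : ℕ} (c : ℝ) (x y : Fin d → ℂ) :
    rdot ((c : ℂ) • x) y = c * rdot x y := by
  simp [rdot, smul_dotProduct]

lemma rdot_comm {d : ℕ} (x y : Fin d → ℂ) : rdot x y = rdot y x := by
  simp only [rdot, dotProduct, Complex.re_sum]
  refine Finset.sum_congr rfl fun i _ => ?_
  simp
  ring

lemma rdot_self {d : ℕ} (x : Fin d → ℂ) : rdot x x = ∑ i, Complex.normSq (x i) := by
  simp only [rdot, dotProduct, Complex.re_sum]
  refine Finset.sum_congr rfl fun i _ => ?_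
  simp [Complex.normSq_apply]

lemma rdot_self_nonneg {d : ℕ} (x : Fin d → ℂ) : 0 ≤ rdot x x := by
  rw [rdot_self]; exact Finset.sum_nonneg fun i _ => Complex.normSq_nonneg _

lemma rdot_mulVec {d : ℕ} (M : Matrix (Fin d) (Fin d) ℂ) (x y : Fin d → ℂ) :
    rdot x (M *ᵥ y) = rdot (Mᴴ *ᵥ x) y := by
  simp [rdot, Matrix.star_mulVec, Matrix.dotProduct_mulVec]

lemma rdot_psd {d : ℕ} {M : Matrix (Fin d) (Fin d) ℂ} (hM : M.PosSemidef) (x : Fin d → ℂ) :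
    0 ≤ rdot x (M *ᵥ x) := hM.re_dotProduct_nonneg x

lemma rdot_herm {d : ℕ} {M : Matrix (Fin d) (Fin d) ℂ} (hM : M.IsHermitian) (x y : Fin d → ℂ) :
    rdot x (M *ᵥ y) = rdot (M *ᵥ x) y := by
  rw [rdot_mulVec, hM.eq]

lemma rdot_wsum {m d : ℕ} (E : Fin m → Matrix (Fin d) (Fin d) ℂ) (f : Fin m → ℝ)
    (x y : Fin d → ℂ) :
    rdot x ((∑ i, ((f i : ℝ) : ℂ) • E i) *ᵥ y) = ∑ i, f i * rdot x (E i *ᵥ y) := by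
  simp [rdot, Matrix.sum_mulVec, dotProduct_sum, Matrix.smul_mulVec, dotProduct_smul]

lemma wsum_psd {m d : ℕ} (E : Fin m → Matrix (Fin d) (Fin d) ℂ) (hE : ∀ i, (E i).PosSemidef)
    (f : Fin m → ℝ) (hf : ∀ i, 0 ≤ f i) :
    (∑ i, ((f i : ℝ) : ℂ) • E i).PosSemidef := by
  refine Matrix.posSemidef_sum _ fun i _ => (hE i).smul ?_
  exact_mod_cast hf i

/-- Weighted AM-GM in the shape used below. -/
lemma scalar_young (t μ η : ℝ) (ht : 0 ≤ t) (hμ : 0 < μ) (h0 : 0 ≤ η) (h1 : η ≤ 1) :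
    t ^ η ≤ μ ^ η * (η * (t / μ) + (1 - η)) := by
  have h := Real.geom_mean_le_arith_mean2_weighted h0 (sub_nonneg.2 h1)
    (div_nonneg ht hμ.le) zero_le_one (by ring)
  rw [Real.one_rpow, mul_one, mul_one, Real.div_rpow ht hμ.le,
    div_le_iff₀ (Real.rpow_pos_of_pos hμ η)] at h
  linarith

lemma wsum_bound {m : ℕ} (e b : Fin m → ℝ) (he : ∀ i, 0 ≤ e i) (hb : ∀ i, 0 ≤ b i)
    (μ η : ℝ) (hμ : 0 < μ) (h0 : 0 ≤ η) (h1 : η ≤ 1) (h : ∑ i, b i * e i ≤ μ * ∑ i, e i) :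
    ∑ i, b i ^ η * e i ≤ μ ^ η * ∑ i, e i := by
  have hp := Real.rpow_pos_of_pos hμ η
  calc ∑ i, b i ^ η * e i
      ≤ ∑ i, (μ ^ η * (η * (b i / μ) + (1 - η))) * e i :=
        Finset.sum_le_sum fun i _ =>
          mul_le_mul_of_nonneg_right (scalar_young _ _ _ (hb i) hμ h0 h1) (he i)
    _ = μ ^ η * (η / μ * ∑ i, b i * e i + (1 - η) * ∑ i, e i) := by
        simp only [Finset.mul_sum, ← Finset.sum_add_distrib]
        refine Finset.sum_congr rfl fun i _ => by ring
    _ ≤ μ ^ η * (η / μ * (μ * ∑ i, e i) + (1 - η) * ∑ i, e i) := by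
        gcongr
    _ = μ ^ η * ∑ i, e i := by field_simp; ring

/-- Kadison inequality for a positive operator valued measure. -/
lemma kadison {m d : ℕ} (E : Fin m → Matrix (Fin d) (Fin d) ℂ) (hE : ∀ i, (E i).PosSemidef)
    (hsum : ∑ i, E i = 1) (f : Fin m → ℝ) (u : Fin d → ℂ) :
    rdot ((∑ i, ((f i : ℝ) : ℂ) • E i) *ᵥ u) ((∑ i, ((f i : ℝ) : ℂ) • E i) *ᵥ u) ≤
      ∑ i, f i ^ 2 * rdot u (E i *ᵥ u) := by
  set w := (∑ i, ((f i : ℝ) : ℂ) • E i) *ᵥ u with hw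
  have h : 0 ≤ ∑ i, rdot (((f i : ℝ) : ℂ) • u - w) (E i *ᵥ (((f i : ℝ) : ℂ) • u - w)) :=
    Finset.sum_nonneg fun i _ => rdot_psd (hE i) _
  have e1 : ∀ i, rdot (((f i : ℝ) : ℂ) • u - w) (E i *ᵥ (((f i : ℝ) : ℂ) • u - w)) =
      f i ^ 2 * rdot u (E i *ᵥ u) - 2 * (f i * rdot w (E i *ᵥ u)) + 1 * rdot w (E i *ᵥ w) := by
    intro i
    rw [Matrix.mulVec_sub, Matrix.mulVec_smul, rdot_sub_left, rdot_sub_right, rdot_sub_right,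
      rdot_smul_left, rdot_smul_left, rdot_smul_right, rdot_smul_right,
      rdot_herm (hE i).1 u w, rdot_comm (E i *ᵥ u) w]
    ring
  have e2 : ∑ i, f i * rdot w (E i *ᵥ u) = rdot w w := by
    rw [← rdot_wsum]
  have e3 : ∑ i, 1 * rdot w (E i *ᵥ w) = rdot w w := by
    rw [← rdot_wsum E (fun _ => 1)]; simp [hsum]
  simp only [e1, Finset.sum_add_distrib, Finset.sum_sub_distrib, ← Finset.mul_sum, e2] at h
  rw [Finset.mul_sum, e3] at h
  linarith

lemma core {m d : ℕ} (E : Fin m → Matrix (Fin d) (Fin d) ℂ) (hE : ∀ i, (E i).PosSemidef)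
    (hsum : ∑ i, E i = 1) (b : Fin m → ℝ) (hb : ∀ i, 0 ≤ b i) (θ : ℝ) (h2 : 1 / 2 ≤ θ)
    (h1 : θ ≤ 1) (μ : ℝ) (hμ : 0 < μ) (v u : Fin d → ℂ)
    (hu : u = (∑ i, ((b i ^ θ : ℝ) : ℂ) • E i) *ᵥ
      ((∑ i, ((b i ^ (1 - θ) : ℝ) : ℂ) • E i) *ᵥ v))
    (hD : rdot u ((∑ i, ((b i : ℝ) : ℂ) • E i) *ᵥ u) ≤ μ * rdot u u) :
    rdot u u ≤ μ ^ 2 * rdot v v := by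
  have hnorm : ∑ i, rdot u (E i *ᵥ u) = rdot u u := by
    have := rdot_wsum E (fun _ => 1) u u
    simpa [hsum] using this.symm
  have he : ∀ i, 0 ≤ rdot u (E i *ᵥ u) := fun i => rdot_psd (hE i) u
  rw [rdot_wsum, ← hnorm] at hD
  have hB := wsum_bound _ b he hb μ θ hμ (by linarith) h1 hD
  have hC := wsum_bound _ b he hb μ (2 * (1 - θ)) hμ (by linarith) (by linarith) hD
  have hK := kadison E hE hsum (fun i => b i ^ (1 - θ)) u
  have hBp := wsum_psd E hE (fun i => b i ^ θ) (fun i => Real.rpow_nonneg (hb i) _)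
  have hCp := wsum_psd E hE (fun i => b i ^ (1 - θ)) (fun i => Real.rpow_nonneg (hb i) _)
  have hsq : ∀ t : ℝ, 0 ≤ t → (t ^ (1 - θ)) ^ 2 = t ^ (2 * (1 - θ)) := by
    intro t ht
    rw [← Real.rpow_natCast, ← Real.rpow_mul ht]; congr 1; push_cast; ring
  simp only [fun i => hsq (b i) (hb i)] at hK
  replace hK := hK.trans hC
  rw [← hsq μ hμ.le, hnorm] at hK
  rw [← rdot_wsum, hnorm] at hB
  set B := ∑ i, ((b i ^ θ : ℝ) : ℂ) • E i
  set C := ∑ i, ((b i ^ (1 - θ) : ℝ) : ℂ) • E i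
  have hβ : 0 < μ ^ θ := Real.rpow_pos_of_pos hμ θ
  have hγ : 0 < μ ^ (1 - θ) := Real.rpow_pos_of_pos hμ _
  have hβγ : μ ^ θ * μ ^ (1 - θ) = μ := by
    rw [← Real.rpow_add hμ]; simp
  set β := μ ^ θ
  set γ := μ ^ (1 - θ)
  set w := C *ᵥ v
  have i1 := rdot_psd hBp ((β : ℂ) • w - u)
  rw [Matrix.mulVec_sub, Matrix.mulVec_smul, rdot_sub_left, rdot_sub_right, rdot_sub_right,
      rdot_smul_left, rdot_smul_left, rdot_smul_right, rdot_smul_right,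
      rdot_herm hBp.1 w u, ← hu] at i1
  have i2 := rdot_self_nonneg (C *ᵥ u - ((β * γ ^ 2 : ℝ) : ℂ) • v)
  rw [rdot_sub_left, rdot_sub_right, rdot_sub_right,
      rdot_smul_left, rdot_smul_left, rdot_smul_right, rdot_smul_right,
      rdot_comm v (C *ᵥ u)] at i2
  have i3 : rdot w u = rdot (C *ᵥ u) v := by
    rw [rdot_comm, ← rdot_herm hCp.1]
  rw [i3] at i1
  -- `U ≤ β R`
  have j1 : rdot u u ≤ β * rdot (C *ᵥ u) v := by
    have : β * rdot u u ≤ β * (β * rdot (C *ᵥ u) v) := by nlinarith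
    exact le_of_mul_le_mul_left this hβ
  have j2 : γ ^ 2 * rdot u u ≤ γ ^ 2 * (μ ^ 2 * rdot v v) := by
    rw [← hβγ]
    have : β * γ ^ 2 * rdot (C *ᵥ u) v ≥ γ ^ 2 * rdot u u := by
      have := mul_le_mul_of_nonneg_left j1 (sq_nonneg γ)
      linarith
    nlinarith
  exact le_of_mul_le_mul_left j2 (by positivity)

lemma herm_form {d : ℕ} {M : Matrix (Fin d) (Fin d) ℂ} (hM : M.IsHermitian) (x : Fin d → ℂ) :
    rdot x (M *ᵥ x) = ∑ i, hM.eigenvalues i *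
      Complex.normSq (((hM.eigenvectorUnitary : Matrix (Fin d) (Fin d) ℂ)ᴴ *ᵥ x) i) := by
  conv_lhs => rw [hM.spectral_theorem, Unitary.conjStarAlgAut_apply, ← Matrix.mulVec_mulVec,
    ← Matrix.mulVec_mulVec, rdot_mulVec, Matrix.star_eq_conjTranspose]
  simp only [rdot, dotProduct, Complex.re_sum, Matrix.mulVec_diagonal]
  refine Finset.sum_congr rfl fun i _ => ?_
  simp [Complex.normSq_apply]
  ring

lemma unit_form {d : ℕ} (U : Matrix.unitaryGroup (Fin d) ℂ) (x : Fin d → ℂ) :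
    rdot x x = ∑ i, Complex.normSq (((U : Matrix (Fin d) (Fin d) ℂ)ᴴ *ᵥ x) i) := by
  rw [← rdot_self, rdot_mulVec, Matrix.mulVec_mulVec, Matrix.conjTranspose_conjTranspose,
    ← Matrix.star_eq_conjTranspose, Unitary.mul_star_self_of_mem U.2, Matrix.one_mulVec]

lemma eig_le {d : ℕ} (Y D : Matrix (Fin d) (Fin d) ℂ) (hN : (Yᴴ * Y).IsHermitian)
    (hD : D.PosSemidef)
    (H : ∀ μ : ℝ, 0 < μ → ∀ v, rdot (Y *ᵥ v) (D *ᵥ (Y *ᵥ v)) ≤ μ * rdot (Y *ᵥ v) (Y *ᵥ v) →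
      rdot (Y *ᵥ v) (Y *ᵥ v) ≤ μ ^ 2 * rdot v v) (j : Fin d) :
    hN.eigenvalues j ≤ (hD.1.eigenvalues j) ^ 2 := by
  have hl : 0 ≤ hD.1.eigenvalues j := hD.eigenvalues_nonneg j
  suffices hs : ∀ μ : ℝ, 0 < μ → hD.1.eigenvalues j ≤ μ → hN.eigenvalues j ≤ μ ^ 2 by
    by_contra! hc
    have hc2 : hD.1.eigenvalues j < √(hN.eigenvalues j) := Real.lt_sqrt_of_sq_lt hc
    obtain ⟨μ, h1, h2⟩ := exists_between hc2
    have h3 := hs μ (by linarith) h1.le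
    have h4 := (Real.lt_sqrt (by linarith)).1 h2
    linarith
  intro μ hμ hlμ
  set r : Fin d → Fin (Fintype.card (Fin d)) :=
    fun i => (Fintype.equivOfCardEq (Fintype.card_fin (Fintype.card (Fin d)))).symm i with hr
  have mono : ∀ {M : Matrix (Fin d) (Fin d) ℂ} (hM : M.IsHermitian) (i k : Fin d), r i ≤ r k →
      hM.eigenvalues k ≤ hM.eigenvalues i := fun hM i k h => hM.eigenvalues₀_antitone h
  set U := (hN.eigenvectorUnitary : Matrix (Fin d) (Fin d) ℂ) with hU
  set W := (hD.1.eigenvectorUnitary : Matrix (Fin d) (Fin d) ℂ) with hW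
  let G : Matrix (Fin d) (Fin d) ℂ := fun i k =>
    if r i < r j then (Wᴴ * Y * U) i k else if r j < r i then (1 : Matrix _ _ ℂ) i k else 0
  have hdet : G.det = 0 := Matrix.det_eq_zero_of_row_eq_zero j fun k => by simp [G]
  obtain ⟨c, hc0, hc⟩ := Matrix.exists_mulVec_eq_zero_iff.2 hdet
  have c1 : ∀ i, r j < r i → c i = 0 := by
    intro i hi
    have := congrFun hc i
    have e : (G *ᵥ c) i = ((1 : Matrix _ _ ℂ) *ᵥ c) i := by
      simp only [Matrix.mulVec, dotProduct, G, if_neg hi.not_gt, if_pos hi]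
    rw [e, Matrix.one_mulVec] at this
    simpa using this
  have c2 : ∀ i, r i < r j → (Wᴴ *ᵥ (Y *ᵥ (U *ᵥ c))) i = 0 := by
    intro i hi
    have := congrFun hc i
    have e : (G *ᵥ c) i = ((Wᴴ * Y * U) *ᵥ c) i := by
      simp only [Matrix.mulVec, dotProduct, G, if_pos hi]
    rw [e, ← Matrix.mulVec_mulVec, ← Matrix.mulVec_mulVec] at this
    simpa using this
  have hUc : Uᴴ *ᵥ (U *ᵥ c) = c := by
    rw [Matrix.mulVec_mulVec, ← Matrix.star_eq_conjTranspose, Unitary.star_mul_self_of_mem hN.eigenvectorUnitary.2,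
      Matrix.one_mulVec]
  have h := H μ hμ (U *ᵥ c) (by
    rw [herm_form hD.1, unit_form hD.1.eigenvectorUnitary, Finset.mul_sum]
    refine Finset.sum_le_sum fun i _ => ?_
    rcases lt_or_ge (r i) (r j) with hi | hi
    · rw [← hW, c2 i hi]; simp
    · exact mul_le_mul_of_nonneg_right ((mono hD.1 _ _ hi).trans hlμ) (Complex.normSq_nonneg _))
  have e1 : rdot (Y *ᵥ (U *ᵥ c)) (Y *ᵥ (U *ᵥ c)) =
      ∑ i, hN.eigenvalues i * Complex.normSq (c i) := by
    rw [rdot_mulVec, Matrix.mulVec_mulVec, rdot_comm, herm_form hN, ← hU, hUc]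
  rw [e1, unit_form hN.eigenvectorUnitary, ← hU, hUc] at h
  have e2 : hN.eigenvalues j * ∑ i, Complex.normSq (c i) ≤
      ∑ i, hN.eigenvalues i * Complex.normSq (c i) := by
    rw [Finset.mul_sum]
    refine Finset.sum_le_sum fun i _ => ?_
    rcases lt_or_ge (r j) (r i) with hi | hi
    · rw [c1 i hi]; simp
    · exact mul_le_mul_of_nonneg_right (mono hN _ _ hi) (Complex.normSq_nonneg _)
  have hpos : 0 < ∑ i, Complex.normSq (c i) := by
    obtain ⟨i, hi⟩ := Function.ne_iff.1 hc0
    exact Finset.sum_pos' (fun i _ => Complex.normSq_nonneg _)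
      ⟨i, Finset.mem_univ _, Complex.normSq_pos.2 hi⟩
  exact le_of_mul_le_mul_right (e2.trans h) hpos

/-- From eigenvalue domination to a unitary. -/
lemma exists_unitary {d : ℕ} (X D : Matrix (Fin d) (Fin d) ℂ) (hN : (Xᴴ * X).IsHermitian)
    (hD : D.PosSemidef) (h : ∀ j, hN.eigenvalues j ≤ (hD.1.eigenvalues j) ^ 2) :
    ∃ V : Matrix (Fin d) (Fin d) ℂ, V ∈ Matrix.unitaryGroup (Fin d) ℂ ∧
      loewnerLE (matAbs X) (V * D * Vᴴ) := by
  refine ⟨(hN.eigenvectorUnitary * star hD.1.eigenvectorUnitary :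
    Matrix.unitaryGroup (Fin d) ℂ), Subtype.property _, ?_⟩
  have hDs := hD.1.spectral_theorem
  rw [Unitary.conjStarAlgAut_apply] at hDs
  rw [loewnerLE, matAbs, hN.cfc_eq, Matrix.IsHermitian.cfc, Unitary.conjStarAlgAut_apply]
  have hWW := Unitary.star_mul_self_of_mem hD.1.eigenvectorUnitary.2
  have key : ∀ (U W L D M : Matrix (Fin d) (Fin d) ℂ), star W * W = 1 → D = W * L * star W →
      (U * star W) * D * (U * star W)ᴴ - U * M * star U = U * (L - M) * Uᴴ := by
    intro U W L D M h1 h2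
    rw [h2, ← Matrix.star_eq_conjTranspose, ← Matrix.star_eq_conjTranspose, star_mul, star_star]
    calc _ = U * (star W * W) * L * (star W * W) * star U - U * M * star U := by noncomm_ring
      _ = _ := by rw [h1]; noncomm_ring
  have := key hN.eigenvectorUnitary hD.1.eigenvectorUnitary _ D
    (Matrix.diagonal (RCLike.ofReal ∘ Real.sqrt ∘ hN.eigenvalues)) hWW hDs
  rw [Submonoid.coe_mul, Unitary.coe_star, this]
  refine Matrix.PosSemidef.mul_mul_conjTranspose_same ?_ _
  rw [Matrix.diagonal_sub]
  refine Matrix.PosSemidef.diagonal fun i => ?_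
  have h1 : √(hN.eigenvalues i) ≤ hD.1.eigenvalues i :=
    Real.sqrt_le_iff.2 ⟨hD.eigenvalues_nonneg i, h i⟩
  have h2 : (0 : ℂ) ≤ ((hD.1.eigenvalues i - √(hN.eigenvalues i) : ℝ) : ℂ) := by
    exact_mod_cast sub_nonneg.2 h1
  simpa using h2

/-- The image of the spectral resolution of `A`. -/
lemma exists_povm {n d : ℕ}
    (Φ : Matrix (Fin n) (Fin n) ℂ →ₗ[ℂ] Matrix (Fin d) (Fin d) ℂ)
    (hΦ1 : Φ 1 = 1) (hΦpos : ∀ X : Matrix (Fin n) (Fin n) ℂ, X.PosSemidef → (Φ X).PosSemidef)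
    (A : Matrix (Fin n) (Fin n) ℂ) (hA : A.PosSemidef) :
    ∃ E : Fin n → Matrix (Fin d) (Fin d) ℂ, (∀ i, (E i).PosSemidef) ∧ ∑ i, E i = 1 ∧
      ∀ p : ℝ, Φ (mpow A p) = ∑ i, ((hA.1.eigenvalues i ^ p : ℝ) : ℂ) • E i := by
  set U := hA.1.eigenvectorUnitary with hU
  have hexp : ∀ f : Fin n → ℂ, (U : Matrix (Fin n) (Fin n) ℂ) * Matrix.diagonal f *
      star (U : Matrix (Fin n) (Fin n) ℂ) =
      ∑ i, f i • ((U : Matrix (Fin n) (Fin n) ℂ) * Matrix.diagonal (Pi.single i 1) *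
        (U : Matrix (Fin n) (Fin n) ℂ)ᴴ) := by
    intro f
    have : Matrix.diagonal f = ∑ i, f i • (Matrix.diagonal (Pi.single i 1) :
        Matrix (Fin n) (Fin n) ℂ) := by
      ext a b
      simp only [Matrix.sum_apply, Matrix.smul_apply, Matrix.diagonal_apply, Pi.single_apply]
      by_cases h : a = b <;> simp [h]
    rw [this, Finset.mul_sum, Finset.sum_mul]
    simp [Matrix.star_eq_conjTranspose]
  refine ⟨fun i => Φ ((U : Matrix (Fin n) (Fin n) ℂ) * Matrix.diagonal (Pi.single i 1) *
        (U : Matrix (Fin n) (Fin n) ℂ)ᴴ), fun i => hΦpos _ ?_, ?_, fun p => ?_⟩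
  · refine Matrix.PosSemidef.mul_mul_conjTranspose_same (Matrix.PosSemidef.diagonal ?_) _
    exact Pi.single_nonneg.2 zero_le_one
  · have := hexp (fun _ => 1)
    simp only [one_smul, Matrix.diagonal_one, mul_one, Unitary.mul_star_self_of_mem U.2] at this
    rw [← map_sum, ← this, hΦ1]
  · rw [mpow, hA.1.cfc_eq, Matrix.IsHermitian.cfc, Unitary.conjStarAlgAut_apply, hexp, map_sum]
    simp [Function.comp]

/-- Case `q ≤ p`, in terms of eigenvalues. -/
lemma eig_case {n d : ℕ}
    (Φ : Matrix (Fin n) (Fin n) ℂ →ₗ[ℂ] Matrix (Fin d) (Fin d) ℂ)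
    (hΦ1 : Φ 1 = 1) (hΦpos : ∀ X : Matrix (Fin n) (Fin n) ℂ, X.PosSemidef → (Φ X).PosSemidef)
    (A : Matrix (Fin n) (Fin n) ℂ) (hA : A.PosSemidef)
    (p q : ℝ) (hq : 0 ≤ q) (hqp : q ≤ p) (Y : Matrix (Fin d) (Fin d) ℂ)
    (hY : Y = Φ (mpow A p) * Φ (mpow A q)) (hN : (Yᴴ * Y).IsHermitian)
    (hD : (Φ (mpow A (p + q))).PosSemidef) (j : Fin d) :
    hN.eigenvalues j ≤ (hD.1.eigenvalues j) ^ 2 := by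
  obtain ⟨E, hE, hsum, hf⟩ := exists_povm Φ hΦ1 hΦpos A hA
  obtain ⟨θ, h2, h1, hp', hq'⟩ : ∃ θ : ℝ, 1 / 2 ≤ θ ∧ θ ≤ 1 ∧ (p + q) * θ = p ∧
      (p + q) * (1 - θ) = q := by
    rcases (by linarith : 0 ≤ p + q).eq_or_lt with h | h
    · exact ⟨1 / 2, le_rfl, by norm_num, by linarith, by linarith⟩
    · refine ⟨p / (p + q), ?_, ?_, ?_, ?_⟩
      · rw [div_le_div_iff₀ two_pos h]; linarith
      · rw [div_le_one h]; linarith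
      · field_simp
      · field_simp; ring
  refine eig_le Y _ hN hD (fun μ hμ v hv => ?_) j
  have ha := fun i => hA.eigenvalues_nonneg i
  rw [hf] at hv
  refine core E hE hsum (fun i => hA.1.eigenvalues i ^ (p + q))
    (fun i => Real.rpow_nonneg (ha i) _) θ h2 h1 μ hμ v _ ?_ hv
  simp only [← fun i x => Real.rpow_mul (ha i) (p + q) x, hp', hq']
  rw [hY, ← Matrix.mulVec_mulVec, hf, hf]

/-- For a unital positive linear map `Φ`, `A ≥ 0` and `p, q ≥ 0`, there is a unitary `V` with
`|Φ(A^p) Φ(A^q)| ≤ V Φ(A^{p+q}) V*`. -/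
theorem asymmetric_kadison_unitary {n d : ℕ}
    (Φ : Matrix (Fin n) (Fin n) ℂ →ₗ[ℂ] Matrix (Fin d) (Fin d) ℂ)
    (hΦ1 : Φ 1 = 1) (hΦpos : ∀ X : Matrix (Fin n) (Fin n) ℂ, X.PosSemidef → (Φ X).PosSemidef)
    (A : Matrix (Fin n) (Fin n) ℂ) (hA : A.PosSemidef)
    (p q : ℝ) (hp : 0 ≤ p) (hq : 0 ≤ q) :
    ∃ V : Matrix (Fin d) (Fin d) ℂ, V ∈ Matrix.unitaryGroup (Fin d) ℂ ∧
      loewnerLE (matAbs (Φ (mpow A p) * Φ (mpow A q))) (V * Φ (mpow A (p + q)) * Vᴴ) := by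
  have hpsd : ∀ t : ℝ, (Φ (mpow A t)).PosSemidef := by
    obtain ⟨E, hE, hsum, hf⟩ := exists_povm Φ hΦ1 hΦpos A hA
    intro t
    rw [hf]
    exact wsum_psd E hE _ fun i => Real.rpow_nonneg (hA.eigenvalues_nonneg i) _
  have hN := Matrix.isHermitian_conjTranspose_mul_self (Φ (mpow A p) * Φ (mpow A q))
  refine exists_unitary _ _ hN (hpsd (p + q)) fun j => ?_
  rcases le_total q p with h | h
  · exact eig_case Φ hΦ1 hΦpos A hA p q hq h _ rfl hN (hpsd _) j
  · have hX : Φ (mpow A q) * Φ (mpow A p) = (Φ (mpow A p) * Φ (mpow A q))ᴴ := by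
      rw [Matrix.conjTranspose_mul, (hpsd p).1.eq, (hpsd q).1.eq]
    have hN' := Matrix.isHermitian_conjTranspose_mul_self (Φ (mpow A q) * Φ (mpow A p))
    have hD' := hpsd (q + p)
    have key := eig_case Φ hΦ1 hΦpos A hA q p hp h _ rfl hN' hD' j
    have e1 : hN'.eigenvalues = hN.eigenvalues := by
      rw [Matrix.IsHermitian.eigenvalues_eq_eigenvalues_iff, hX,
        Matrix.conjTranspose_conjTranspose, Matrix.charpoly_mul_comm]
    have e2 : hD'.1.eigenvalues = (hpsd (p + q)).1.eigenvalues := by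
      rw [Matrix.IsHermitian.eigenvalues_eq_eigenvalues_iff, add_comm]
    rwa [e1, e2] at key
end

section
/- Let Φ : Mₙ(ℂ) → M_d(ℂ) be a unital positive linear map, A positive semidefinite, and p, q, r ≥ 0 with min{p,r} ≤ q/2 and max{p,r} ≤ q. Then there exists a unitary V ∈ M_d(ℂ) such that |Φ(A^p)Φ(A^q)Φ(A^r)| ≤ V Φ(A^{p+q+r}) V*. -/
open scoped Matrix ComplexOrder

section core
variable {A : Type*} [CStarAlgebra A] [PartialOrder A] [StarOrderedRing A]

lemma tp_sp_rpow {a : A} (ha : IsStrictlyPositive a) (t : ℝ) : IsStrictlyPositive (a ^ t) :=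
  (ha.isUnit.cfcRpow t ha.nonneg).isStrictlyPositive CFC.rpow_nonneg

lemma tp_conj_rpow {a : A} (ha : IsStrictlyPositive a) (u : unitary A) (t : ℝ) :
    (u : A) * a ^ t * star (u : A) = ((u : A) * a * star (u : A)) ^ t := by
  have h0 : 0 ≤ (u : A) * a * star (u : A) := star_right_conjugate_nonneg ha.nonneg _
  have ha0 := ha.nonneg
  have hc : Continuous (Unitary.conjStarAlgAut ℝ A u) := by
    change Continuous (fun x => (u : A) * x * star (u : A))
    fun_prop
  have := StarAlgHomClass.map_cfc (S := ℝ) (Unitary.conjStarAlgAut ℝ A u) (fun x : ℝ => x ^ t) a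
    (hf := by
      intro x hx
      exact (Real.continuousAt_rpow_const x t (Or.inl (ha.spectrum_pos hx).ne')).continuousWithinAt)
    (hφ := hc) (ha := ha.isSelfAdjoint) (hφa := h0.isSelfAdjoint)
  rw [← CFC.rpow_eq_cfc_real, Unitary.conjStarAlgAut_apply, Unitary.conjStarAlgAut_apply,
    ← CFC.rpow_eq_cfc_real] at this
  exact this

lemma tp_polar {z : A} (hz : IsUnit z) :
    ∃ u : unitary A, z = u * (star z * z) ^ (1/2 : ℝ) ∧
      ∀ t : ℝ, (u : A) * (star z * z) ^ t * star (u : A) = (z * star z) ^ t := by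
  have hp : IsStrictlyPositive (star z * z) :=
    (hz.star.mul hz).isStrictlyPositive (star_mul_self_nonneg z)
  set h := star z * z with hh
  have h1 : h ^ (-(1/2) : ℝ) * h * h ^ (-(1/2) : ℝ) = 1 := by
    conv_lhs => enter [1, 2]; rw [← CFC.rpow_one h hp.nonneg]
    rw [← CFC.rpow_add hp.isUnit, ← CFC.rpow_add hp.isUnit]
    norm_num
    exact CFC.rpow_zero h hp.nonneg
  have hsa : star (h ^ (-(1/2) : ℝ)) = h ^ (-(1/2) : ℝ) := CFC.rpow_nonneg.isSelfAdjoint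
  have hw1 : star (z * h ^ (-(1/2) : ℝ)) * (z * h ^ (-(1/2) : ℝ)) = 1 := by
    rw [star_mul, hsa]
    simpa [mul_assoc, hh] using h1
  have hwu : IsUnit (z * h ^ (-(1/2) : ℝ)) := hz.mul (tp_sp_rpow hp _).isUnit
  have hw2 : (z * h ^ (-(1/2) : ℝ)) * star (z * h ^ (-(1/2) : ℝ)) = 1 := by
    obtain ⟨v, hv⟩ := hwu
    rw [← hv] at hw1 ⊢
    have : star (v : A) = ((v⁻¹ : Aˣ) : A) := by
      rw [← mul_one (star (v : A)), ← v.mul_inv, ← mul_assoc, hw1, one_mul]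
    rw [this, v.mul_inv]
  refine ⟨⟨z * h ^ (-(1/2) : ℝ), hw1, hw2⟩, ?_, ?_⟩
  · simp only [mul_assoc]
    rw [CFC.rpow_neg_mul_rpow _ hp, mul_one]
  · intro t
    rw [tp_conj_rpow hp]
    congr 1
    simp only [star_mul, hsa]
    have : h ^ (-(1/2) : ℝ) * h * h ^ (-(1/2) : ℝ) = 1 := h1
    calc z * h ^ (-(1/2) : ℝ) * h * (h ^ (-(1/2) : ℝ) * star z)
        = z * (h ^ (-(1/2) : ℝ) * h * h ^ (-(1/2) : ℝ)) * star z := by simp only [mul_assoc]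
      _ = _ := by rw [h1, mul_one]

lemma tp_rpow_star {z : A} (hz : IsUnit z) (t : ℝ) :
    (star z * z) ^ t = star z * (z * star z) ^ (t - 1) * z := by
  have hp : IsStrictlyPositive (star z * z) :=
    (hz.star.mul hz).isStrictlyPositive (star_mul_self_nonneg z)
  obtain ⟨u, hu, hc⟩ := tp_polar hz
  rw [← hc]
  set h := star z * z with hh
  have hsa : star (h ^ ((1/2) : ℝ)) = h ^ ((1/2) : ℝ) := CFC.rpow_nonneg.isSelfAdjoint
  have e1 : star (u : A) * z = h ^ (1/2 : ℝ) := by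
    conv_lhs => rw [hu]
    rw [← mul_assoc, Unitary.coe_star_mul_self, one_mul]
  have e2 : star z * (u : A) = h ^ (1/2 : ℝ) := by
    rw [← hsa, ← e1, star_mul, star_star]
  calc h ^ t = h ^ (1/2 : ℝ) * h ^ (t - 1) * h ^ (1/2 : ℝ) := by
        rw [← CFC.rpow_add hp.isUnit, ← CFC.rpow_add hp.isUnit]; congr 1; ring
    _ = _ := by rw [← e1]; nth_rewrite 1 [e1]; rw [← e2]; simp only [mul_assoc]

lemma tp_rpow_anti {a b : A} (ha : IsStrictlyPositive a) (hab : a ≤ b) {t : ℝ} (h0 : 0 ≤ t)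
    (h1 : t ≤ 1) : b ^ (-t) ≤ a ^ (-t) := by
  have hb := ha.of_le hab
  have h := CFC.rpow_le_rpow ⟨h0, h1⟩ hab
  rcases h0.eq_or_lt with rfl | h0
  · simp [CFC.rpow_zero a ha.nonneg, CFC.rpow_zero b hb.nonneg]
  have := CStarAlgebra.rpow_neg_one_le_rpow_neg_one h (tp_sp_rpow ha t)
  rw [CFC.rpow_rpow _ _ _ h0.ne' ha, CFC.rpow_rpow _ _ _ h0.ne' hb] at this
  simpa using this

lemma tp_conj_sa {a b c : A} (hab : a ≤ b) (hc : 0 ≤ c) : c * a * c ≤ c * b * c :=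
  conjugate_le_conjugate_of_nonneg hab hc

lemma tp_furuta {b c : A} (hb : IsStrictlyPositive b) (hbc : b ≤ c) {P ρ : ℝ} (hP : 1 ≤ P)
    (h0 : 0 ≤ ρ) (h1 : ρ ≤ 1) :
    (c ^ (ρ/2) * b ^ P * c ^ (ρ/2)) ^ ((1 + ρ)/(P + ρ)) ≤ c ^ (1 + ρ) := by
  have hc := hb.of_le hbc
  have hPρ : 0 < P + ρ := by linarith
  have hsb : star (b ^ (P/2)) = b ^ (P/2) := CFC.rpow_nonneg.isSelfAdjoint
  have hsc : star (c ^ (ρ/2)) = c ^ (ρ/2) := CFC.rpow_nonneg.isSelfAdjoint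
  set z := b ^ (P/2) * c ^ (ρ/2) with hz
  have hzu : IsUnit z := (tp_sp_rpow hb _).isUnit.mul (tp_sp_rpow hc _).isUnit
  have hszz : star z * z = c ^ (ρ/2) * b ^ P * c ^ (ρ/2) := by
    have : b ^ P = b ^ (P/2) * b ^ (P/2) := by rw [← CFC.rpow_add hb.isUnit, add_halves]
    rw [hz, star_mul, hsb, hsc, this]; simp only [mul_assoc]
  have hzz : z * star z = b ^ (P/2) * c ^ ρ * b ^ (P/2) := by
    have : c ^ ρ = c ^ (ρ/2) * c ^ (ρ/2) := by rw [← CFC.rpow_add hc.isUnit, add_halves]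
    rw [hz, star_mul, hsb, hsc, this]; simp only [mul_assoc]
  have hle : b ^ (P + ρ) ≤ z * star z := by
    have : b ^ (P + ρ) = b ^ (P/2) * b ^ ρ * b ^ (P/2) := by
      rw [← CFC.rpow_add hb.isUnit, ← CFC.rpow_add hb.isUnit]; congr 1; ring
    rw [this, hzz]
    exact tp_conj_sa (CFC.rpow_le_rpow ⟨h0, h1⟩ hbc) CFC.rpow_nonneg
  have hanti := tp_rpow_anti (tp_sp_rpow hb _) hle (t := (P - 1)/(P + ρ))
    (by apply div_nonneg <;> linarith) (by rw [div_le_one hPρ]; linarith)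
  rw [CFC.rpow_rpow _ _ _ hPρ.ne' hb] at hanti
  rw [← hszz, tp_rpow_star hzu]
  have e : (1 + ρ)/(P + ρ) - 1 = -((P - 1)/(P + ρ)) := by field_simp; ring
  rw [e]
  refine (star_left_conjugate_le_conjugate hanti z).trans ?_
  have e2 : star z * b ^ ((P + ρ) * -((P - 1)/(P + ρ))) * z = c ^ (ρ/2) * b * c ^ (ρ/2) := by
    have : (P + ρ) * -((P - 1)/(P + ρ)) = 1 - P := by field_simp; ring
    rw [this, hz, star_mul, hsb, hsc]
    have : b ^ (P/2) * b ^ (1 - P) * b ^ (P/2) = b := by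
      rw [← CFC.rpow_add hb.isUnit, ← CFC.rpow_add hb.isUnit]
      conv_rhs => rw [← CFC.rpow_one b hb.nonneg]
      congr 1; ring
    conv_rhs => rw [← this]
    simp only [mul_assoc]
  rw [e2]
  refine (tp_conj_sa hbc CFC.rpow_nonneg).trans (le_of_eq ?_)
  conv_lhs => enter [1, 2]; rw [← CFC.rpow_one c hc.nonneg]
  rw [← CFC.rpow_add hc.isUnit, ← CFC.rpow_add hc.isUnit]; congr 1; ring

lemma tp_furuta2 {b c : A} (hb : IsStrictlyPositive b) (hbc : b ≤ c) {P ρ : ℝ} (hP : 1 ≤ P)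
    (h0 : 0 ≤ ρ) (h1 : ρ ≤ 2) :
    (c ^ (ρ/2) * b ^ P * c ^ (ρ/2)) ^ ((1 + ρ)/(P + ρ)) ≤ c ^ (1 + ρ) := by
  have hc := hb.of_le hbc
  have F1 := tp_furuta hb hbc hP (ρ := ρ/2) (by linarith) (by linarith)
  set d0 := c ^ (ρ/2/2) * b ^ P * c ^ (ρ/2/2) with hd0
  have hd0p : IsStrictlyPositive d0 :=
    (((tp_sp_rpow hc _).isUnit.mul (tp_sp_rpow hb _).isUnit).mul
      (tp_sp_rpow hc _).isUnit).isStrictlyPositive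
      (conjugate_nonneg_of_nonneg CFC.rpow_nonneg CFC.rpow_nonneg)
  have k0 : 0 < 1 + ρ/2 := by linarith
  have k1 : 0 < P + ρ/2 := by linarith
  have k2 : 0 < P + ρ := by linarith
  have k3 : 0 < 1 + ρ := by linarith
  have k4 : 0 < 2 + ρ := by linarith
  have k5 : 0 < P * 2 + ρ := by linarith
  have F2 := tp_furuta (tp_sp_rpow hd0p ((1 + ρ/2)/(P + ρ/2))) F1 (P := (P + ρ/2)/(1 + ρ/2))
    (ρ := (ρ/2)/(1 + ρ/2)) (by rw [le_div_iff₀ k0]; linarith) (by positivity)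
    (by rw [div_le_one k0]; linarith)
  rw [CFC.rpow_rpow _ _ _ (by positivity) hd0p, CFC.rpow_rpow _ _ _ (by positivity) hc,
    CFC.rpow_rpow _ _ _ (by positivity) hc] at F2
  have e1 : (1 + ρ/2)/(P + ρ/2) * ((P + ρ/2)/(1 + ρ/2)) = 1 := by field_simp
  have e2 : (1 + ρ/2) * (ρ/2/(1 + ρ/2)/2) = ρ/2/2 := by field_simp
  have e3 : (1 + ρ/2) * (1 + ρ/2/(1 + ρ/2)) = 1 + ρ := by field_simp; ring
  have e4 : (1 + ρ/2/(1 + ρ/2))/((P + ρ/2)/(1 + ρ/2) + ρ/2/(1 + ρ/2)) = (1 + ρ)/(P + ρ) := by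
    have a1 : 1 + ρ/2/(1 + ρ/2) = (1 + ρ)/(1 + ρ/2) := by field_simp; ring
    have a2 : (P + ρ/2)/(1 + ρ/2) + ρ/2/(1 + ρ/2) = (P + ρ)/(1 + ρ/2) := by field_simp; ring
    rw [a1, a2, div_div_div_cancel_right₀ k0.ne']
  rw [e1, e2, e3, e4, CFC.rpow_one d0 hd0p.nonneg] at F2
  have e5 : c ^ (ρ/2/2) * d0 * c ^ (ρ/2/2) = c ^ (ρ/2) * b ^ P * c ^ (ρ/2) := by
    have : c ^ (ρ/2) = c ^ (ρ/2/2) * c ^ (ρ/2/2) := by rw [← CFC.rpow_add hc.isUnit, add_halves]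
    rw [hd0, this]; simp only [mul_assoc]
  rwa [e5] at F2

variable {ι : Type*} [Fintype ι]

lemma tp_choi {E : ι → A} (hE : ∀ i, 0 ≤ E i) (hsum : ∑ i, E i = 1) {w : ι → ℝ}
    (hw : ∀ i, 0 < w i) (hZ : IsStrictlyPositive (∑ i, w i • E i)) :
    Ring.inverse (∑ i, w i • E i) ≤ ∑ i, (w i)⁻¹ • E i := by
  set Z := ∑ i, w i • E i with hZd
  set Y := Ring.inverse Z with hY
  have hYs : star Y = Y := by
    rw [hY, ← Ring.inverse_star, hZ.isSelfAdjoint.star_eq]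
  have hZY : Z * Y = 1 := Ring.mul_inverse_cancel _ hZ.isUnit
  have h : 0 ≤ ∑ i, (w i)⁻¹ • (star (1 - w i • Y) * E i * (1 - w i • Y)) :=
    Finset.sum_nonneg fun i _ => smul_nonneg (inv_nonneg.2 (hw i).le)
      (star_left_conjugate_nonneg (hE i) _)
  have e : ∀ i, (w i)⁻¹ • (star (1 - w i • Y) * E i * (1 - w i • Y)) =
      (w i)⁻¹ • E i - Y * E i - E i * Y + Y * (w i • E i) * Y := by
    intro i
    have := (hw i).ne'
    simp only [star_sub, star_one, star_smul, hYs, star_trivial, sub_mul, mul_sub, one_mul,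
      mul_one, smul_mul_assoc, mul_smul_comm, smul_sub, smul_smul]
    rw [inv_mul_cancel₀ this, one_smul, one_smul, ← mul_assoc, inv_mul_cancel₀ this, one_mul]
    abel
  simp only [e, Finset.sum_add_distrib, Finset.sum_sub_distrib, ← Finset.mul_sum,
    ← Finset.sum_mul, hsum, ← hZd] at h
  rw [mul_assoc, hZY] at h
  simpa using h

lemma tp_kadison {E : ι → A} (hE : ∀ i, 0 ≤ E i) (hsum : ∑ i, E i = 1) (w : ι → ℝ) :
    (∑ i, w i • E i) * (∑ i, w i • E i) ≤ ∑ i, (w i * w i) • E i := by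
  set Z := ∑ i, w i • E i with hZd
  have hZs : star Z = Z := by
    rw [hZd, star_sum]
    exact Finset.sum_congr rfl fun i _ => by
      rw [star_smul, (hE i).isSelfAdjoint.star_eq, star_trivial]
  have h : 0 ≤ ∑ i, (star (w i • (1 : A) - Z) * E i * (w i • (1 : A) - Z)) :=
    Finset.sum_nonneg fun i _ => (star_left_conjugate_nonneg (hE i) _)
  have e : ∀ i, (star (w i • (1 : A) - Z) * E i * (w i • (1 : A) - Z)) =
      (w i * w i) • E i - Z * (w i • E i) - (w i • E i) * Z + Z * E i * Z := by
    intro i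
    simp only [star_sub, star_one, star_smul, hZs, star_trivial, sub_mul, mul_sub, one_mul,
      mul_one, smul_mul_assoc, mul_smul_comm, smul_sub, smul_smul]
    abel
  simp only [e, Finset.sum_add_distrib, Finset.sum_sub_distrib, ← Finset.mul_sum,
    ← Finset.sum_mul, hsum, ← hZd] at h
  simpa using h

set_option maxHeartbeats 1000000 in
open CFC Real in
lemma tp_cfc_integrand {x : A} (hZ : 0 ≤ x) {p t : ℝ} (hp : p ∈ Set.Ioo 0 1) (ht : 0 < t) :
    cfcₙ (rpowIntegrand₀₁ p t) x =
      algebraMap ℝ A (t ^ (p - 1)) - t ^ p • Ring.inverse (algebraMap ℝ A t + x) := by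
  have hspectrum :  ∀ r ∈ spectrum ℝ x, t + r ≠ 0 := fun r hr => by
    have := spectrum_nonneg_of_nonneg hZ hr
    positivity
  have hg : ContinuousOn (fun z : ℝ => (t + z)⁻¹) (spectrum ℝ x) := by
    apply ContinuousOn.inv₀ (by fun_prop) hspectrum
  rw [cfcₙ_eq_cfc (hf0 := by simp)
    (hf := by
      rw [rpowIntegrand₀₁_eq_sub (by grind) ht]
      have hq : quasispectrum ℝ x ⊆ Set.Ici 0 := fun r hr =>
        quasispectrum_nonneg_of_nonneg x hZ r hr
      refine ContinuousOn.sub (by fun_prop) (ContinuousOn.mul (by fun_prop) ?_)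
      refine ContinuousOn.inv₀ (by fun_prop) fun r hr => ?_
      have : 0 ≤ r := hq hr
      positivity)]
  rw [rpowIntegrand₀₁_eq_sub (by grind) ht]
  have := cfc_sub (fun _ : ℝ => t ^ (p - 1)) (fun z : ℝ => t ^ p * (t + z)⁻¹) x
    (by fun_prop) (hg.const_mul _)
  have e1 : cfc (fun z : ℝ => t ^ p * (t + z)⁻¹) x = t ^ p • cfc (fun z : ℝ => (t + z)⁻¹) x :=
    cfc_const_mul _ _ _ hg
  have hf : ContinuousOn (fun z : ℝ => t + z) (spectrum ℝ x) := by fun_prop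
  have e2 : cfc (fun z : ℝ => (t + z)⁻¹) x = Ring.inverse (cfc (fun z : ℝ => t + z) x) :=
    cfc_inv _ _ hspectrum hf hZ.isSelfAdjoint
  have e3 : cfc (fun z : ℝ => t + z) x = algebraMap ℝ A t + x := by
    rw [cfc_const_add t (fun z => z) x continuousOn_id hZ.isSelfAdjoint,
      cfc_id' ℝ x hZ.isSelfAdjoint]
  rw [this, e1, e2, e3, cfc_const _ _ hZ.isSelfAdjoint]

open CFC Real in
lemma tp_integrand {E : ι → A} (hE : ∀ i, 0 ≤ E i) (hsum : ∑ i, E i = 1) {l : ι → ℝ}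
    (hl : ∀ i, 0 ≤ l i) {p t : ℝ} (hp : p ∈ Set.Ioo 0 1) (ht : 0 < t) :
    ∑ i, rpowIntegrand₀₁ p t (l i) • E i ≤ cfcₙ (rpowIntegrand₀₁ p t) (∑ i, l i • E i) := by
  have hZ : 0 ≤ ∑ i, l i • E i := Finset.sum_nonneg fun i _ => smul_nonneg (hl i) (hE i)
  set x := ∑ i, l i • E i with hx
  have key := tp_cfc_integrand hZ hp ht
  have hs : algebraMap ℝ A t + x = ∑ i, (t + l i) • E i := by
    simp only [add_smul, Finset.sum_add_distrib, ← Finset.smul_sum, hsum, ← hx]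
    rw [Algebra.algebraMap_eq_smul_one]
  have hsp : IsStrictlyPositive (∑ i, (t + l i) • E i) := by
    rw [← hs]
    exact (isStrictlyPositive_algebraMap ht).add_nonneg hZ
  have hch := tp_choi hE hsum (w := fun i => t + l i) (fun i => by have := hl i; positivity) hsp
  rw [key, hs, rpowIntegrand₀₁_eq_sub (by grind) ht]
  simp only [sub_smul, Finset.sum_sub_distrib, ← Finset.smul_sum, hsum, mul_smul]
  rw [Algebra.algebraMap_eq_smul_one]
  gcongr

open CFC Real MeasureTheory in
lemma tp_jensen {E : ι → A} (hE : ∀ i, 0 ≤ E i) (hsum : ∑ i, E i = 1) {l : ι → ℝ}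
    (hl : ∀ i, 0 ≤ l i) {p : ℝ} (hp0 : 0 ≤ p) (hp1 : p ≤ 1) :
    ∑ i, (l i ^ p) • E i ≤ (∑ i, l i • E i) ^ p := by
  have hZ : 0 ≤ ∑ i, l i • E i := Finset.sum_nonneg fun i _ => smul_nonneg (hl i) (hE i)
  rcases hp0.eq_or_lt with rfl | hp0
  · simp [hsum, CFC.rpow_zero _ hZ]
  rcases hp1.eq_or_lt with rfl | hp1
  · simp [CFC.rpow_one _ hZ]
  lift p to NNReal using hp0.le
  have hp : p ∈ Set.Ioo 0 1 := ⟨by exact_mod_cast hp0, by exact_mod_cast hp1⟩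
  have hp' : (p : ℝ) ∈ Set.Ioo 0 1 := ⟨hp0, hp1⟩
  obtain ⟨μ, hμ⟩ := CFC.exists_measure_nnrpow_eq_integral_cfcₙ_rpowIntegrand₀₁ A hp
  have hsc : ∀ i, 0 ≤ algebraMap ℝ A (l i) := fun i => algebraMap_nonneg _ (hl i)
  have hpp : 0 < p := hp.1
  rw [← CFC.nnrpow_eq_rpow hpp, (hμ _ hZ).2]
  have hint : ∀ i, IntegrableOn
      (fun t => cfcₙ (rpowIntegrand₀₁ p t) (algebraMap ℝ A (l i)) * E i) (Set.Ioi 0) μ :=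
    fun i => (hμ _ (hsc i)).1.mul_const _
  have e : ∀ i, (l i ^ (p : ℝ)) • E i =
      ∫ t in Set.Ioi 0, cfcₙ (rpowIntegrand₀₁ p t) (algebraMap ℝ A (l i)) * E i ∂μ := by
    intro i
    rw [integral_mul_const_of_integrable (hμ _ (hsc i)).1, ← (hμ _ (hsc i)).2,
      CFC.nnrpow_eq_rpow hpp, CFC.rpow_eq_cfc_real (hsc i), cfc_algebraMap,
      Algebra.smul_def]
  simp only [e]
  rw [← integral_finsetSum _ fun i _ => hint i]
  refine integral_mono_ae (integrable_finsetSum _ fun i _ => hint i) (hμ _ hZ).1 ?_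
  filter_upwards [ae_restrict_mem measurableSet_Ioi] with t ht
  have := tp_integrand hE hsum hl hp' ht
  refine le_trans (le_of_eq ?_) this
  refine Finset.sum_congr rfl fun i _ => ?_
  have hc : ContinuousOn (rpowIntegrand₀₁ p t) (Set.Ici 0) := by
    rw [rpowIntegrand₀₁_eq_sub (by grind) ht]
    refine ContinuousOn.sub (by fun_prop) (ContinuousOn.mul (by fun_prop) ?_)
    refine ContinuousOn.inv₀ (by fun_prop) fun r (hr : 0 ≤ r) => ?_
    have : 0 < t := ht
    positivity
  rw [cfcₙ_eq_cfc (hf0 := by simp)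
      (hf := hc.mono fun r hr => quasispectrum_nonneg_of_nonneg _ (hsc i) r hr), cfc_algebraMap,
      Algebra.smul_def]

lemma tp_X_pos {E : ι → A} (hE : ∀ i, 0 ≤ E i) (hsum : ∑ i, E i = 1) {l : ι → ℝ} {ε : ℝ}
    (hε : 0 < ε) (hl : ∀ i, ε ≤ l i) {u : ℝ} (hu : 0 ≤ u) :
    IsStrictlyPositive (∑ i, (l i ^ u) • E i) := by
  refine IsStrictlyPositive.of_le (a := algebraMap ℝ A (ε ^ u))
    (isStrictlyPositive_algebraMap (by positivity)) ?_
  rw [Algebra.algebraMap_eq_smul_one, ← hsum, Finset.smul_sum]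
  refine Finset.sum_le_sum fun i _ => smul_le_smul_of_nonneg_right ?_ (hE i)
  exact Real.rpow_le_rpow hε.le (hl i) hu

lemma tp_X_jensen {E : ι → A} (hE : ∀ i, 0 ≤ E i) (hsum : ∑ i, E i = 1) {l : ι → ℝ}
    (hl : ∀ i, 0 ≤ l i) {u v : ℝ} (hu : 0 ≤ u) (huv : u ≤ v) (hv : 0 < v) :
    ∑ i, (l i ^ u) • E i ≤ (∑ i, (l i ^ v) • E i) ^ (u / v) := by
  have := tp_jensen hE hsum (l := fun i => l i ^ v) (fun i => Real.rpow_nonneg (hl i) _)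
    (p := u / v) (by positivity) (by rwa [div_le_one hv])
  refine le_trans (le_of_eq ?_) this
  refine Finset.sum_congr rfl fun i _ => ?_
  rw [← Real.rpow_mul (hl i), mul_div_cancel₀ _ hv.ne']

lemma tp_X_kadison {E : ι → A} (hE : ∀ i, 0 ≤ E i) (hsum : ∑ i, E i = 1) {l : ι → ℝ}
    (hl : ∀ i, 0 < l i) (u : ℝ) :
    (∑ i, (l i ^ u) • E i) * (∑ i, (l i ^ u) • E i) ≤ ∑ i, (l i ^ (2 * u)) • E i := by
  refine (tp_kadison hE hsum (fun i => l i ^ u)).trans (le_of_eq ?_)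
  refine Finset.sum_congr rfl fun i _ => ?_
  rw [← Real.rpow_add (hl i), two_mul]

lemma tp_core_le {E : ι → A} (hE : ∀ i, 0 ≤ E i) (hsum : ∑ i, E i = 1) {l : ι → ℝ} {ε : ℝ}
    (hε : 0 < ε) (hl : ∀ i, ε ≤ l i) {p q r : ℝ} (hq : 0 < q) (hr : 0 ≤ r) (hrp : r ≤ p)
    (hrq : r ≤ q / 2) (hpq : p ≤ q) (X : ℝ → A) (hX : X = fun u => ∑ i, (l i ^ u) • E i) :
    ∃ V : unitary A, (star (X p * X q * X r) * (X p * X q * X r)) ^ (1/2 : ℝ)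
      ≤ V * X (p + q + r) * star (V : A) := by
  have hl0 : ∀ i, 0 < l i := fun i => hε.trans_le (hl i)
  have hp : 0 ≤ p := hr.trans hrp
  have Xpos : ∀ u, 0 ≤ u → IsStrictlyPositive (X u) := fun u hu => by
    rw [hX]; exact tp_X_pos hE hsum hε hl hu
  have XJ : ∀ u v, 0 ≤ u → u ≤ v → 0 < v → X u ≤ X v ^ (u / v) := fun u v hu huv hv => by
    rw [hX]; exact tp_X_jensen hE hsum (fun i => (hl0 i).le) hu huv hv
  have XK : ∀ u, X u * X u ≤ X (2 * u) := fun u => by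
    rw [hX]; exact tp_X_kadison hE hsum hl0 u
  clear hX
  have hs : 0 < p + q + r := by linarith
  set s := p + q + r with hsdef
  have hXp := Xpos p hp
  have hXq := Xpos q hq.le
  have hXr := Xpos r hr
  have hY := Xpos s hs.le
  have sp := hXp.isSelfAdjoint.star_eq
  have sq := hXq.isSelfAdjoint.star_eq
  have sr := hXr.isSelfAdjoint.star_eq
  set Y := X s
  have hYp := tp_sp_rpow hY (p / s)
  have sY := hYp.isSelfAdjoint.star_eq
  set S := Y ^ (p / s) * X q * X r with hS
  have hSu : IsUnit S := (hYp.isUnit.mul hXq.isUnit).mul hXr.isUnit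
  have h1 : star (X p * X q * X r) * (X p * X q * X r) ≤ star S * S := by
    have hpp : X p * X p ≤ Y ^ (p / s) * Y ^ (p / s) := by
      refine (XK p).trans ((XJ (2 * p) s (by linarith) (by linarith) hs).trans (le_of_eq ?_))
      rw [← CFC.rpow_add hY.isUnit]; congr 1; ring
    have := star_left_conjugate_le_conjugate hpp (X q * X r)
    have e1 : star (X p * X q * X r) * (X p * X q * X r) =
        star (X q * X r) * (X p * X p) * (X q * X r) := by
      simp only [star_mul, sp, sq, sr, mul_assoc]
    have e2 : star S * S =
        star (X q * X r) * (Y ^ (p / s) * Y ^ (p / s)) * (X q * X r) := by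
      simp only [hS, star_mul, sY, sq, sr, mul_assoc]
    rw [e1, e2]; exact this
  have h2 : S * star S ≤ Y ^ (p / s) * X q ^ (2 + 2 * r / q) * Y ^ (p / s) := by
    have hrr : X r * X r ≤ X q ^ (2 * r / q) :=
      (XK r).trans (XJ (2 * r) q (by linarith) (by linarith) hq)
    have := tp_conj_sa (tp_conj_sa hrr hXq.nonneg) hYp.nonneg
    have e1 : S * star S = Y ^ (p / s) * (X q * (X r * X r) * X q) * Y ^ (p / s) := by
      simp only [hS, star_mul, sY, sq, sr, mul_assoc]
    have e2 : X q ^ (2 + 2 * r / q) = X q * X q ^ (2 * r / q) * X q := by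
      conv_rhs => enter [1, 1]; rw [← CFC.rpow_one (X q) hXq.nonneg]
      conv_rhs => enter [2]; rw [← CFC.rpow_one (X q) hXq.nonneg]
      rw [← CFC.rpow_add hXq.isUnit, ← CFC.rpow_add hXq.isUnit]; congr 1; ring
    rw [e1, e2]; exact this
  have hqs : 0 < q / s := by positivity
  have h3 := tp_furuta2 hXq (XJ q s hq.le (by linarith) hs) (P := 2 + 2 * r / q) (ρ := 2 * p / q)
    (by have : 0 ≤ 2 * r / q := by positivity
        linarith) (by positivity) (by rw [div_le_iff₀ hq]; linarith)
  rw [CFC.rpow_rpow _ _ _ hqs.ne' hY, CFC.rpow_rpow _ _ _ hqs.ne' hY] at h3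
  have e1 : q / s * (2 * p / q / 2) = p / s := by field_simp
  have e2 : q / s * (1 + 2 * p / q) = (q + 2 * p) / s := by field_simp
  have e3 : (1 + 2 * p / q) / (2 + 2 * r / q + 2 * p / q) = (q + 2 * p) / (2 * s) := by
    have a1 : 1 + 2 * p / q = (q + 2 * p) / q := by field_simp
    have a2 : 2 + 2 * r / q + 2 * p / q = 2 * s / q := by rw [hsdef]; field_simp; ring
    rw [a1, a2, div_div_div_cancel_right₀ hq.ne']
  rw [e1, e2, e3] at h3
  set G := Y ^ (p / s) * X q ^ (2 + 2 * r / q) * Y ^ (p / s) with hG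
  have hGp : IsStrictlyPositive G :=
    ((hYp.isUnit.mul (tp_sp_rpow hXq _).isUnit).mul hYp.isUnit).isStrictlyPositive
      (conjugate_nonneg_of_nonneg CFC.rpow_nonneg CFC.rpow_nonneg)
  have hqp : 0 < q + 2 * p := by linarith
  have h4 := CFC.rpow_le_rpow (p := s / (q + 2 * p))
    ⟨by positivity, by rw [div_le_one hqp]; linarith⟩ h3
  rw [CFC.rpow_rpow _ _ _ (by positivity) hGp, CFC.rpow_rpow _ _ _ (by positivity) hY] at h4
  have e4 : (q + 2 * p) / (2 * s) * (s / (q + 2 * p)) = 1/2 := by field_simp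
  have e5 : (q + 2 * p) / s * (s / (q + 2 * p)) = 1 := by field_simp
  rw [e4, e5, CFC.rpow_one Y hY.nonneg] at h4
  have half : (1/2 : ℝ) ∈ Set.Icc 0 1 := ⟨by norm_num, by norm_num⟩
  have h5 : (S * star S) ^ (1/2 : ℝ) ≤ Y := (CFC.rpow_le_rpow half h2).trans h4
  obtain ⟨u, -, hu⟩ := tp_polar hSu
  refine ⟨star u, (CFC.rpow_le_rpow half h1).trans ?_⟩
  rw [← hu] at h5
  have := star_left_conjugate_le_conjugate h5 (u : A)
  have e : star (u : A) * ((u : A) * (star S * S) ^ (1/2 : ℝ) * star (u : A)) * u =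
      (star S * S) ^ (1/2 : ℝ) := by
    calc _ = (star (u : A) * u) * (star S * S) ^ (1/2 : ℝ) * (star (u : A) * u) := by
          simp only [mul_assoc]
      _ = _ := by rw [Unitary.coe_star_mul_self, one_mul, mul_one]
  rw [e] at this
  simpa using this

lemma tp_core {E : ι → A} (hE : ∀ i, 0 ≤ E i) (hsum : ∑ i, E i = 1) {l : ι → ℝ} {ε : ℝ}
    (hε : 0 < ε) (hl : ∀ i, ε ≤ l i) {p q r : ℝ} (hp : 0 ≤ p) (hq : 0 < q) (hr : 0 ≤ r)
    (hmin : min p r ≤ q / 2) (hmax : max p r ≤ q)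
    (X : ℝ → A) (hX : X = fun u => ∑ i, (l i ^ u) • E i) :
    ∃ V : unitary A, (star (X p * X q * X r) * (X p * X q * X r)) ^ (1/2 : ℝ)
      ≤ V * X (p + q + r) * star (V : A) := by
  rcases le_total r p with h | h
  · rw [min_eq_right h] at hmin
    rw [max_eq_left h] at hmax
    exact tp_core_le hE hsum hε hl hq hr h hmin hmax X hX
  · rw [min_eq_left h] at hmin
    rw [max_eq_right h] at hmax
    obtain ⟨V, hV⟩ := tp_core_le hE hsum hε hl hq hp h hmin hmax X hX
    have Xpos : ∀ u, 0 ≤ u → IsStrictlyPositive (X u) := fun u hu => by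
      rw [hX]; exact tp_X_pos hE hsum hε hl hu
    have hTu : IsUnit (X p * X q * X r) :=
      ((Xpos p hp).isUnit.mul (Xpos q hq.le).isUnit).mul (Xpos r hr).isUnit
    have hst : star (X p * X q * X r) = X r * X q * X p := by
      simp only [star_mul, (Xpos p hp).isSelfAdjoint.star_eq, (Xpos q hq.le).isSelfAdjoint.star_eq,
        (Xpos r hr).isSelfAdjoint.star_eq, mul_assoc]
    obtain ⟨u, -, hu⟩ := tp_polar hTu
    rw [← hst, star_star, ← hu] at hV
    set T := X p * X q * X r
    refine ⟨star u * V, ?_⟩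
    have := star_left_conjugate_le_conjugate hV (u : A)
    have e : star (u : A) * ((u : A) * (star T * T) ^ (1/2 : ℝ) * star (u : A)) * u =
        (star T * T) ^ (1/2 : ℝ) := by
      calc _ = (star (u : A) * u) * (star T * T) ^ (1/2 : ℝ) * (star (u : A) * u) := by
            simp only [mul_assoc]
        _ = _ := by rw [Unitary.coe_star_mul_self, one_mul, mul_one]
    rw [e] at this
    refine this.trans (le_of_eq ?_)
    have es : p + q + r = r + q + p := by ring
    rw [es]
    simp [mul_assoc]

open Filter Topology in
lemma tp_limit [ProperSpace A] {E : ι → A} (hE : ∀ i, 0 ≤ E i) (hsum : ∑ i, E i = 1) {l : ι → ℝ}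
    (hl : ∀ i, 0 ≤ l i) {p q r : ℝ} (hp : 0 ≤ p) (hq : 0 < q) (hr : 0 ≤ r)
    (hmin : min p r ≤ q / 2) (hmax : max p r ≤ q)
    (X : ℝ → A) (hX : X = fun u => ∑ i, (l i ^ u) • E i) :
    ∃ V ∈ unitary A, (star (X p * X q * X r) * (X p * X q * X r)) ^ (1/2 : ℝ)
      ≤ V * X (p + q + r) * star V := by
  let e : ℕ → ℝ := fun k => 1 / ((k : ℝ) + 1)
  have he : ∀ k, 0 < e k := fun k => by positivity
  have het : Tendsto e atTop (𝓝 0) := tendsto_one_div_add_atTop_nhds_zero_nat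
  let Z : ℕ → ℝ → A := fun k u => ∑ i, ((l i + e k) ^ u) • E i
  have hZ : ∀ u, 0 ≤ u → Tendsto (fun k => Z k u) atTop (𝓝 (X u)) := by
    intro u hu
    rw [hX]
    refine tendsto_finsetSum _ fun i _ => Tendsto.smul_const ?_ _
    have h1 : Tendsto (fun k => l i + e k) atTop (𝓝 (l i)) := by
      simpa using het.const_add (l i)
    exact h1.rpow_const (Or.inr hu)
  have hcore : ∀ k, ∃ V : unitary A,
      (star (Z k p * Z k q * Z k r) * (Z k p * Z k q * Z k r)) ^ (1/2 : ℝ)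
      ≤ V * Z k (p + q + r) * star (V : A) := fun k =>
    tp_core hE hsum (he k) (l := fun i => l i + e k) (fun i => by have := hl i; linarith)
      hp hq hr hmin hmax (Z k) rfl
  choose V hV using hcore
  have hcl : IsClosed (unitary A : Set A) := by
    have : (unitary A : Set A) = {x | star x * x = 1} ∩ {x | x * star x = 1} := by
      ext x; simp [Unitary.mem_iff]
    rw [this]
    exact (isClosed_eq (by fun_prop) (by fun_prop)).inter (isClosed_eq (by fun_prop) (by fun_prop))
  have hcomp : IsCompact (unitary A : Set A) := by
    refine (isCompact_closedBall (0 : A) 1).of_isClosed_subset hcl fun x hx => ?_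
    rw [mem_closedBall_zero_iff]
    rcases subsingleton_or_nontrivial A with h | h
    · rw [Subsingleton.elim x 0]; simp
    · exact (CStarRing.norm_of_mem_unitary hx).le
  obtain ⟨W, hW, φ, hφ, hlim⟩ := hcomp.tendsto_subseq (fun k => (V k).2)
  refine ⟨W, hW, ?_⟩
  have hT : Tendsto (fun k => Z k p * Z k q * Z k r) atTop (𝓝 (X p * X q * X r)) :=
    ((hZ p hp).mul (hZ q hq.le)).mul (hZ r hr)
  have hTT := hT.star.mul hT
  have hsq : Tendsto (fun k => (star (Z k p * Z k q * Z k r) * (Z k p * Z k q * Z k r)) ^ (1/2 : ℝ))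
      atTop (𝓝 ((star (X p * X q * X r) * (X p * X q * X r)) ^ (1/2 : ℝ))) := by
    simp only [← CFC.sqrt_eq_rpow]
    have hc := CFC.continuousOn_sqrt (A := A) _
      (star_mul_self_nonneg (X p * X q * X r))
    refine Tendsto.comp hc (tendsto_nhdsWithin_iff.2 ⟨hTT, ?_⟩)
    exact Eventually.of_forall fun k => star_mul_self_nonneg _
  have hR := (hlim.mul ((hZ (p + q + r) (by linarith)).comp hφ.tendsto_atTop)).mul hlim.star
  exact le_of_tendsto_of_tendsto' (hsq.comp hφ.tendsto_atTop) hR fun k => hV (φ k)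

end core

section fin
open scoped MatrixOrder Matrix.Norms.L2Operator

lemma tp_mpow_expand {n d : ℕ}
    (Φ : Matrix (Fin n) (Fin n) ℂ →ₗ[ℂ] Matrix (Fin d) (Fin d) ℂ)
    (hΦ1 : Φ 1 = 1) (hΦpos : ∀ X : Matrix (Fin n) (Fin n) ℂ, X.PosSemidef → (Φ X).PosSemidef)
    (A : Matrix (Fin n) (Fin n) ℂ) (hA : A.PosSemidef) :
    ∃ (E : Fin n → Matrix (Fin d) (Fin d) ℂ) (l : Fin n → ℝ), (∀ i, (E i).PosSemidef) ∧
      ∑ i, E i = 1 ∧ (∀ i, 0 ≤ l i) ∧ ∀ u : ℝ, Φ (mpow A u) = ∑ i, (l i ^ u) • E i := by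
  have hH : A.IsHermitian := hA.1
  let U : Matrix (Fin n) (Fin n) ℂ := (hH.eigenvectorUnitary : Matrix (Fin n) (Fin n) ℂ)
  have hU : U * star U = 1 := Unitary.mul_star_self_of_mem hH.eigenvectorUnitary.2
  have key : ∀ f : Fin n → ℝ, U * Matrix.diagonal (fun i => (f i : ℂ)) * star U
      = ∑ i, (f i) • (U * Matrix.single i i 1 * star U) := by
    intro f
    have : Matrix.diagonal (fun i => (f i : ℂ)) = ∑ i, (f i) • Matrix.single i i (1:ℂ) := by
      ext a b
      simp only [Matrix.sum_apply, Matrix.smul_apply, Matrix.single_apply, Matrix.diagonal_apply]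
      by_cases h : a = b
      · subst h
        simp
      · rw [if_neg h, Finset.sum_eq_zero]
        intro i _
        rw [if_neg (by rintro ⟨rfl, rfl⟩; exact h rfl), smul_zero]
    rw [this, Matrix.mul_sum, Matrix.sum_mul]
    refine Finset.sum_congr rfl fun i _ => ?_
    rw [Matrix.mul_smul, Matrix.smul_mul]
  have hsm : ∀ (c : ℝ) (M : Matrix (Fin n) (Fin n) ℂ), Φ (c • M) = c • Φ M := by
    intro c M
    rw [← Complex.coe_smul, ← Complex.coe_smul, map_smul]
  refine ⟨fun i => Φ (U * Matrix.single i i 1 * star U), hH.eigenvalues, ?_, ?_,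
    hA.eigenvalues_nonneg, ?_⟩
  · intro i
    apply hΦpos
    have : (Matrix.single i i (1:ℂ)).PosSemidef := by
      rw [← Matrix.diagonal_single]
      apply Matrix.PosSemidef.diagonal
      intro j
      by_cases h : j = i
      · subst h; simp
      · simp [h]
    exact this.mul_mul_conjTranspose_same U
  · rw [← map_sum, ← hΦ1]
    congr 1
    have := key (fun _ => 1)
    simp only [one_smul, Complex.ofReal_one] at this
    rw [← this, Matrix.diagonal_one, mul_one, hU]
  · intro u
    have : mpow A u = U * Matrix.diagonal (fun i => ((hH.eigenvalues i ^ u : ℝ) : ℂ)) * star U := by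
      unfold mpow
      rw [hH.cfc_eq]
      rfl
    rw [this, key, map_sum]
    exact Finset.sum_congr rfl fun i _ => hsm _ _

lemma tp_matAbs {d : ℕ} (T : Matrix (Fin d) (Fin d) ℂ) :
    matAbs T = (star T * T) ^ (1/2 : ℝ) := by
  rw [CFC.rpow_eq_cfc_real (ha := star_mul_self_nonneg T)]
  unfold matAbs
  have : Real.sqrt = fun x : ℝ => x ^ (1/2 : ℝ) := by
    funext x; exact Real.sqrt_eq_rpow x
  rw [this]
  rfl

lemma tp_final {n d : ℕ}
    (Φ : Matrix (Fin n) (Fin n) ℂ →ₗ[ℂ] Matrix (Fin d) (Fin d) ℂ)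
    (hΦ1 : Φ 1 = 1) (hΦpos : ∀ X : Matrix (Fin n) (Fin n) ℂ, X.PosSemidef → (Φ X).PosSemidef)
    (A : Matrix (Fin n) (Fin n) ℂ) (hA : A.PosSemidef)
    (p q r : ℝ) (hp : 0 ≤ p) (hq : 0 ≤ q) (hr : 0 ≤ r)
    (hmin : min p r ≤ q / 2) (hmax : max p r ≤ q) :
    ∃ V : Matrix (Fin d) (Fin d) ℂ, V ∈ Matrix.unitaryGroup (Fin d) ℂ ∧
      loewnerLE (matAbs (Φ (mpow A p) * Φ (mpow A q) * Φ (mpow A r)))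
        (V * Φ (mpow A (p + q + r)) * Vᴴ) := by
  obtain ⟨E, l, hE, hsum, hl, hX⟩ := tp_mpow_expand Φ hΦ1 hΦpos A hA
  rw [tp_matAbs]
  rcases hq.eq_or_lt with h0 | h0
  · subst h0
    have hp0 : p = 0 := le_antisymm ((le_max_left _ _).trans hmax) hp
    have hr0 : r = 0 := le_antisymm ((le_max_right _ _).trans hmax) hr
    subst hp0 hr0
    have h1 : Φ (mpow A 0) = 1 := by
      rw [hX, ← hsum]; simp
    refine ⟨1, one_mem _, ?_⟩
    unfold loewnerLE
    simp [h1, CFC.one_rpow, Matrix.PosSemidef.zero]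
  · have : ProperSpace (Matrix (Fin d) (Fin d) ℂ) := FiniteDimensional.proper ℂ _
    obtain ⟨V, hV, h⟩ := tp_limit (fun i => Matrix.nonneg_iff_posSemidef.mpr (hE i)) hsum hl
      hp h0 hr hmin hmax (fun u => Φ (mpow A u)) (funext hX)
    exact ⟨V, hV, Matrix.le_iff.mp h⟩

end fin

/-- For a unital positive linear map `Φ`, `A ≥ 0` and `p, q, r ≥ 0` with `min{p,r} ≤ q/2` and
`max{p,r} ≤ q`, there is a unitary `V` with `|Φ(A^p) Φ(A^q) Φ(A^r)| ≤ V Φ(A^{p+q+r}) V*`. -/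
theorem triple_product_unitary {n d : ℕ}
    (Φ : Matrix (Fin n) (Fin n) ℂ →ₗ[ℂ] Matrix (Fin d) (Fin d) ℂ)
    (hΦ1 : Φ 1 = 1) (hΦpos : ∀ X : Matrix (Fin n) (Fin n) ℂ, X.PosSemidef → (Φ X).PosSemidef)
    (A : Matrix (Fin n) (Fin n) ℂ) (hA : A.PosSemidef)
    (p q r : ℝ) (hp : 0 ≤ p) (hq : 0 ≤ q) (hr : 0 ≤ r)
    (hmin : min p r ≤ q / 2) (hmax : max p r ≤ q) :
    ∃ V : Matrix (Fin d) (Fin d) ℂ, V ∈ Matrix.unitaryGroup (Fin d) ℂ ∧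
      loewnerLE (matAbs (Φ (mpow A p) * Φ (mpow A q) * Φ (mpow A r)))
        (V * Φ (mpow A (p + q + r)) * Vᴴ) := by
  exact tp_final Φ hΦ1 hΦpos A hA p q r hp hq hr hmin hmax
end

section
/- For any two matrices A, B ∈ Mₙ(ℂ) there exists a unitary U ∈ Mₙ(ℂ) such that |AB*| ≤ U ((|A|² + |B|²)/2) U*. (Bhatia–Kittaneh inequality) -/
open scoped Matrix ComplexOrder

/-- If `MᴴM = NᴴN` then `M = W N` for a unitary `W`. -/
theorem bk_unitary_factor {n : ℕ} (M N : Matrix (Fin n) (Fin n) ℂ) (h : Mᴴ * M = Nᴴ * N) :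
    ∃ W : Matrix (Fin n) (Fin n) ℂ, Wᴴ * W = 1 ∧ W * Wᴴ = 1 ∧ M = W * N := by
  let Φ := Matrix.toEuclideanCLM (n := Fin n) (𝕜 := ℂ)
  let S : EuclideanSpace ℂ (Fin n) →L[ℂ] EuclideanSpace ℂ (Fin n) := Φ M
  let T : EuclideanSpace ℂ (Fin n) →L[ℂ] EuclideanSpace ℂ (Fin n) := Φ N
  have hST : star S * S = star T * T := by
    have := congrArg Φ h
    simpa only [← Matrix.star_eq_conjTranspose, map_mul, map_star] using this
  have hnorm : ∀ x, ‖S x‖ = ‖T x‖ := by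
    intro x
    have h1 := ContinuousLinearMap.apply_norm_sq_eq_inner_adjoint_left S x
    have h2 := ContinuousLinearMap.apply_norm_sq_eq_inner_adjoint_left T x
    have h3 : (ContinuousLinearMap.adjoint S ∘L S) = (ContinuousLinearMap.adjoint T ∘L T) := hST
    rw [h3, ← h2] at h1
    exact (sq_eq_sq₀ (norm_nonneg _) (norm_nonneg _)).1 h1
  obtain ⟨g, hg⟩ := T.toLinearMap.rangeRestrict.exists_rightInverse_of_surjective
    (LinearMap.range_rangeRestrict _)
  have hg' : ∀ y, T (g y) = (y : EuclideanSpace ℂ (Fin n)) := fun y =>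
    congrArg Subtype.val (LinearMap.congr_fun hg y)
  let L : (LinearMap.range T.toLinearMap) →ₗᵢ[ℂ] EuclideanSpace ℂ (Fin n) :=
    { toLinearMap := S.toLinearMap ∘ₗ g
      norm_map' := fun y => by
        change ‖S (g y)‖ = ‖y‖
        rw [hnorm, hg']; rfl }
  let V := L.extend
  have hV : ∀ x, V (T x) = S x := by
    intro x
    have h1 : V (T x) = S (g ⟨T x, ⟨x, rfl⟩⟩) := L.extend_apply ⟨T x, ⟨x, rfl⟩⟩
    rw [h1, ← sub_eq_zero, ← map_sub, ← norm_eq_zero, hnorm, map_sub, hg']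
    simp
  obtain ⟨W, hW⟩ := (EquivLike.surjective Φ) V.toContinuousLinearMap
  have hWW : Wᴴ * W = 1 := by
    apply EquivLike.injective Φ
    rw [← Matrix.star_eq_conjTranspose, map_mul, map_star, hW, map_one]
    exact (ContinuousLinearMap.norm_map_iff_adjoint_comp_self V.toContinuousLinearMap).1 V.norm_map
  refine ⟨W, hWW, mul_eq_one_comm.1 hWW, ?_⟩
  apply EquivLike.injective Φ
  rw [map_mul, hW]
  ext1 x
  exact (hV x).symm

theorem bk_matAbs_herm {n : ℕ} (X : Matrix (Fin n) (Fin n) ℂ) : (matAbs X)ᴴ = matAbs X := by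
  have : IsSelfAdjoint (matAbs X) := cfc_predicate _ _
  exact this

theorem bk_matAbs_sq {n : ℕ} (X : Matrix (Fin n) (Fin n) ℂ) : matAbs X ^ 2 = Xᴴ * X := by
  have hps := Matrix.posSemidef_conjTranspose_mul_self X
  have hsa : IsSelfAdjoint (Xᴴ * X) := hps.isHermitian
  unfold matAbs
  rw [← cfc_pow Real.sqrt 2 (Xᴴ * X) (by fun_prop) hsa]
  conv_rhs => rw [← cfc_id ℝ (Xᴴ * X) hsa]
  apply cfc_congr
  intro x hx
  have hx0 : 0 ≤ x := by
    have h2 := (Matrix.posSemidef_iff_isHermitian_and_spectrum_nonneg.1 hps).2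
    have h3 : ((x : ℝ) : ℂ) ∈ spectrum ℂ (Xᴴ * X) :=
      (spectrum.algebraMap_mem_iff ℂ).2 hx
    have := h2 h3
    simpa using this
  exact Real.sq_sqrt hx0

/-- Bhatia–Kittaneh inequality: for any `A, B` there is a unitary `U` with
`|AB*| ≤ U ((|A|² + |B|²)/2) U*`. -/
theorem bhatia_kittaneh {n : ℕ} (A B : Matrix (Fin n) (Fin n) ℂ) :
    ∃ U : Matrix (Fin n) (Fin n) ℂ, U ∈ Matrix.unitaryGroup (Fin n) ℂ ∧
      loewnerLE (matAbs (A * Bᴴ)) (U * ((2 : ℂ)⁻¹ • (matAbs A ^ 2 + matAbs B ^ 2)) * Uᴴ) := by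
  obtain ⟨W, hW1, hW2, hC⟩ := bk_unitary_factor (A * Bᴴ) (matAbs (A * Bᴴ))
    (by rw [bk_matAbs_herm, ← sq, bk_matAbs_sq])
  have hH := bk_matAbs_herm (A * Bᴴ)
  rw [bk_matAbs_sq, bk_matAbs_sq]
  generalize matAbs (A * Bᴴ) = P at *
  have hP : Wᴴ * A * Bᴴ = P := by
    rw [Matrix.mul_assoc, hC, ← Matrix.mul_assoc, hW1, Matrix.one_mul]
  have hP' : B * Aᴴ * W = P := by
    have := congrArg Matrix.conjTranspose hP
    simpa [hH, Matrix.mul_assoc] using this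
  let Y := Aᴴ * W + Bᴴ
  let Z := Aᴴ * W - Bᴴ
  obtain ⟨U, hU1, hU2, hY⟩ := bk_unitary_factor Y (matAbs Y)
    (by rw [bk_matAbs_herm, ← sq, bk_matAbs_sq])
  -- `Yᴴ = Q Uᴴ`, so `Yᴴ Y = Uᴴ (Y Yᴴ) U`
  have hYY : Yᴴ * Y = Uᴴ * (Y * Yᴴ) * U := by
    have h1 : Y * Yᴴ = U * (matAbs Y ^ 2) * Uᴴ := by
      conv_lhs => rw [hY]
      rw [Matrix.conjTranspose_mul, bk_matAbs_herm]
      simp only [sq, Matrix.mul_assoc]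
    rw [h1, bk_matAbs_sq]
    calc Yᴴ * Y = (Uᴴ * U) * (Yᴴ * Y) * (Uᴴ * U) := by rw [hU1, Matrix.one_mul, Matrix.mul_one]
      _ = _ := by simp only [Matrix.mul_assoc]
  have e1 : Yᴴ * Y - Zᴴ * Z = (4 : ℂ) • P := by
    have : Yᴴ * Y - Zᴴ * Z = (2 : ℂ) • (Wᴴ * A * Bᴴ + B * Aᴴ * W) := by
      simp only [Y, Z, Matrix.conjTranspose_add, Matrix.conjTranspose_sub,
        Matrix.conjTranspose_mul, Matrix.conjTranspose_conjTranspose, two_smul]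
      noncomm_ring
    rw [this, hP, hP', ← two_smul ℂ P, smul_smul]
    norm_num
  have e2 : Y * Yᴴ + Z * Zᴴ = (2 : ℂ) • (Aᴴ * A + Bᴴ * B) := by
    have : Y * Yᴴ + Z * Zᴴ = (2 : ℂ) • (Aᴴ * (W * Wᴴ) * A + Bᴴ * B) := by
      simp only [Y, Z, Matrix.conjTranspose_add, Matrix.conjTranspose_sub,
        Matrix.conjTranspose_mul, Matrix.conjTranspose_conjTranspose, two_smul]
      noncomm_ring
    rw [this, hW2, Matrix.mul_one]
  refine ⟨Uᴴ, ?_, ?_⟩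
  · rw [Matrix.mem_unitaryGroup_iff, Matrix.star_eq_conjTranspose,
      Matrix.conjTranspose_conjTranspose, hU1]
  · unfold loewnerLE
    rw [Matrix.conjTranspose_conjTranspose]
    have key : Uᴴ * ((2 : ℂ)⁻¹ • (Aᴴ * A + Bᴴ * B)) * U - P
        = (4 : ℂ)⁻¹ • (Uᴴ * (Z * Zᴴ) * U + Zᴴ * Z) := by
      have hPe : P = (4 : ℂ)⁻¹ • (Yᴴ * Y - Zᴴ * Z) := by
        rw [e1, smul_smul]; norm_num
      have hAe : (2 : ℂ)⁻¹ • (Aᴴ * A + Bᴴ * B) = (4 : ℂ)⁻¹ • (Y * Yᴴ + Z * Zᴴ) := by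
        rw [e2, smul_smul]; norm_num
      rw [hAe, hPe, hYY, Matrix.mul_smul, Matrix.smul_mul, ← smul_sub, Matrix.mul_add,
        Matrix.add_mul]
      congr 1
      abel
    rw [key]
    refine Matrix.PosSemidef.smul (Matrix.PosSemidef.add ?_ ?_) (by positivity)
    · exact (Matrix.posSemidef_self_mul_conjTranspose Z).conjTranspose_mul_mul_same U
    · exact Matrix.posSemidef_conjTranspose_mul_self Z
end

section
/- Let (A,B) be a monotone pair in Mₙ(ℂ) (A = f(C), B = g(C) with f, g nonnegative nondecreasing, C ≥ 0) and let E be a self-adjoint projection. Then for every j, the j-th largest eigenvalue satisfies λ_j[(EAE)(EBE)(EAE)] ≤ λ_j[E A B A E]. -/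
open scoped Matrix ComplexOrder

/-- `(A, B)` is a monotone pair: `A = f(C)`, `B = g(C)` for some positive semidefinite `C` and
nonnegative nondecreasing functions `f`, `g` on `[0, ∞)`. -/
def MonotonePair {n : ℕ} (A B : Matrix (Fin n) (Fin n) ℂ) : Prop :=
  ∃ (C : Matrix (Fin n) (Fin n) ℂ) (f g : ℝ → ℝ), C.PosSemidef ∧
    MonotoneOn f (Set.Ici 0) ∧ MonotoneOn g (Set.Ici 0) ∧
    (∀ x ∈ Set.Ici (0 : ℝ), 0 ≤ f x) ∧ (∀ x ∈ Set.Ici (0 : ℝ), 0 ≤ g x) ∧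
    A = cfc f C ∧ B = cfc g C

/-- The eigenvalues of a Hermitian matrix, arranged in decreasing order (junk value otherwise). -/
noncomputable def eigDesc {m : ℕ} (X : Matrix (Fin m) (Fin m) ℂ) : Fin m → ℝ :=
  if hX : X.IsHermitian then fun j => (hX.eigenvalues ∘ Tuple.sort hX.eigenvalues) j.rev else 0

/-- Matrix as an operator on Euclidean space. -/
noncomputable abbrev opr {n : ℕ} (M : Matrix (Fin n) (Fin n) ℂ) :
    EuclideanSpace ℂ (Fin n) →L[ℂ] EuclideanSpace ℂ (Fin n) :=
  Matrix.toEuclideanCLM (n := Fin n) (𝕜 := ℂ) M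

lemma opr_mul_apply {n : ℕ} (M N : Matrix (Fin n) (Fin n) ℂ) (v : EuclideanSpace ℂ (Fin n)) :
    opr (M * N) v = opr M (opr N v) := by
  simp only [opr, map_mul]; rfl

lemma opr_inner {n : ℕ} {M : Matrix (Fin n) (Fin n) ℂ} (hM : M.IsHermitian)
    (v w : EuclideanSpace ℂ (Fin n)) : inner ℂ (opr M v) w = inner ℂ v (opr M w) := by
  have h1 : star (opr M) = opr M := by
    rw [opr, ← map_star, Matrix.star_eq_conjTranspose, hM.eq]
  have h2 := ContinuousLinearMap.adjoint_inner_left (opr M) w v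
  rw [← ContinuousLinearMap.star_eq_adjoint, h1] at h2
  exact h2

lemma inner_diag {n : ℕ} {T : EuclideanSpace ℂ (Fin n) →L[ℂ] EuclideanSpace ℂ (Fin n)}
    {u : OrthonormalBasis (Fin n) ℂ (EuclideanSpace ℂ (Fin n))} {t : Fin n → ℝ}
    (h : ∀ k, T (u k) = (t k : ℂ) • u k) (v : EuclideanSpace ℂ (Fin n)) (k : Fin n) :
    inner ℂ (u k) (T v) = (t k : ℂ) * inner ℂ (u k) v := by
  conv_lhs => rw [← u.sum_repr' v]
  rw [map_sum, inner_sum, Finset.sum_eq_single k]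
  · rw [map_smul, h, inner_smul_right, inner_smul_right, u.inner_eq_one]; ring
  · intro b _ hb
    rw [map_smul, h, inner_smul_right, inner_smul_right, u.inner_eq_zero hb.symm]; ring
  · simp

lemma quad_diag {n : ℕ} {T : EuclideanSpace ℂ (Fin n) →L[ℂ] EuclideanSpace ℂ (Fin n)}
    {u : OrthonormalBasis (Fin n) ℂ (EuclideanSpace ℂ (Fin n))} {t : Fin n → ℝ}
    (h : ∀ k, T (u k) = (t k : ℂ) • u k) (v : EuclideanSpace ℂ (Fin n)) :
    (inner ℂ v (T v)).re = ∑ k, t k * ‖inner ℂ (u k) v‖ ^ 2 := by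
  rw [← u.sum_inner_mul_inner, Complex.re_sum]
  refine Finset.sum_congr rfl fun k _ => ?_
  rw [inner_diag h, ← inner_conj_symm v (u k), mul_left_comm, mul_comm (starRingEnd ℂ _),
    Complex.mul_conj', ← Complex.ofReal_pow, ← Complex.ofReal_mul, Complex.ofReal_re]

lemma eigDesc_basis {n : ℕ} {X : Matrix (Fin n) (Fin n) ℂ} (hX : X.IsHermitian) :
    Antitone (eigDesc X) ∧ ∃ u : OrthonormalBasis (Fin n) ℂ (EuclideanSpace ℂ (Fin n)),
      ∀ k, opr X (u k) = (eigDesc X k : ℂ) • u k := by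
  have he : ∀ k, eigDesc X k = hX.eigenvalues (Tuple.sort hX.eigenvalues k.rev) := by
    intro k; simp [eigDesc, hX]
  constructor
  · intro a b hab
    rw [he, he]
    exact Tuple.monotone_sort hX.eigenvalues (Fin.rev_le_rev.mpr hab)
  · refine ⟨hX.eigenvectorBasis.reindex (Fin.revPerm.trans (Tuple.sort hX.eigenvalues)).symm,
      fun k => ?_⟩
    rw [he, OrthonormalBasis.reindex_apply]
    apply (WithLp.ofLp_injective 2)
    have := hX.mulVec_eigenvectorBasis (Tuple.sort hX.eigenvalues k.rev)
    simpa using this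

lemma cfc_basis {n : ℕ} {C : Matrix (Fin n) (Fin n) ℂ} (hC : C.IsHermitian) (f : ℝ → ℝ)
    (k : Fin n) : opr (cfc f C) (hC.eigenvectorBasis k) =
      (f (hC.eigenvalues k) : ℂ) • hC.eigenvectorBasis k := by
  apply (WithLp.ofLp_injective 2)
  rw [Matrix.ofLp_toEuclideanCLM, hC.cfc_eq, Matrix.IsHermitian.cfc, Unitary.conjStarAlgAut_apply,
    ← Matrix.mulVec_mulVec, ← Matrix.mulVec_mulVec, Matrix.IsHermitian.star_eigenvectorUnitary_mulVec,
    Matrix.diagonal_mulVec_single, mul_one, ← mul_one ((RCLike.ofReal ∘ f ∘ hC.eigenvalues) k),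
    ← smul_eq_mul, Pi.single_smul,
    Matrix.mulVec_smul, Matrix.IsHermitian.eigenvectorUnitary_mulVec]
  rfl

lemma cheb_sum {n : ℕ} (a b w : Fin n → ℝ) (hw : ∀ k, 0 ≤ w k)
    (hab : ∀ i k, 0 ≤ (a i - a k) * (b i - b k)) :
    (∑ k, a k * w k) * (∑ k, b k * w k) ≤ (∑ k, a k * b k * w k) * ∑ k, w k := by
  have h : 0 ≤ ∑ i, ∑ k, (a i - a k) * (b i - b k) * (w i * w k) :=
    Finset.sum_nonneg fun i _ => Finset.sum_nonneg fun k _ =>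
      mul_nonneg (hab i k) (mul_nonneg (hw i) (hw k))
  have e : ∑ i, ∑ k, (a i - a k) * (b i - b k) * (w i * w k) =
      2 * ((∑ k, a k * b k * w k) * ∑ k, w k) - 2 * ((∑ k, a k * w k) * (∑ k, b k * w k)) := by
    have e1 : ∀ i k, (a i - a k) * (b i - b k) * (w i * w k) =
      (a i * b i * w i) * w k + w i * (a k * b k * w k) - (a i * w i) * (b k * w k)
        - (b i * w i) * (a k * w k) := by intros; ring
    simp only [e1, Finset.sum_add_distrib, Finset.sum_sub_distrib, ← Finset.mul_sum,
      ← Finset.sum_mul]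
    ring
  linarith

/-- Chebyshev-type eigenvalue inequality: for a monotone pair `(A, B)` and a self-adjoint
projection `E`, `λ_j[(EAE)(EBE)(EAE)] ≤ λ_j[EABAE]` for every `j`. -/
theorem chebyshev_eigenvalue_compression {n : ℕ} (A B E : Matrix (Fin n) (Fin n) ℂ)
    (hAB : MonotonePair A B) (hE : Eᴴ = E) (hE2 : E * E = E) (j : Fin n) :
    eigDesc ((E * A * E) * (E * B * E) * (E * A * E)) j ≤ eigDesc (E * A * B * A * E) j := by
  obtain ⟨C, f, g, hC, hf, hg, hf0, hg0, hA, hB⟩ := hAB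
  have hCh := hC.isHermitian
  have hAh : A.IsHermitian := by rw [hA]; exact cfc_predicate f C
  have hBh : B.IsHermitian := by rw [hB]; exact cfc_predicate g C
  have hEh : E.IsHermitian := hE
  have hXh : ((E * A * E) * (E * B * E) * (E * A * E)).IsHermitian := by
    simp only [Matrix.IsHermitian, Matrix.conjTranspose_mul, hE, hAh.eq, hBh.eq, Matrix.mul_assoc]
  have hYh : (E * A * B * A * E).IsHermitian := by
    simp only [Matrix.IsHermitian, Matrix.conjTranspose_mul, hE, hAh.eq, hBh.eq, Matrix.mul_assoc]
  have hEE : ∀ v, opr E (opr E v) = opr E v := fun v => by rw [← opr_mul_apply, hE2]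
  set a : Fin n → ℝ := fun k => f (hCh.eigenvalues k) with ha
  set b : Fin n → ℝ := fun k => g (hCh.eigenvalues k) with hb
  have hev : ∀ k, hCh.eigenvalues k ∈ Set.Ici (0 : ℝ) := fun k => hC.eigenvalues_nonneg k
  have ha0 : ∀ k, 0 ≤ a k := fun k => hf0 _ (hev k)
  have hb0 : ∀ k, 0 ≤ b k := fun k => hg0 _ (hev k)
  set c := hCh.eigenvectorBasis with hc
  have hAc : ∀ k, opr A (c k) = (a k : ℂ) • c k := fun k => by rw [hA]; exact cfc_basis hCh f k
  have hBc : ∀ k, opr B (c k) = (b k : ℂ) • c k := fun k => by rw [hB]; exact cfc_basis hCh g k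
  have hmono : ∀ i k, 0 ≤ (a i ^ 2 - a k ^ 2) * (b i - b k) := by
    intro i k
    rcases le_total (hCh.eigenvalues i) (hCh.eigenvalues k) with h | h
    · have h1 : a i ≤ a k := hf (hev i) (hev k) h
      have h2 : b i ≤ b k := hg (hev i) (hev k) h
      have h3 : a i ^ 2 ≤ a k ^ 2 := pow_le_pow_left₀ (ha0 i) h1 2
      exact mul_nonneg_of_nonpos_of_nonpos (by linarith) (by linarith)
    · have h1 : a k ≤ a i := hf (hev k) (hev i) h
      have h2 : b k ≤ b i := hg (hev k) (hev i) h
      have h3 : a k ^ 2 ≤ a i ^ 2 := pow_le_pow_left₀ (ha0 k) h1 2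
      exact mul_nonneg (by linarith) (by linarith)
  -- Chebyshev inequality for vectors
  have hcheb : ∀ e, ‖opr A e‖ ^ 2 * (inner ℂ e (opr B e)).re ≤
      (inner ℂ (opr A e) (opr B (opr A e))).re * ‖e‖ ^ 2 := by
    intro e
    have h := cheb_sum (fun k => a k ^ 2) b (fun k => ‖inner ℂ (c k) e‖ ^ 2)
      (fun k => by positivity) hmono
    have e1 : ∀ k, ‖inner ℂ (c k) (opr A e)‖ ^ 2 = a k ^ 2 * ‖inner ℂ (c k) e‖ ^ 2 := by
      intro k
      rw [inner_diag hAc, norm_mul, mul_pow, Complex.norm_real, Real.norm_eq_abs, sq_abs]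
    rw [quad_diag hBc, quad_diag hBc, ← c.sum_sq_norm_inner_right, ← c.sum_sq_norm_inner_right]
    simp only [e1]
    convert h using 3
    ring
  have hBpos : ∀ v, 0 ≤ (inner ℂ v (opr B v)).re := by
    intro v
    rw [quad_diag hBc]
    exact Finset.sum_nonneg fun k _ => mul_nonneg (hb0 k) (by positivity)
  have hY : ∀ v, inner ℂ v (opr (E * A * B * A * E) v) =
      inner ℂ (opr A (opr E v)) (opr B (opr A (opr E v))) := by
    intro v
    simp only [opr_mul_apply]
    rw [← opr_inner hEh, ← opr_inner hAh]
  have hX : ∀ v, inner ℂ v (opr ((E * A * E) * (E * B * E) * (E * A * E)) v) =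
      inner ℂ (opr E (opr A (opr E v))) (opr B (opr E (opr A (opr E v)))) := by
    intro v
    simp only [opr_mul_apply, hEE]
    rw [← opr_inner hEh, ← opr_inner hAh, ← opr_inner hEh]
  obtain ⟨hXa, u, hu⟩ := eigDesc_basis hXh
  obtain ⟨hYa, w, hw⟩ := eigDesc_basis hYh
  generalize hμ : eigDesc ((E * A * E) * (E * B * E) * (E * A * E)) = μ at *
  generalize hν : eigDesc (E * A * B * A * E) = ν at *
  have hν0 : 0 ≤ ν j := by
    have h := hBpos (opr A (opr E (w j)))
    rw [← hY, hw, inner_smul_right, w.inner_eq_one, mul_one, Complex.ofReal_re] at h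
    exact h
  rcases le_or_gt (μ j) 0 with h0 | h0
  · exact h0.trans hν0
  -- find a common vector
  obtain ⟨h, hne, hhu, hhw⟩ : ∃ h : EuclideanSpace ℂ (Fin n), h ≠ 0 ∧
      (∀ k, j < k → inner ℂ (u k) h = 0) ∧
      (∀ k, k < j → inner ℂ (w k) (opr E (opr A (opr E h))) = 0) := by
    let L : EuclideanSpace ℂ (Fin n) →ₗ[ℂ] (Fin n → ℂ) := LinearMap.pi fun k =>
      if j < k then (innerSL ℂ (u k)).toLinearMap
      else if k < j then ((innerSL ℂ (w k)).comp ((opr E).comp ((opr A).comp (opr E)))).toLinearMap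
      else 0
    have hns : ¬ Function.Surjective L := by
      intro hs
      obtain ⟨v, hv⟩ := hs (Pi.single j 1)
      have := congrFun hv j
      simp [L] at this
    have hni : ¬ Function.Injective L := fun hi => hns
      ((LinearMap.injective_iff_surjective_of_finrank_eq_finrank (by simp)).mp hi)
    rw [injective_iff_map_eq_zero] at hni
    push Not at hni
    obtain ⟨h, hL, hne⟩ := hni
    refine ⟨h, hne, fun k hk => ?_, fun k hk => ?_⟩
    · have := congrFun hL k
      simpa [L, hk] using this
    · have := congrFun hL k
      simpa [L, hk, hk.not_gt] using this
  set e := opr E (opr A (opr E h)) with he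
  have hEe : opr E e = e := hEE _
  have hlow : μ j * ‖h‖ ^ 2 ≤ (inner ℂ e (opr B e)).re := by
    rw [he, ← hX, quad_diag hu, ← u.sum_sq_norm_inner_right, Finset.mul_sum]
    refine Finset.sum_le_sum fun k _ => ?_
    rcases le_or_gt k j with hk | hk
    · exact mul_le_mul_of_nonneg_right (hXa hk) (by positivity)
    · simp [hhu k hk]
  have hup : (inner ℂ (opr A e) (opr B (opr A e))).re ≤ ν j * ‖e‖ ^ 2 := by
    have h1 := hY e
    rw [hEe] at h1
    rw [← h1, quad_diag hw, ← w.sum_sq_norm_inner_right, Finset.mul_sum]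
    refine Finset.sum_le_sum fun k _ => ?_
    rcases le_or_gt j k with hk | hk
    · exact mul_le_mul_of_nonneg_right (hYa hk) (by positivity)
    · simp [hhw k hk]
  have hh : 0 < ‖h‖ := norm_pos_iff.mpr hne
  have hepos : 0 < ‖e‖ := by
    rw [norm_pos_iff]
    intro h1
    rw [h1] at hlow
    simp at hlow
    have : 0 < μ j * ‖h‖ ^ 2 := by positivity
    linarith
  have hEh1 : ‖opr E h‖ ≤ ‖h‖ := by
    have h1 : ‖opr E h‖ ^ 2 = (inner ℂ h (opr E h)).re := by
      rw [← inner_self_eq_norm_sq (𝕜 := ℂ), opr_inner hEh, hEE]; rfl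
    have h2 : (inner ℂ h (opr E h)).re ≤ ‖h‖ * ‖opr E h‖ := re_inner_le_norm (𝕜 := ℂ) _ _
    by_contra! h3
    nlinarith [norm_nonneg h, norm_nonneg (opr E h)]
  have hcs : ‖e‖ ^ 2 ≤ ‖h‖ * ‖opr A e‖ := by
    have h1 : ‖e‖ ^ 2 = (inner ℂ (opr E h) (opr A e)).re := by
      rw [← opr_inner hAh, ← hEe, ← opr_inner hEh, ← he, hEe, ← inner_self_eq_norm_sq (𝕜 := ℂ)]
      rfl
    have h2 : (inner ℂ (opr E h) (opr A e)).re ≤ ‖opr E h‖ * ‖opr A e‖ :=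
      re_inner_le_norm (𝕜 := ℂ) _ _
    have h3 := mul_le_mul_of_nonneg_right hEh1 (norm_nonneg (opr A e))
    linarith
  have hcs2 : (‖e‖ ^ 2) ^ 2 ≤ (‖h‖ * ‖opr A e‖) ^ 2 := pow_le_pow_left₀ (by positivity) hcs 2
  have hfin : μ j * (‖e‖ ^ 2) ^ 2 ≤ ν j * (‖e‖ ^ 2) ^ 2 := by
    calc μ j * (‖e‖ ^ 2) ^ 2 ≤ μ j * (‖h‖ * ‖opr A e‖) ^ 2 :=
          mul_le_mul_of_nonneg_left hcs2 h0.le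
      _ = ‖opr A e‖ ^ 2 * (μ j * ‖h‖ ^ 2) := by ring
      _ ≤ ‖opr A e‖ ^ 2 * (inner ℂ e (opr B e)).re :=
          mul_le_mul_of_nonneg_left hlow (by positivity)
      _ ≤ _ := hcheb e
      _ ≤ (ν j * ‖e‖ ^ 2) * ‖e‖ ^ 2 := mul_le_mul_of_nonneg_right hup (by positivity)
      _ = _ := by ring
  exact le_of_mul_le_mul_right hfin (by positivity)
end

section
/- Let (A,B) be a monotone pair in Mₙ(ℂ) and Φ : Mₙ(ℂ) → M_d(ℂ) a sub-unital positive linear map (Φ(I) ≤ I). Then there exists a unitary V ∈ M_d(ℂ) with Φ(A)Φ(B)Φ(A) ≤ V Φ(ABA) V*. -/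
open scoped Matrix ComplexOrder

namespace ChebAux

/-- Real quadratic form of a matrix. -/
noncomputable def qf {n : ℕ} (M : Matrix (Fin n) (Fin n) ℂ) (v : Fin n → ℂ) : ℝ :=
  (star v ⬝ᵥ (M *ᵥ v)).re

lemma qf_nonneg {n : ℕ} {M : Matrix (Fin n) (Fin n) ℂ} (hM : M.PosSemidef) (v : Fin n → ℂ) :
    0 ≤ qf M v := by
  have := hM.dotProduct_mulVec_nonneg v
  exact (Complex.le_def.mp this).1

lemma qf_sub {n : ℕ} (M N : Matrix (Fin n) (Fin n) ℂ) (v : Fin n → ℂ) :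
    qf (M - N) v = qf M v - qf N v := by
  simp [qf, Matrix.sub_mulVec, dotProduct_sub]

lemma qf_conj {n : ℕ} (M N : Matrix (Fin n) (Fin n) ℂ) (v : Fin n → ℂ) :
    qf (Nᴴ * M * N) v = qf M (N *ᵥ v) := by
  simp only [qf]
  rw [Matrix.star_mulVec, ← Matrix.dotProduct_mulVec, Matrix.mulVec_mulVec, Matrix.mulVec_mulVec,
    Matrix.mul_assoc]

lemma qf_diag {n : ℕ} (x : Fin n → ℝ) (v : Fin n → ℂ) :
    qf (Matrix.diagonal (fun i => (x i : ℂ))) v = ∑ i, x i * Complex.normSq (v i) := by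
  simp only [qf, dotProduct, Matrix.mulVec_diagonal, Complex.re_sum]
  refine Finset.sum_congr rfl fun i _ => ?_
  simp [Complex.normSq_apply]
  ring

lemma qf_one {n : ℕ} (v : Fin n → ℂ) : qf 1 v = ∑ i, Complex.normSq (v i) := by
  have := qf_diag (fun _ => (1:ℝ)) v
  simpa using this

lemma qf_one_pos {n : ℕ} {v : Fin n → ℂ} (hv : v ≠ 0) : 0 < qf 1 v := by
  rw [qf_one]
  obtain ⟨i, hi⟩ := Function.ne_iff.mp hv
  refine Finset.sum_pos' (fun i _ => Complex.normSq_nonneg _) ⟨i, Finset.mem_univ _, ?_⟩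
  exact Complex.normSq_pos.mpr hi

lemma cs {n : ℕ} {M : Matrix (Fin n) (Fin n) ℂ} (hM : M.PosSemidef) (u v : Fin n → ℂ) :
    ((star u ⬝ᵥ (M *ᵥ v)).re) ^ 2 ≤ qf M u * qf M v := by
  have hsym : (star v ⬝ᵥ (M *ᵥ u)).re = (star u ⬝ᵥ (M *ᵥ v)).re := by
    have : star v ⬝ᵥ (M *ᵥ u) = star (star u ⬝ᵥ (M *ᵥ v)) := by
      rw [Matrix.star_dotProduct, Matrix.star_mulVec, hM.1.eq, ← Matrix.dotProduct_mulVec]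
    rw [this]; simp
  have key : ∀ t : ℝ, 0 ≤ qf M v * (t * t) + (2 * (star u ⬝ᵥ (M *ᵥ v)).re) * t + qf M u := by
    intro t
    have h := qf_nonneg hM (u + (t : ℂ) • v)
    have : qf M (u + (t : ℂ) • v) =
        qf M v * (t * t) + (2 * (star u ⬝ᵥ (M *ᵥ v)).re) * t + qf M u := by
      simp only [qf, star_add, star_smul, Matrix.mulVec_add, Matrix.mulVec_smul, add_dotProduct,
        dotProduct_add, smul_dotProduct, dotProduct_smul, smul_eq_mul, Complex.add_re]
      have hs : star (t : ℂ) = (t : ℂ) := Complex.conj_ofReal t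
      simp only [hs, Complex.re_ofReal_mul, Complex.add_re, hsym]
      ring
    rwa [this] at h
  have := discrim_le_zero key
  simp only [discrim] at this
  nlinarith

lemma sixth {n : ℕ} {P : Matrix (Fin n) (Fin n) ℂ} (hP : P.PosSemidef) (s : Fin n → ℂ)
    (h0 : 0 < qf 1 (P *ᵥ s)) :
    (qf 1 (P *ᵥ s)) ^ 3 ≤ (qf P (P *ᵥ s)) ^ 2 * qf 1 s := by
  have h1 := cs hP (P *ᵥ s) s
  have h2 := cs (Matrix.PosSemidef.one (n := Fin n) (R := ℂ)) s (P *ᵥ s)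
  have e1 : (star (P *ᵥ s) ⬝ᵥ (P *ᵥ s)).re = qf 1 (P *ᵥ s) := by simp [qf]
  have e2 : (star s ⬝ᵥ ((1 : Matrix (Fin n) (Fin n) ℂ) *ᵥ (P *ᵥ s))).re = qf P s := by simp [qf]
  rw [e1] at h1
  rw [e2] at h2
  set N := qf 1 (P *ᵥ s)
  set p := qf P (P *ᵥ s)
  set r := qf P s
  set M := qf 1 s
  have hp : 0 ≤ p := qf_nonneg hP _
  have hr : 0 ≤ r := qf_nonneg hP _
  have h3 : N ^ 3 * N ≤ (p ^ 2 * M) * N := by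
    calc N ^ 3 * N = (N ^ 2) ^ 2 := by ring
      _ ≤ (p * r) ^ 2 := by gcongr
      _ = p ^ 2 * r ^ 2 := by ring
      _ ≤ p ^ 2 * (M * N) := by gcongr
      _ = _ := by ring
  exact le_of_mul_le_mul_right h3 h0

lemma cheb1 {n : ℕ} (w a b : Fin n → ℝ) (hw : ∀ i, 0 ≤ w i)
    (hab : ∀ i j, 0 ≤ (a i - a j) * (b i - b j)) :
    (∑ i, a i * w i) * (∑ i, b i * w i) ≤ (∑ i, w i) * (∑ i, a i * b i * w i) := by
  have h : 0 ≤ ∑ i, ∑ j, w i * w j * ((a i - a j) * (b i - b j)) :=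
    Finset.sum_nonneg fun i _ => Finset.sum_nonneg fun j _ =>
      mul_nonneg (mul_nonneg (hw i) (hw j)) (hab i j)
  have e : ∑ i, ∑ j, w i * w j * ((a i - a j) * (b i - b j)) =
      2 * ((∑ i, w i) * (∑ i, a i * b i * w i)) - 2 * ((∑ i, a i * w i) * (∑ i, b i * w i)) := by
    have : ∀ i j, w i * w j * ((a i - a j) * (b i - b j)) =
      (a i * b i * w i) * w j + w i * (a j * b j * w j) - (a i * w i) * (b j * w j)
        - (b i * w i) * (a j * w j) := by intro i j; ring
    simp only [this, Finset.sum_sub_distrib, Finset.sum_add_distrib, ← Finset.mul_sum,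
      ← Finset.sum_mul]
    ring
  linarith

lemma cheb2 {n : ℕ} (w a b : Fin n → ℝ) (hw : ∀ i, 0 ≤ w i) (ha : ∀ i, 0 ≤ a i)
    (hb : ∀ i, 0 ≤ b i)
    (hab : ∀ i j, (a i ≤ a j ∧ b i ≤ b j) ∨ (a j ≤ a i ∧ b j ≤ b i)) (N : ℝ)
    (hN : ∑ i, w i ≤ N) :
    (∑ i, a i * w i) ^ 2 * (∑ i, b i * w i) ≤ N ^ 2 * (∑ i, a i * b i * a i * w i) := by
  have h1 := cheb1 w a b hw (fun i j => by
    rcases hab i j with ⟨h, h'⟩ | ⟨h, h'⟩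
    · exact mul_nonneg_of_nonpos_of_nonpos (by linarith) (by linarith)
    · exact mul_nonneg (by linarith) (by linarith))
  have h2 := cheb1 w a (fun i => a i * b i) hw (fun i j => by
    rcases hab i j with ⟨h, h'⟩ | ⟨h, h'⟩
    · have := mul_le_mul h h' (hb i) (ha j)
      exact mul_nonneg_of_nonpos_of_nonpos (by linarith) (by linarith)
    · have := mul_le_mul h h' (hb j) (ha i)
      exact mul_nonneg (by linarith) (by linarith))
  have e : ∑ i, a i * (a i * b i) * w i = ∑ i, a i * b i * a i * w i :=
    Finset.sum_congr rfl fun i _ => by ring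
  simp only [e] at h2
  have hW : 0 ≤ ∑ i, w i := Finset.sum_nonneg fun i _ => hw i
  have hA : 0 ≤ ∑ i, a i * w i := Finset.sum_nonneg fun i _ => mul_nonneg (ha i) (hw i)
  have hT : 0 ≤ ∑ i, a i * b i * a i * w i := Finset.sum_nonneg fun i _ =>
    mul_nonneg (mul_nonneg (mul_nonneg (ha i) (hb i)) (ha i)) (hw i)
  set W := ∑ i, w i
  calc (∑ i, a i * w i) ^ 2 * (∑ i, b i * w i)
      = (∑ i, a i * w i) * ((∑ i, a i * w i) * (∑ i, b i * w i)) := by ring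
    _ ≤ (∑ i, a i * w i) * (W * (∑ i, a i * b i * w i)) := by gcongr
    _ = W * ((∑ i, a i * w i) * (∑ i, a i * b i * w i)) := by ring
    _ ≤ W * (W * ∑ i, a i * b i * a i * w i) := by gcongr
    _ = W ^ 2 * ∑ i, a i * b i * a i * w i := by ring
    _ ≤ _ := by gcongr

lemma cfc_form {n : ℕ} {C : Matrix (Fin n) (Fin n) ℂ} (hC : C.PosSemidef) :
    ∃ (U : Matrix (Fin n) (Fin n) ℂ) (c : Fin n → ℝ), Uᴴ * U = 1 ∧ U * Uᴴ = 1 ∧ (∀ i, 0 ≤ c i) ∧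
      ∀ f : ℝ → ℝ, cfc f C = U * Matrix.diagonal (fun i => (f (c i) : ℂ)) * Uᴴ := by
  refine ⟨hC.1.eigenvectorUnitary, hC.1.eigenvalues, ?_, ?_, hC.eigenvalues_nonneg, fun f => ?_⟩
  · exact Unitary.coe_star_mul_self hC.1.eigenvectorUnitary
  · exact Unitary.coe_mul_star_self hC.1.eigenvectorUnitary
  · rw [hC.1.cfc_eq f, Matrix.IsHermitian.cfc, Unitary.conjStarAlgAut_apply]
    rfl

lemma spec_form (d : ℕ) : ∃ e : Fin d ≃ Fin (Fintype.card (Fin d)),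
    ∀ X : Matrix (Fin d) (Fin d) ℂ, X.IsHermitian →
      ∃ (U : Matrix (Fin d) (Fin d) ℂ) (x : Fin d → ℝ), Uᴴ * U = 1 ∧ U * Uᴴ = 1 ∧
        (∀ i j, e i ≤ e j → x j ≤ x i) ∧
        X = U * Matrix.diagonal (fun i => (x i : ℂ)) * Uᴴ := by
  refine ⟨(Fintype.equivOfCardEq (Fintype.card_fin _)).symm, fun X hX =>
    ⟨hX.eigenvectorUnitary, hX.eigenvalues, ?_, ?_, ?_, ?_⟩⟩
  · exact Unitary.coe_star_mul_self hX.eigenvectorUnitary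
  · exact Unitary.coe_mul_star_self hX.eigenvectorUnitary
  · intro i j hij
    exact hX.eigenvalues₀_antitone hij
  · conv_lhs => rw [hX.spectral_theorem, Unitary.conjStarAlgAut_apply]
    rfl

/-- Chebyshev inequality for the positive functionals `X ↦ ⟨h, Φ(X) h⟩`. -/
lemma cheb_map {n d : ℕ} (A B : Matrix (Fin n) (Fin n) ℂ)
    (hAB : MonotonePair A B)
    (Φ : Matrix (Fin n) (Fin n) ℂ →ₗ[ℂ] Matrix (Fin d) (Fin d) ℂ)
    (hΦ1 : loewnerLE (Φ 1) 1)
    (hΦpos : ∀ X : Matrix (Fin n) (Fin n) ℂ, X.PosSemidef → (Φ X).PosSemidef) :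
    A.PosSemidef ∧ B.PosSemidef ∧ (A * B * A).PosSemidef ∧
    ∀ h : Fin d → ℂ, (qf (Φ A) h) ^ 2 * qf (Φ B) h ≤ (qf 1 h) ^ 2 * qf (Φ (A * B * A)) h := by
  obtain ⟨C, f, g, hC, hf, hg, hf0, hg0, rfl, rfl⟩ := hAB
  obtain ⟨U, c, hU1, hU2, hc, hcfc⟩ := cfc_form hC
  have hpos : ∀ f : Fin n → ℝ, (∀ i, 0 ≤ f i) →
      (U * Matrix.diagonal (fun i => (f i : ℂ)) * Uᴴ).PosSemidef := by
    intro f hf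
    refine Matrix.PosSemidef.mul_mul_conjTranspose_same ?_ U
    exact Matrix.PosSemidef.diagonal (fun i => by simpa using hf i)
  have hprod : cfc f C * cfc g C * cfc f C =
      U * Matrix.diagonal (fun i => ((f (c i) * g (c i) * f (c i) : ℝ) : ℂ)) * Uᴴ := by
    have hd : Matrix.diagonal (fun i => ((f (c i) * g (c i) * f (c i) : ℝ) : ℂ)) =
      Matrix.diagonal (fun i => ((f (c i) : ℝ) : ℂ)) * Matrix.diagonal (fun i => ((g (c i) : ℝ) : ℂ))
        * Matrix.diagonal (fun i => ((f (c i) : ℝ) : ℂ)) := by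
      simp [Matrix.diagonal_mul_diagonal]
    rw [hd, hcfc f, hcfc g]
    calc _ = U * Matrix.diagonal (fun i => ((f (c i) : ℝ) : ℂ)) * (Uᴴ * U) *
          Matrix.diagonal (fun i => ((g (c i) : ℝ) : ℂ)) * (Uᴴ * U) *
          Matrix.diagonal (fun i => ((f (c i) : ℝ) : ℂ)) * Uᴴ := by simp only [Matrix.mul_assoc]
      _ = _ := by rw [hU1]; simp only [Matrix.mul_assoc, Matrix.one_mul]
  refine ⟨?_, ?_, ?_, ?_⟩
  · rw [hcfc]; exact hpos _ fun i => hf0 _ (hc i)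
  · rw [hcfc]; exact hpos _ fun i => hg0 _ (hc i)
  · rw [hprod]; exact hpos _ fun i => mul_nonneg (mul_nonneg (hf0 _ (hc i)) (hg0 _ (hc i)))
      (hf0 _ (hc i))
  intro h
  let w : Fin n → ℝ := fun i => qf (Φ (U * Matrix.diagonal (Pi.single i 1) * Uᴴ)) h
  have hw : ∀ i, 0 ≤ w i := by
    intro i
    refine qf_nonneg (hΦpos _ ?_) h
    have := hpos (Pi.single i 1) (fun j => by
      by_cases hj : j = i
      · subst hj; simp
      · simp [hj])
    have hsg : (fun j => (((Pi.single i 1 : Fin n → ℝ) j : ℝ) : ℂ)) = Pi.single i (1 : ℂ) := by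
      ext j
      by_cases hj : j = i
      · subst hj; simp
      · simp [hj]
    rwa [hsg] at this
  have hlin : ∀ a : Fin n → ℝ,
      qf (Φ (U * Matrix.diagonal (fun i => (a i : ℂ)) * Uᴴ)) h = ∑ i, a i * w i := by
    intro a
    have hd : Matrix.diagonal (fun i => (a i : ℂ)) =
        ∑ i, (a i : ℂ) • Matrix.diagonal (Pi.single i (1:ℂ)) := by
      ext j k
      simp only [Matrix.sum_apply, Matrix.smul_apply, Matrix.diagonal_apply, smul_eq_mul]
      by_cases hjk : j = k
      · subst hjk; simp [Pi.single_apply]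
      · simp [hjk]
    rw [hd, Matrix.mul_sum, Matrix.sum_mul, map_sum]
    simp only [qf, w, Matrix.sum_mulVec, dotProduct_sum, Complex.re_sum, Matrix.mul_smul,
      Matrix.smul_mul, map_smul, Matrix.smul_mulVec, dotProduct_smul, smul_eq_mul,
      Complex.re_ofReal_mul]
  have hN : ∑ i, w i ≤ qf 1 h := by
    have h1 := hlin (fun _ => 1)
    simp only [Complex.ofReal_one, one_mul, Matrix.diagonal_one, Matrix.mul_one, hU2] at h1
    rw [← h1]
    have := qf_nonneg hΦ1 h
    rw [qf_sub] at this
    linarith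
  rw [hprod, hcfc f, hcfc g, hlin (fun i => f (c i)), hlin (fun i => g (c i)),
    hlin (fun i => f (c i) * g (c i) * f (c i))]
  refine cheb2 w (fun i => f (c i)) (fun i => g (c i)) hw (fun i => hf0 _ (hc i))
    (fun i => hg0 _ (hc i)) (fun i j => ?_) _ hN
  rcases le_total (c i) (c j) with hij | hij
  · exact Or.inl ⟨hf (hc i) (hc j) hij, hg (hc i) (hc j) hij⟩
  · exact Or.inr ⟨hf (hc j) (hc i) hij, hg (hc j) (hc i) hij⟩

lemma exists_vec {d m : ℕ} (e : Fin d ≃ Fin m) (k : Fin d) (T : Matrix (Fin d) (Fin d) ℂ) :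
    ∃ c : Fin d → ℂ, c ≠ 0 ∧ (∀ i, ¬ e i ≤ e k → c i = 0) ∧ (∀ j, e j < e k → (T *ᵥ c) j = 0) := by
  let F : (Fin d → ℂ) →ₗ[ℂ] (Fin d → ℂ) :=
    LinearMap.pi fun i => if e i < e k then (LinearMap.proj i).comp T.mulVecLin
      else if e i = e k then 0 else LinearMap.proj i
  have hk : LinearMap.ker F ≠ ⊥ := by
    intro hbot
    have hinj := LinearMap.ker_eq_bot.mp hbot
    have hsurj := LinearMap.injective_iff_surjective.mp hinj
    obtain ⟨v, hv⟩ := hsurj (Pi.single k 1)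
    have := congrFun hv k
    simp [F] at this
  obtain ⟨c, hc, hc0⟩ := Submodule.exists_mem_ne_zero_of_ne_bot hk
  have hF : ∀ i, F c i = 0 := fun i => congrFun (LinearMap.mem_ker.mp hc) i
  refine ⟨c, hc0, fun i hi => ?_, fun j hj => ?_⟩
  · have := hF i
    have h1 : ¬ e i < e k := fun h => hi h.le
    have h2 : ¬ e i = e k := fun h => hi h.le
    simp only [F, LinearMap.pi_apply, if_neg h1, if_neg h2] at this
    exact this
  · have := hF j
    simp only [F, LinearMap.pi_apply, if_pos hj] at this
    exact this

end ChebAux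

open ChebAux in
theorem chebyshev_subunital_positive_map {n d : ℕ} (A B : Matrix (Fin n) (Fin n) ℂ)
    (hAB : MonotonePair A B)
    (Φ : Matrix (Fin n) (Fin n) ℂ →ₗ[ℂ] Matrix (Fin d) (Fin d) ℂ)
    (hΦ1 : loewnerLE (Φ 1) 1)
    (hΦpos : ∀ X : Matrix (Fin n) (Fin n) ℂ, X.PosSemidef → (Φ X).PosSemidef) :
    ∃ V : Matrix (Fin d) (Fin d) ℂ, V ∈ Matrix.unitaryGroup (Fin d) ℂ ∧
      loewnerLE (Φ A * Φ B * Φ A) (V * Φ (A * B * A) * Vᴴ) := by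
  obtain ⟨hA, hB, hT, hcheb⟩ := cheb_map A B hAB Φ hΦ1 hΦpos
  have hP := hΦpos A hA
  have hQ := hΦpos B hB
  have hY := hΦpos _ hT
  set P := Φ A
  set Q := Φ B
  set Y := Φ (A * B * A)
  have hXeq : P * Q * P = Pᴴ * Q * P := by rw [hP.1.eq]
  have hX : (P * Q * P).PosSemidef := by
    rw [hXeq]; exact hQ.conjTranspose_mul_mul_same P
  obtain ⟨e, he⟩ := spec_form d
  obtain ⟨U, x, hU1, hU2, hx, hXU⟩ := he _ hX.1
  obtain ⟨W, y, hW1, hW2, hy, hYW⟩ := he _ hY.1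
  have qX : ∀ v, qf (P * Q * P) v = ∑ i, x i * Complex.normSq ((Uᴴ *ᵥ v) i) := by
    intro v
    rw [hXU, ← qf_diag, ← qf_conj, Matrix.conjTranspose_conjTranspose]
  have qY : ∀ v, qf Y v = ∑ i, y i * Complex.normSq ((Wᴴ *ᵥ v) i) := by
    intro v
    rw [hYW, ← qf_diag, ← qf_conj, Matrix.conjTranspose_conjTranspose]
  have q1 : ∀ (Z : Matrix (Fin d) (Fin d) ℂ), Z * Zᴴ = 1 → ∀ v,
      qf 1 v = ∑ i, Complex.normSq ((Zᴴ *ᵥ v) i) := by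
    intro Z hZ v
    rw [← qf_one, ← qf_conj, Matrix.conjTranspose_conjTranspose, Matrix.mul_one, hZ]
  have hxy : ∀ k, x k ≤ y k := by
    intro k
    by_contra! hlt
    have hy0 : 0 ≤ y k := by
      have h1 := qf_nonneg hY (W *ᵥ Pi.single k 1)
      rw [qY, Matrix.mulVec_mulVec, hW1, Matrix.one_mulVec] at h1
      simpa [Pi.single_apply, apply_ite] using h1
    have hx0 : 0 < x k := lt_of_le_of_lt hy0 hlt
    obtain ⟨c, hc0, hc1, hc2⟩ := exists_vec e k (Wᴴ * P * U)
    set s := U *ᵥ c with hs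
    have hUs : Uᴴ *ᵥ s = c := by rw [hs, Matrix.mulVec_mulVec, hU1, Matrix.one_mulVec]
    have hs0 : s ≠ 0 := by
      intro h; rw [h, Matrix.mulVec_zero] at hUs; exact hc0 hUs.symm
    have hM := qf_one_pos hs0
    have hq : x k * qf 1 s ≤ qf Q (P *ᵥ s) := by
      rw [← qf_conj Q P, ← hXeq, qX, q1 U hU2, hUs, Finset.mul_sum]
      refine Finset.sum_le_sum fun i _ => ?_
      by_cases hi : e i ≤ e k
      · exact mul_le_mul_of_nonneg_right (hx i k hi) (Complex.normSq_nonneg _)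
      · simp [hc1 i hi]
    have hh0 : P *ᵥ s ≠ 0 := by
      intro h
      have : qf Q (P *ᵥ s) = 0 := by rw [h]; simp [qf]
      nlinarith [mul_pos hx0 hM]
    have hN := qf_one_pos hh0
    have hyy : qf Y (P *ᵥ s) ≤ y k * qf 1 (P *ᵥ s) := by
      rw [qY, q1 W hW2, Finset.mul_sum]
      refine Finset.sum_le_sum fun i _ => ?_
      by_cases hi : e i < e k
      · have h1 := hc2 i hi
        have h2 : Wᴴ *ᵥ (P *ᵥ s) = (Wᴴ * P * U) *ᵥ c := by
          rw [hs, Matrix.mulVec_mulVec, Matrix.mulVec_mulVec, Matrix.mul_assoc]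
        rw [h2, h1]; simp
      · exact mul_le_mul_of_nonneg_right (hy k i (not_lt.mp hi)) (Complex.normSq_nonneg _)
    have h6 := sixth hP s hN
    have hch := hcheb (P *ᵥ s)
    have hfin : x k * (qf 1 (P *ᵥ s)) ^ 3 ≤ y k * (qf 1 (P *ᵥ s)) ^ 3 := by
      calc x k * (qf 1 (P *ᵥ s)) ^ 3 ≤ x k * ((qf P (P *ᵥ s)) ^ 2 * qf 1 s) := by gcongr
        _ = (qf P (P *ᵥ s)) ^ 2 * (x k * qf 1 s) := by ring
        _ ≤ (qf P (P *ᵥ s)) ^ 2 * qf Q (P *ᵥ s) := by gcongr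
        _ ≤ (qf 1 (P *ᵥ s)) ^ 2 * qf Y (P *ᵥ s) := hch
        _ ≤ (qf 1 (P *ᵥ s)) ^ 2 * (y k * qf 1 (P *ᵥ s)) := by gcongr
        _ = _ := by ring
    have := le_of_mul_le_mul_right hfin (by positivity)
    linarith
  refine ⟨U * Wᴴ, ?_, ?_⟩
  · rw [Matrix.mem_unitaryGroup_iff, Matrix.star_eq_conjTranspose, Matrix.conjTranspose_mul,
      Matrix.conjTranspose_conjTranspose]
    calc U * Wᴴ * (W * Uᴴ) = U * (Wᴴ * W) * Uᴴ := by simp only [Matrix.mul_assoc]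
      _ = 1 := by rw [hW1, Matrix.mul_one, hU2]
  · unfold loewnerLE
    have h1 : U * Wᴴ * Y * (U * Wᴴ)ᴴ = U * Matrix.diagonal (fun i => (y i : ℂ)) * Uᴴ := by
      rw [hYW, Matrix.conjTranspose_mul, Matrix.conjTranspose_conjTranspose]
      calc _ = U * (Wᴴ * W) * Matrix.diagonal (fun i => (y i : ℂ)) * (Wᴴ * W) * Uᴴ := by
            simp only [Matrix.mul_assoc]
        _ = _ := by rw [hW1]; simp only [Matrix.mul_one]
    rw [h1, hXU, ← Matrix.sub_mul, ← Matrix.mul_sub, Matrix.diagonal_sub]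
    refine Matrix.PosSemidef.mul_mul_conjTranspose_same ?_ U
    refine Matrix.PosSemidef.diagonal (fun i => ?_)
    have := hxy i
    simp only [Pi.zero_apply, sub_nonneg]
    exact_mod_cast this
end
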